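/- arXiv:2401.12670 — 5 statements merged into one kernel-verified Lean document; each statement's English description precedes it below -/
import Mathlib

section
/- For every positive integer d, every (d²+3d+5)-connected finite simple graph G contains a spanning tree T such that the graph obtained from G by deleting the edges of T is d-connected. -/
/-- A simple graph `G` is `k`-connected if it has at least `k+1` vertices and removing any
set of fewer than `k` vertices leaves a connected induced subgraph. -/
def KConnected {W : Type*} (G : SimpleGraph W) (k : ℕ) : Prop :=
  k + 1 ≤ Nat.card W ∧
    ∀ S : Set W, S.Finite → S.ncard < k → (G.induce (Sᶜ : Set W)).Connected

namespace RST
open Finset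

/-- Beta weights. -/
noncomputable def bw (a b : ℕ) : ℝ := (a.factorial * b.factorial : ℝ) / ((a + b + 1).factorial : ℝ)

lemma bw_nonneg (a b : ℕ) : 0 ≤ bw a b := by unfold bw; positivity

lemma bw_rec (a b : ℕ) : bw (a+1) b + bw a (b+1) = bw a b := by
  unfold bw
  have h1 : a + 1 + b + 1 = (a + b + 1) + 1 := by ring
  have h2 : a + (b + 1) + 1 = (a + b + 1) + 1 := by ring
  rw [h1, h2, Nat.factorial_succ (a+b+1), Nat.factorial_succ a, Nat.factorial_succ b]
  have := Nat.factorial_pos (a+b+1)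
  push_cast
  field_simp
  ring

lemma bw_step (a b : ℕ) : ((a + (b+1) + 1 : ℕ) : ℝ) * bw a (b+1) = (b+1) * bw a b := by
  unfold bw
  have h2 : a + (b + 1) + 1 = (a + b + 1) + 1 := by ring
  rw [h2, Nat.factorial_succ (a+b+1), Nat.factorial_succ b]
  have := Nat.factorial_pos (a+b+1)
  push_cast
  field_simp

lemma bw_zero (a : ℕ) : ((a + 1 : ℕ) : ℝ) * bw a 0 = 1 := by
  unfold bw
  rw [add_zero, Nat.factorial_succ a]
  have := Nat.factorial_pos a
  push_cast
  field_simp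
  simp

lemma bw_choose (D p : ℕ) (h : p ≤ D) : (D.choose p : ℝ) * bw p (D - p) = 1 / (D + 1) := by
  unfold bw
  have h1 : p + (D - p) + 1 = D + 1 := by omega
  rw [h1, Nat.factorial_succ]
  have := Nat.choose_mul_factorial_mul_factorial h
  have h3 : (D.choose p : ℝ) * p.factorial * (D-p).factorial = D.factorial := by exact_mod_cast this
  have := Nat.factorial_pos D
  push_cast
  rw [← h3]
  have h4 : (D.choose p : ℝ) ≠ 0 := by
    have := Nat.choose_pos h
    positivity
  have h5 := Nat.factorial_pos p
  have h6 := Nat.factorial_pos (D - p)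
  field_simp

variable {V : Type*} [DecidableEq V]

lemma marg (h : Finset V → ℝ) (N Y : Finset V) (hNY : N ⊆ Y) :
    ∑ X ∈ Y.powerset, bw #X (#Y - #X) * h (X ∩ N) = ∑ X ∈ N.powerset, bw #X (#N - #X) * h X := by
  obtain ⟨Z, hZ, rfl⟩ : ∃ Z, Disjoint N Z ∧ Y = N ∪ Z := ⟨Y \ N, disjoint_sdiff, by
    rw [union_sdiff_of_subset hNY]⟩
  clear hNY
  induction Z using Finset.induction with
  | empty =>
    simp only [union_empty]
    apply sum_congr rfl
    intro X hX
    rw [inter_eq_left.mpr (mem_powerset.mp hX)]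
  | insert u Z hu ih =>
    rw [disjoint_insert_right] at hZ
    rw [← ih hZ.2, union_insert, sum_powerset_insert (by simp [hZ.1, hu]), ← sum_add_distrib]
    apply sum_congr rfl
    intro X hX
    rw [mem_powerset] at hX
    have huX : u ∉ X := fun hh => by
      have := hX hh
      simp [hZ.1, hu] at this
    rw [insert_inter_of_notMem hZ.1, card_insert_of_notMem huX,
      card_insert_of_notMem (by simp [hZ.1, hu])]
    have hc := card_le_card hX
    have e1 : #(N ∪ Z) + 1 - #X = (#(N ∪ Z) - #X) + 1 := by omega
    have e2 : #(N ∪ Z) + 1 - (#X+1) = (#(N ∪ Z) - #X) := by omega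
    rw [e1, e2, ← bw_rec #X (#(N ∪ Z) - #X)]
    ring

lemma avg_aux (g : Finset V → ℝ) (Y : Finset V) :
    ((#Y + 1 : ℕ) : ℝ) * ∑ X ∈ Y.powerset, bw #X (#Y - #X) * g X =
      ∑ v ∈ Y, ∑ X ∈ (Y.erase v).powerset, bw #X (#(Y.erase v) - #X) * g X + g Y := by
  have h1 : ∑ v ∈ Y, ∑ X ∈ (Y.erase v).powerset, bw #X (#(Y.erase v) - #X) * g X
      = ∑ X ∈ Y.powerset, ∑ v ∈ Y \ X, bw #X (#Y - 1 - #X) * g X := by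
    rw [Finset.sum_comm' (t' := Y.powerset) (s' := fun X => Y \ X)]
    · apply sum_congr rfl
      intro X _
      apply sum_congr rfl
      intro v hv
      rw [card_erase_of_mem (mem_sdiff.mp hv).1]
    · intro v X
      simp only [mem_powerset, mem_sdiff, subset_erase]
      tauto
  rw [h1]
  have h2 : g Y = ∑ X ∈ Y.powerset, if X = Y then g X else 0 := by
    rw [Finset.sum_ite_eq' ]
    simp
  rw [h2, ← sum_add_distrib, mul_sum]
  apply sum_congr rfl
  intro X hX
  rw [mem_powerset] at hX
  rw [sum_const, nsmul_eq_mul, card_sdiff_of_subset hX]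
  have hc := card_le_card hX
  split_ifs with h
  · subst h
    simp only [tsub_self, Nat.cast_zero, zero_mul, zero_add]
    rw [← mul_assoc, bw_zero, one_mul]
  · have : #X < #Y := card_lt_card (hX.ssubset_of_ne h)
    obtain ⟨b, hb⟩ : ∃ b, #Y = #X + (b + 1) := ⟨#Y - #X - 1, by omega⟩
    have e1 : #Y - #X = b + 1 := by omega
    have e2 : #Y - 1 - #X = b := by omega
    rw [e1, e2, hb, ← mul_assoc, bw_step]
    push_cast
    ring

lemma avg (r : Finset V → ℝ) (g : V → Finset V → ℝ) (h0 : 0 ≤ r ∅) (U : Finset V)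
    (h : ∀ X ⊆ U, ∀ v ∈ U, v ∉ X → r X + g v X ≤ r (insert v X)) :
    ∑ v ∈ U, ∑ X ∈ (U.erase v).powerset, bw #X (#(U.erase v) - #X) * g v X ≤ r U := by
  induction hn : #U generalizing U with
  | zero =>
    rw [card_eq_zero] at hn
    subst hn
    simpa using h0
  | succ n ih =>
    have key : ((n + 1 : ℕ) : ℝ) * ∑ v ∈ U, ∑ X ∈ (U.erase v).powerset,
        bw #X (#(U.erase v) - #X) * g v X ≤ ((n + 1 : ℕ) : ℝ) * r U := by
      have e1 : ((n + 1 : ℕ) : ℝ) * ∑ v ∈ U, ∑ X ∈ (U.erase v).powerset,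
          bw #X (#(U.erase v) - #X) * g v X
          = ∑ u ∈ U, (∑ v ∈ U.erase u, ∑ X ∈ ((U.erase u).erase v).powerset,
            bw #X (#((U.erase u).erase v) - #X) * g u X + g u (U.erase u)) := by
        rw [mul_sum]
        apply sum_congr rfl
        intro u hu
        rw [← avg_aux, card_erase_of_mem hu, hn]
        simp
      rw [e1, sum_add_distrib]
      have e2 : ∑ u ∈ U, ∑ v ∈ U.erase u, ∑ X ∈ ((U.erase u).erase v).powerset,
            bw #X (#((U.erase u).erase v) - #X) * g u X
          = ∑ v ∈ U, ∑ u ∈ U.erase v, ∑ X ∈ ((U.erase v).erase u).powerset,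
            bw #X (#((U.erase v).erase u) - #X) * g u X := by
        rw [Finset.sum_comm' (t' := U) (s' := fun v => U.erase v)]
        · apply sum_congr rfl
          intro v _
          apply sum_congr rfl
          intro u _
          rw [erase_right_comm]
        · intro x y
          simp only [mem_erase]
          tauto
      rw [e2, ← sum_add_distrib]
      have e3 : ((n + 1 : ℕ) : ℝ) * r U = ∑ v ∈ U, r U := by
        rw [sum_const, hn, nsmul_eq_mul]
      rw [e3]
      apply sum_le_sum
      intro v hv
      have i1 := ih (U.erase v) (fun X hX w hw hwX => h X (hX.trans (erase_subset _ _)) w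
        (mem_of_mem_erase hw) hwX) (by rw [card_erase_of_mem hv, hn]; simp)
      have i2 := h (U.erase v) (erase_subset _ _) v hv (by simp)
      rw [insert_erase hv] at i2
      linarith
    exact le_of_mul_le_mul_left key (by positivity)

/-- counting non-cliques -/
lemma count_noncliques (C : Finset V → Prop) [DecidablePred C] (p : ℕ) (hp : 1 ≤ p)
    (hglue : ∀ X x, x ∉ X → p ≤ #X → C X → ¬ C (insert x X) →
      ∀ Y ⊆ X, #Y = p - 1 → ¬ C (insert x Y))
    (N : Finset V) (hN : p ≤ #N) (hC : ¬ C N) :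
    (#N - 1).choose (p - 1) ≤ #{X ∈ N.powersetCard p | ¬ C X} := by
  obtain ⟨m, hm⟩ := Nat.exists_eq_add_of_le hN
  induction m generalizing N with
  | zero =>
    have : #N = p := by omega
    have hh : (#N - 1).choose (p-1) = 1 := by rw [this]; simp
    rw [hh, Nat.one_le_iff_ne_zero, ← Nat.pos_iff_ne_zero, card_pos]
    exact ⟨N, by simp [mem_powersetCard, this, hC]⟩
  | succ m ih =>
    by_cases hx : ∃ x ∈ N, C (N.erase x)
    · obtain ⟨x, hxN, hxC⟩ := hx
      have : (#N - 1).choose (p-1) = #((N.erase x).powersetCard (p-1)) := by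
        rw [card_powersetCard, card_erase_of_mem hxN]
      rw [this]
      apply card_le_card_of_injOn (fun Y => insert x Y)
      · intro Y hY
        simp only [mem_coe, mem_powersetCard] at hY
        have hxY : x ∉ Y := fun hh => by simpa using hY.1 hh
        simp only [mem_coe, mem_filter, mem_powersetCard]
        refine ⟨⟨insert_subset hxN (hY.1.trans (erase_subset _ _)), ?_⟩, ?_⟩
        · rw [card_insert_of_notMem hxY]; omega
        · apply hglue (N.erase x) x (by simp) _ hxC _ Y hY.1 hY.2
          · rw [card_erase_of_mem hxN]; omega
          · rwa [insert_erase hxN]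
      · intro Y hY Z hZ hYZ
        simp only [mem_coe, mem_powersetCard] at hY hZ
        have hxY : x ∉ Y := fun hh => by simpa using hY.1 hh
        have hxZ : x ∉ Z := fun hh => by simpa using hZ.1 hh
        have := congrArg (fun S => S.erase x) hYZ
        simpa [erase_insert hxY, erase_insert hxZ] using this
    · push Not at hx
      have h1 : ∀ x ∈ N, (#N - 2).choose (p-1) ≤ #{X ∈ (N.erase x).powersetCard p | ¬ C X} := by
        intro x hxN
        have := ih (N.erase x) (by rw [card_erase_of_mem hxN]; omega) (hx x hxN)
          (by rw [card_erase_of_mem hxN]; omega)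
        rw [card_erase_of_mem hxN] at this
        exact this
      have h2 : ∑ x ∈ N, #{X ∈ (N.erase x).powersetCard p | ¬ C X}
          = (m+1) * #{X ∈ N.powersetCard p | ¬ C X} := by
        simp only [card_eq_sum_ones]
        rw [Finset.sum_comm' (t' := {X ∈ N.powersetCard p | ¬ C X}) (s' := fun X => N \ X)]
        · rw [mul_sum]
          apply sum_congr rfl
          intro X hX
          simp only [mem_filter, mem_powersetCard] at hX
          rw [← card_eq_sum_ones, card_sdiff_of_subset hX.1.1]
          omega
        · intro x X
          simp only [mem_filter, mem_powersetCard, mem_sdiff, subset_erase]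
          tauto
      have h3 := sum_le_sum h1
      rw [h2, sum_const, smul_eq_mul] at h3
      have h4 : (#N - 1) * (#N - 2).choose (p-1) = (#N - 1).choose (p-1) * (m+1) := by
        obtain ⟨q, rfl⟩ : ∃ q, p = q + 1 := ⟨p-1, by omega⟩
        have e1 : #N - 1 = (q + m) + 1 := by omega
        have e2 : #N - 2 = q + m := by omega
        rw [e1, e2]
        have := Nat.add_one_mul_choose_eq (q+m) q
        have h5 := Nat.choose_mul_succ_eq (q+m) q
        have e3 : q + m + 1 - q = m + 1 := by omega
        rw [e3] at h5
        simp only [Nat.add_sub_cancel]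
        rw [← h5, mul_comm]
      have h5 : (#N - 1) * (#N - 2).choose (p-1) ≤ #N * (#N - 2).choose (p-1) :=
        Nat.mul_le_mul_right _ (Nat.sub_le _ _)
      have : (m+1) * (#N - 1).choose (p - 1) ≤ (m+1) * #{X ∈ N.powersetCard p | ¬ C X} := by
        rw [mul_comm, ← h4]; exact h5.trans h3
      exact Nat.le_of_mul_le_mul_left this (by omega)


lemma sum_min (k m : ℕ) : ∑ p ∈ range (k + m), (min k p : ℝ) = k * (k + m) - k * (k+1) / 2 := by
  induction m with
  | zero =>
    have : ∀ p ∈ range (k + 0), (min k p : ℝ) = (p : ℝ) := by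
      intro p hp
      simp only [add_zero, mem_range] at hp
      rw [min_eq_right]
      exact_mod_cast hp.le
    rw [sum_congr rfl this]
    clear this
    simp only [add_zero, Nat.cast_zero]
    induction k with
    | zero => simp
    | succ k ih => rw [sum_range_succ, ih]; push_cast; ring
  | succ m ih =>
    rw [← add_assoc, sum_range_succ, ih, min_eq_left (by push_cast; linarith)]
    push_cast
    ring

lemma sum_id_from (T m : ℕ) : ∑ p ∈ range (T + m), (if T ≤ p then (p : ℝ) else 0) =
    ((T + m) * (T + m - 1) - T * (T - 1)) / 2 := by
  induction m with
  | zero =>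
    simp only [add_zero, Nat.cast_zero, sub_self, zero_div]
    apply sum_eq_zero
    intro p hp
    simp only [mem_range] at hp
    rw [if_neg (by omega)]
  | succ m ih =>
    rw [← add_assoc, sum_range_succ, ih, if_pos (by omega)]
    push_cast
    ring

lemma gain_bound (C : Finset V → Prop) [DecidablePred C] (k : ℕ) (hk : 1 ≤ k)
    (hglue : ∀ X x, x ∉ X → 2 * k + 1 ≤ #X → C X → ¬ C (insert x X) →
      ∀ Y ⊆ X, 2 * k ≤ #Y → ¬ C (insert x Y))
    (N : Finset V) (hN : k * (k + 1) + 3 ≤ #N) (hC : ¬ C N) :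
    (k : ℝ) < ∑ X ∈ N.powerset, bw #X (#N - #X) *
      ((min k #X : ℝ) + if 2 * k + 1 ≤ #X ∧ ¬ C X then 1 else 0) := by
  set D := #N with hD
  have hDpos : (0:ℝ) < D := by
    have : 0 < D := by omega
    exact_mod_cast this
  have hTD : 2 * k + 1 ≤ D := by nlinarith
  rw [sum_powerset]
  have step : ∀ p ∈ range (D + 1), ((min k p : ℝ) + (if 2 * k + 1 ≤ p then (p : ℝ) else 0) / D) / (D + 1)
      ≤ ∑ X ∈ N.powersetCard p, bw #X (D - #X) *
      ((min k #X : ℝ) + if 2 * k + 1 ≤ #X ∧ ¬ C X then 1 else 0) := by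
    intro p hp
    rw [mem_range] at hp
    have hpD : p ≤ D := by omega
    have e1 : ∑ X ∈ N.powersetCard p, bw #X (D - #X) *
      ((min k #X : ℝ) + if 2 * k + 1 ≤ #X ∧ ¬ C X then 1 else 0)
      = ∑ X ∈ N.powersetCard p, (bw p (D - p) * (min k p : ℝ) + bw p (D - p) *
          if 2 * k + 1 ≤ p ∧ ¬ C X then 1 else 0) := by
      apply sum_congr rfl
      intro X hX
      rw [(mem_powersetCard.mp hX).2]
      ring
    rw [e1, sum_add_distrib, sum_const, card_powersetCard, nsmul_eq_mul, ← mul_assoc, ← hD,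
      bw_choose D p hpD, ← mul_sum, add_div]
    have t1 : (1 : ℝ) / (D + 1) * (min k p : ℝ) = (min k p : ℝ) / (D + 1) := by ring
    rw [t1]
    refine add_le_add le_rfl ?_
    split_ifs with hTp
    · have cn := count_noncliques C p (by omega) (fun X x hx hX hCX hCi Y hY hYc =>
        hglue X x hx (by omega) hCX hCi Y hY (by omega)) N hpD hC
      have e2 : ∑ X ∈ N.powersetCard p, (if 2 * k + 1 ≤ p ∧ ¬ C X then (1:ℝ) else 0)
          = #{X ∈ N.powersetCard p | ¬ C X} := by
        simp only [hTp, true_and]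
        rw [sum_boole]
      rw [e2]
      have cn' : (((D - 1).choose (p-1) : ℕ) : ℝ) ≤ #{X ∈ N.powersetCard p | ¬ C X} := by
        exact_mod_cast cn
      have e3 : (D : ℝ) * ((D - 1).choose (p-1) : ℕ) = (D.choose p : ℕ) * p := by
        obtain ⟨D', hD'⟩ : ∃ D', D = D' + 1 := ⟨D - 1, by omega⟩
        obtain ⟨q, hq⟩ : ∃ q, p = q + 1 := ⟨p - 1, by omega⟩
        rw [hD', hq]
        have := Nat.add_one_mul_choose_eq D' q
        simp only [Nat.add_sub_cancel]
        exact_mod_cast this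
      calc (p:ℝ) / D / (D + 1) = p / D * (1 / (D+1)) := by ring
        _ = p / D * ((D.choose p : ℝ) * bw p (D - p)) := by rw [bw_choose D p hpD]
        _ = bw p (D - p) * ((D.choose p : ℕ) * p / D) := by ring
        _ = bw p (D - p) * ((D - 1).choose (p-1) : ℕ) := by rw [← e3]; field_simp
        _ ≤ _ := mul_le_mul_of_nonneg_left cn' (bw_nonneg _ _)
    · simp only [zero_div]
      apply mul_nonneg (bw_nonneg _ _)
      apply sum_nonneg
      intro X _
      split_ifs <;> norm_num
  refine lt_of_lt_of_le ?_ (sum_le_sum step)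
  rw [← sum_div, sum_add_distrib, ← sum_div]
  obtain ⟨m, hm⟩ : ∃ m, D + 1 = k + m := ⟨D + 1 - k, by omega⟩
  obtain ⟨m', hm'⟩ : ∃ m', D + 1 = 2 * k + 1 + m' := ⟨D + 1 - (2 * k + 1), by omega⟩
  have s1 : ∑ p ∈ range (D+1), (min k p : ℝ) = k * (D+1) - k * (k+1) / 2 := by
    rw [hm, sum_min]
    have : (D:ℝ) + 1 = k + m := by exact_mod_cast hm
    rw [this]
  have s2 : ∑ p ∈ range (D+1), (if 2 * k + 1 ≤ p then (p : ℝ) else 0) =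
      ((D+1) * D - (2 * k + 1) * (2 * k)) / 2 := by
    rw [hm', sum_id_from]
    have : (D:ℝ) + 1 = 2 * k + 1 + m' := by exact_mod_cast hm'
    have : (D:ℝ) = 2 * k + m' := by linarith
    rw [this]
    push_cast
    ring
  rw [s1, s2, lt_div_iff₀ (by positivity)]
  have hN' : (k:ℝ) * (k + 1) + 3 ≤ D := by exact_mod_cast hN
  have hk' : (1:ℝ) ≤ k := by exact_mod_cast hk
  have : (k:ℝ) * (k+1) / 2 < ((D+1) * D - (2 * k + 1) * (2 * k)) / 2 / D := by
    rw [lt_div_iff₀ hDpos]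
    nlinarith
  linarith

end RST

namespace RST
open Module

lemma gram_iff {κ C : Type*} [Fintype κ] [Fintype C] [DecidableEq κ] (A : Matrix κ C ℝ) :
    LinearIndependent ℝ A.row ↔ (A * A.transpose).det ≠ 0 := by
  rw [← isUnit_iff_ne_zero, ← Matrix.isUnit_iff_isUnit_det, ← Matrix.linearIndependent_rows_iff_isUnit,
    ← Matrix.vecMul_injective_iff, ← Matrix.vecMul_injective_iff]
  have h := fun c => Matrix.vecMul_self_mul_conjTranspose_eq_zero A c
  simp only [Matrix.conjTranspose_eq_transpose_of_trivial] at h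
  constructor
  · intro hi x y hxy
    have : Matrix.vecMul (x - y) (A * A.transpose) = 0 := by
      simp only at hxy
      rw [Matrix.sub_vecMul, hxy, sub_self]
    rw [h, Matrix.sub_vecMul, sub_eq_zero] at this
    exact hi this
  · intro hi x y hxy
    have : Matrix.vecMul (x - y) A = 0 := by
      simp only at hxy
      rw [Matrix.sub_vecMul, hxy, sub_self]
    rw [← h, Matrix.sub_vecMul, sub_eq_zero] at this
    exact hi this

lemma exists_generic_poly {ι E C : Type*} [Finite ι] [Finite E] [Fintype C]
    (P : E → C → MvPolynomial ι ℝ) :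
    ∃ θ : ι → ℝ, ∀ (F : Set E) (θ' : ι → ℝ),
      finrank ℝ (Submodule.span ℝ ((fun e c => MvPolynomial.eval θ' (P e c)) '' F)) ≤
      finrank ℝ (Submodule.span ℝ ((fun e c => MvPolynomial.eval θ (P e c)) '' F)) := by
  classical
  set f : (ι → ℝ) → E → (C → ℝ) := fun θ e c => MvPolynomial.eval θ (P e c) with hf
  have key : ∀ F : Set E, ∃ Q : MvPolynomial ι ℝ, Q ≠ 0 ∧ ∀ θ, MvPolynomial.eval θ Q ≠ 0 →
      ∀ θ', finrank ℝ (Submodule.span ℝ (f θ' '' F)) ≤ finrank ℝ (Submodule.span ℝ (f θ '' F)) := by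
    intro F
    obtain ⟨θ₀, h₀⟩ : ∃ θ₀, ∀ θ', finrank ℝ (Submodule.span ℝ (f θ' '' F)) ≤
        finrank ℝ (Submodule.span ℝ (f θ₀ '' F)) := by
      have hfin : (Set.range fun θ => finrank ℝ (Submodule.span ℝ (f θ '' F))).Finite := by
        apply (Set.finite_Iic (finrank ℝ (C → ℝ))).subset
        rintro _ ⟨θ, rfl⟩
        exact Submodule.finrank_le _
      obtain ⟨m, ⟨θ₀, rfl⟩, hm⟩ := hfin.exists_maximal (Set.range_nonempty _)
      refine ⟨θ₀, fun θ' => ?_⟩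
      by_contra hlt
      push Not at hlt
      have := hm ⟨θ', rfl⟩ hlt.le
      exact absurd hlt (not_lt.mpr this)
    obtain ⟨κ, a, ha, hspan, hli⟩ := exists_linearIndependent' ℝ (fun e : F => f θ₀ e)
    have : Finite κ := Finite.of_injective a ha
    have := Fintype.ofFinite κ
    let A : Matrix κ C (MvPolynomial ι ℝ) := fun i c => P (a i) c
    have hev : ∀ θ, MvPolynomial.eval θ (A * A.transpose).det =
        ((A.map (MvPolynomial.eval θ)) * (A.map (MvPolynomial.eval θ)).transpose).det := by
      intro θ
      rw [RingHom.map_det, RingHom.mapMatrix_apply, Matrix.map_mul, Matrix.transpose_map]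
    have hrow : ∀ θ, (A.map (MvPolynomial.eval θ)).row = fun i => f θ (a i) := by
      intro θ; rfl
    refine ⟨(A * A.transpose).det, ?_, ?_⟩
    · intro h0
      have := (gram_iff (A.map (MvPolynomial.eval θ₀))).mp (by rw [hrow]; exact hli)
      rw [← hev, h0, map_zero] at this
      exact this rfl
    · intro θ hθ θ'
      refine (h₀ θ').trans ?_
      rw [hev, ← gram_iff, hrow] at hθ
      have e1 : finrank ℝ (Submodule.span ℝ (f θ₀ '' F)) = Fintype.card κ := by
        rw [Set.image_eq_range, ← hspan, finrank_span_eq_card hli]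
      rw [e1, ← finrank_span_eq_card hθ]
      apply Submodule.finrank_mono
      apply Submodule.span_mono
      rintro _ ⟨i, rfl⟩
      exact ⟨a i, (a i).2, rfl⟩
  choose Q hQ0 hQ using key
  have := Fintype.ofFinite (Set E)
  have hprod : ∏ F, Q F ≠ 0 := Finset.prod_ne_zero_iff.mpr fun F _ => hQ0 F
  obtain ⟨θ, hθ⟩ : ∃ θ, MvPolynomial.eval θ (∏ F, Q F) ≠ 0 := by
    by_contra hcon
    push Not at hcon
    exact hprod (MvPolynomial.funext fun x => by rw [hcon, map_zero])
  rw [map_prod, Finset.prod_ne_zero_iff] at hθ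
  exact ⟨θ, fun F θ' => hQ F θ (hθ F (Finset.mem_univ _)) θ'⟩

lemma exists_generic_map {ι E W : Type*} [Finite ι] [Finite E] [AddCommGroup W] [Module ℝ W]
    [FiniteDimensional ℝ W] (f : (ι → ℝ) → E → W)
    (hf : ∀ e (φ : W →ₗ[ℝ] ℝ), ∃ P : MvPolynomial ι ℝ, ∀ θ, φ (f θ e) = MvPolynomial.eval θ P) :
    ∃ θ : ι → ℝ, ∀ (F : Set E) (θ' : ι → ℝ),
      finrank ℝ (Submodule.span ℝ (f θ' '' F)) ≤ finrank ℝ (Submodule.span ℝ (f θ '' F)) := by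
  let b := finBasis ℝ W
  have h1 : ∀ e c, ∃ P : MvPolynomial ι ℝ, ∀ θ, b.coord c (f θ e) = MvPolynomial.eval θ P :=
    fun e c => hf e (b.coord c)
  choose P hP using h1
  obtain ⟨θ, hθ⟩ := exists_generic_poly P
  have h2 : ∀ θ (F : Set E), finrank ℝ (Submodule.span ℝ ((fun e c => MvPolynomial.eval θ (P e c)) '' F))
      = finrank ℝ (Submodule.span ℝ (f θ '' F)) := by
    intro θ F
    rw [← LinearEquiv.finrank_map_eq b.equivFun, Submodule.map_span, ← Set.image_comp]
    have hh : (fun e c => MvPolynomial.eval θ (P e c)) = b.equivFun ∘ f θ := by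
      funext e c
      rw [← hP]
      simp
    rw [hh]
    rfl
  refine ⟨θ, fun F θ' => ?_⟩
  rw [← h2, ← h2]
  exact hθ F θ'

end RST

namespace RST
open Module Finset

/-- vectors attached to vertices -/
abbrev KK (d : ℕ) := (Fin d → ℝ) × ℝ

section defs
variable {V : Type*} [DecidableEq V] {d : ℕ}

/-- force `w` at `x`, `-w` at `y` -/
def bar (x y : V) (w : KK d) : V → KK d := Pi.single x w - Pi.single y w

lemma bar_symm (x y : V) (w : KK d) : bar y x w = bar x y (-w) := by
  unfold bar
  rw [Pi.single_neg, Pi.single_neg]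
  abel

lemma bar_self (x : V) (w : KK d) : bar x x w = 0 := by simp [bar]

lemma bar_smul (x y : V) (c : ℝ) (w : KK d) : bar x y (c • w) = c • bar x y w := by
  unfold bar
  rw [Pi.single_smul, Pi.single_smul, smul_sub]

lemma bar_add (x y : V) (w w' : KK d) : bar x y (w + w') = bar x y w + bar x y w' := by
  unfold bar
  rw [Pi.single_add, Pi.single_add]
  abel

lemma bar_trans (x y z : V) (w : KK d) : bar x z w = bar x y w + bar y z w := by
  unfold bar; abel

/-- rigidity row -/
def Rrow (p : V → Fin d → ℝ) : Sym2 V → V → KK d :=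
  Sym2.lift ⟨fun x y => bar x y (p x - p y, 0), fun x y => by
    change bar x y _ = bar y x _
    rw [bar_symm]; congr 1; ext <;> simp⟩

/-- graphic row -/
def Irow (d : ℕ) (ζ : V → ℝ) : Sym2 V → V → KK d :=
  Sym2.lift ⟨fun x y => bar x y (0, ζ x - ζ y), fun x y => by
    change bar x y _ = bar y x _
    rw [bar_symm]; congr 1; ext <;> simp⟩

@[simp] lemma Rrow_mk (p : V → Fin d → ℝ) (x y : V) : Rrow p s(x, y) = bar x y (p x - p y, 0) := rfl
@[simp] lemma Irow_mk (ζ : V → ℝ) (x y : V) : Irow d ζ s(x, y) = bar x y (0, ζ x - ζ y) := rfl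

/-- combined row -/
def row (ζ : V → ℝ) (p : V → Fin d → ℝ) (s t : Sym2 V → ℝ) (e : Sym2 V) : V → KK d :=
  s e • Rrow p e + t e • Irow d ζ e

/-- genericity -/
structure Gen (ζ : V → ℝ) (p : V → Fin d → ℝ) (s t : Sym2 V → ℝ) : Prop where
  inj : Function.Injective ζ
  gen : ∀ (F : Set (Sym2 V)) (p' : V → Fin d → ℝ) (s' t' : Sym2 V → ℝ),
    finrank ℝ (Submodule.span ℝ (row ζ p' s' t' '' F)) ≤ finrank ℝ (Submodule.span ℝ (row ζ p s t '' F))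
  pos : ∀ A : Finset V, #A ≤ d + 1 → LinearIndependent ℝ (fun a : A => ((p a, 1) : KK d))

end defs

lemma finrank_KK (d : ℕ) : finrank ℝ (KK d) = d + 1 := by simp

lemma std_indep (d : ℕ) : LinearIndependent ℝ
    (fun o : Option (Fin d) => ((o.elim 0 (fun i => Pi.single i 1), 1) : KK d)) := by
  rw [Fintype.linearIndependent_iff]
  intro g hg
  have h1 := congrArg Prod.fst hg
  have h2 := congrArg Prod.snd hg
  rw [Fintype.sum_option] at h1 h2
  have h3 : ∀ i, g (some i) = 0 := by
    intro i
    have := congrFun h1 i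
    simpa [Prod.fst_sum, Finset.sum_apply, Pi.single_apply] using this
  intro o
  cases o with
  | some i => exact h3 i
  | none => simpa [Prod.snd_sum, h3] using h2

lemma exists_gen (V : Type*) [Fintype V] [DecidableEq V] (d : ℕ) :
    ∃ (ζ : V → ℝ) (p : V → Fin d → ℝ) (s t : Sym2 V → ℝ), Gen ζ p s t := by
  obtain ⟨ζ, hζ⟩ : ∃ ζ : V → ℝ, Function.Injective ζ :=
    ⟨fun v => ((Fintype.equivFin V v : ℕ) : ℝ), fun x y h => by simpa [Fin.val_inj] using h⟩
  let ι := (V × Fin d) ⊕ (Sym2 V × Bool)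
  let pp : (ι → ℝ) → V → Fin d → ℝ := fun θ v i => θ (Sum.inl (v, i))
  let ss : (ι → ℝ) → Sym2 V → ℝ := fun θ e => θ (Sum.inr (e, true))
  let tt : (ι → ℝ) → Sym2 V → ℝ := fun θ e => θ (Sum.inr (e, false))
  have hθ : ∀ (p : V → Fin d → ℝ) (s t : Sym2 V → ℝ), ∃ θ, pp θ = p ∧ ss θ = s ∧ tt θ = t := by
    intro p s t
    exact ⟨Sum.elim (fun x => p x.1 x.2) (fun y => if y.2 then s y.1 else t y.1), rfl, by
      funext e; simp [ss], by funext e; simp [tt]⟩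
  let f : (ι → ℝ) → (Sym2 V ⊕ V) → (V → KK d) × KK d := fun θ =>
    Sum.elim (fun e => (row ζ (pp θ) (ss θ) (tt θ) e, 0)) (fun v => (0, (pp θ v, 1)))
  have hdec : ∀ u : Fin d → ℝ, u = ∑ i, u i • (Pi.single i (1:ℝ) : Fin d → ℝ) := by
    intro u
    exact pi_eq_sum_univ' u
  obtain ⟨θ, hg⟩ := exists_generic_map f (by
    intro e φ
    rcases e with e | v
    · induction e using Sym2.ind with
      | _ x y =>
      refine ⟨MvPolynomial.X (Sum.inr (s(x,y), true)) * (∑ i, (MvPolynomial.X (Sum.inl (x,i)) -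
        MvPolynomial.X (Sum.inl (y, i))) * MvPolynomial.C (φ (bar x y (Pi.single i 1, 0), 0)))
        + MvPolynomial.X (Sum.inr (s(x,y), false)) * MvPolynomial.C (φ (bar x y (0, ζ x - ζ y), 0)),
        fun θ => ?_⟩
      have e1 : bar x y ((pp θ x - pp θ y, 0) : KK d) =
          ∑ i, (pp θ x i - pp θ y i) • bar x y ((Pi.single i 1, 0) : KK d) := by
        have : ((pp θ x - pp θ y, 0) : KK d) = ∑ i, (pp θ x i - pp θ y i) • ((Pi.single i 1, 0) : KK d) := by
          conv_lhs => rw [hdec (pp θ x - pp θ y)]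
          ext <;> simp [Prod.fst_sum, Prod.snd_sum]
        rw [this]
        have hs : ∀ (S : Finset (Fin d)) (g : Fin d → KK d),
            bar x y (∑ i ∈ S, g i) = ∑ i ∈ S, bar x y (g i) := by
          intro S g
          induction S using Finset.induction with
          | empty => simp [bar]
          | insert a S ha ih => rw [sum_insert ha, sum_insert ha, bar_add, ih]
        rw [hs]
        simp only [bar_smul]
      have e2 : f θ (Sum.inl s(x,y)) = ss θ s(x,y) • ∑ i, (pp θ x i - pp θ y i) •
          ((bar x y ((Pi.single i 1, 0) : KK d), 0) : (V → KK d) × KK d)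
          + tt θ s(x,y) • ((bar x y ((0, ζ x - ζ y) : KK d), 0) : (V → KK d) × KK d) := by
        simp only [f, Sum.elim_inl, row, Rrow_mk, Irow_mk, e1]
        ext1 <;> simp [Prod.fst_sum, Prod.snd_sum]
      rw [e2]
      simp only [map_add, map_smul, map_sum, map_mul, map_sub, MvPolynomial.eval_X, MvPolynomial.eval_C,
        smul_eq_mul]
      rfl
    · refine ⟨∑ i, MvPolynomial.X (Sum.inl (v,i)) * MvPolynomial.C (φ (0, (Pi.single i 1, 0)))
        + MvPolynomial.C (φ (0, (0, 1))), fun θ => ?_⟩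
      have e2 : f θ (Sum.inr v) = ∑ i, pp θ v i • ((0, (Pi.single i 1, 0)) : (V → KK d) × KK d)
          + (0, (0, 1)) := by
        simp only [f, Sum.elim_inr]
        conv_lhs => rw [hdec (pp θ v)]
        ext1
        · simp [Prod.fst_sum]
        · ext1 <;> simp [Prod.fst_sum, Prod.snd_sum]
      rw [e2]
      simp only [map_add, map_smul, map_sum, map_mul, MvPolynomial.eval_X, MvPolynomial.eval_C,
        smul_eq_mul]
      rfl)
  refine ⟨ζ, pp θ, ss θ, tt θ, hζ, ?_, ?_⟩
  · intro F p' s' t'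
    obtain ⟨θ', rfl, rfl, rfl⟩ := hθ p' s' t'
    have h1 : ∀ θ, finrank ℝ (Submodule.span ℝ (f θ '' (Sum.inl '' F))) =
        finrank ℝ (Submodule.span ℝ (row ζ (pp θ) (ss θ) (tt θ) '' F)) := by
      intro θ
      rw [(Submodule.equivMapOfInjective (LinearMap.inl ℝ (V → KK d) (KK d)) LinearMap.inl_injective
        (Submodule.span ℝ (row ζ (pp θ) (ss θ) (tt θ) '' F))).finrank_eq, Submodule.map_span,
        ← Set.image_comp, ← Set.image_comp]
      rfl
    rw [← h1, ← h1]
    exact hg _ _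
  · intro A hA
    have hc : Fintype.card A ≤ Fintype.card (Option (Fin d)) := by simpa using hA
    obtain ⟨c⟩ := Function.Embedding.nonempty_of_card_le hc
    obtain ⟨θ', hp', -, -⟩ := hθ (fun v => if h : v ∈ A then (c ⟨v, h⟩).elim 0 (fun i => Pi.single i 1) else 0) 0 0
    have hli : LinearIndependent ℝ (fun a : A => ((pp θ' a, 1) : KK d)) := by
      have := (std_indep d).comp c c.injective
      convert this using 2 with a
      rw [hp']
      simp
    have h1 : ∀ θ, finrank ℝ (Submodule.span ℝ (f θ '' (Sum.inr '' (A : Set V)))) =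
        finrank ℝ (Submodule.span ℝ (Set.range fun a : A => ((pp θ a, 1) : KK d))) := by
      intro θ
      rw [(Submodule.equivMapOfInjective (LinearMap.inr ℝ (V → KK d) (KK d)) LinearMap.inr_injective
        (Submodule.span ℝ (Set.range fun a : A => ((pp θ a, 1) : KK d)))).finrank_eq, Submodule.map_span,
        ← Set.image_comp, ← Set.range_comp, Set.image_eq_range]
      rfl
    have h2 := hg (Sum.inr '' (A : Set V)) θ'
    rw [h1, h1, finrank_span_eq_card hli] at h2
    rw [linearIndependent_iff_card_eq_finrank_span]
    exact le_antisymm h2 (finrank_range_le_card _)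

end RST

namespace RST
open Module Finset
set_option linter.unusedSectionVars false
set_option linter.unusedSimpArgs false

section
variable {V : Type*} [DecidableEq V] {d : ℕ}

lemma hom_sub (p : V → Fin d → ℝ) (i j : V) :
    ((p i - p j, 0) : KK d) = (p i, 1) - (p j, 1) := by ext <;> simp

lemma stress {p : V → Fin d → ℝ}
    (hpos : ∀ A : Finset V, #A ≤ d + 1 → LinearIndependent ℝ (fun a : A => ((p a, 1) : KK d)))
    (C : Finset V) (hC : #C = d + 2) {x y : V} (hx : x ∈ C) (hy : y ∈ C) (hxy : x ≠ y)
    (T : Submodule ℝ (V → KK d))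
    (hT : ∀ i ∈ C, ∀ j ∈ C, s(i,j) ≠ s(x,y) → Rrow p s(i,j) ∈ T) : Rrow p s(x,y) ∈ T := by
  have hdep : ¬ LinearIndepOn ℝ (fun a : V => ((p a, 1) : KK d)) (C : Set V) := by
    intro h
    have h' : LinearIndependent ℝ (fun a : C => ((p a, 1) : KK d)) := h
    have := h'.fintype_card_le_finrank
    rw [finrank_KK, Fintype.card_coe] at this
    omega
  rw [linearIndepOn_finset_iff] at hdep
  push Not at hdep
  obtain ⟨l, hl, z, hz, hlz⟩ := hdep
  have hne : ∀ u ∈ C, l u ≠ 0 := by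
    intro u hu h0
    have h1 : LinearIndepOn ℝ (fun a : V => ((p a, 1) : KK d)) (C.erase u : Finset V) :=
      hpos (C.erase u) (by rw [card_erase_of_mem hu]; omega)
    rw [linearIndepOn_finset_iff] at h1
    have h2 := h1 l (by
      rw [← add_sum_erase C _ hu, h0, zero_smul, zero_add] at hl
      exact hl)
    have : z ≠ u := by rintro rfl; exact hlz h0
    exact hlz (h2 z (mem_erase.mpr ⟨this, hz⟩))
  have hl2 : ∑ i ∈ C, l i = 0 := by
    have := congrArg Prod.snd hl
    simpa [Prod.snd_sum] using this
  have hin : ∀ i, ∑ j ∈ C, l j • ((p i - p j, 0) : KK d) = 0 := by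
    intro i
    simp only [hom_sub, smul_sub, sum_sub_distrib]
    rw [hl, ← sum_smul, hl2]
    simp
  have hs : ∀ (S : Finset V) (i : V) (g : V → KK d),
      (Pi.single i (∑ j ∈ S, g j) : V → KK d) = ∑ j ∈ S, Pi.single i (g j) := by
    intro S i g
    exact map_sum (AddMonoidHom.single (fun _ : V => KK d) i) g S
  have key : ∑ i ∈ C, ∑ j ∈ C, (l i * l j) • bar i j ((p i - p j, 0) : KK d) = 0 := by
    simp only [bar, smul_sub, sum_sub_distrib]
    have a1 : ∑ i ∈ C, ∑ j ∈ C, (l i * l j) • (Pi.single i ((p i - p j, 0) : KK d) : V → KK d) = 0 := by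
      apply sum_eq_zero
      intro i _
      simp only [mul_smul, ← smul_sum]
      simp only [← Pi.single_smul]
      rw [← hs, hin]
      simp
    have a2 : ∑ i ∈ C, ∑ j ∈ C, (l i * l j) • (Pi.single j ((p i - p j, 0) : KK d) : V → KK d) = 0 := by
      rw [sum_comm]
      apply sum_eq_zero
      intro j _
      have : ∀ i ∈ C, (l i * l j) • (Pi.single j ((p i - p j, 0) : KK d) : V → KK d)
          = (- l j) • Pi.single j (l i • ((p j - p i, 0) : KK d)) := by
        intro i _
        rw [← Pi.single_smul, ← Pi.single_smul]
        congr 1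
        ext <;> simp
        ring
      rw [sum_congr rfl this, ← smul_sum, ← hs, hin]
      simp
    rw [a1, a2, sub_zero]
  rw [← sum_product'] at key
  have hsub : ({(x,y), (y,x)} : Finset (V × V)) ⊆ C ×ˢ C := by
    intro q hq
    simp only [mem_insert, mem_singleton] at hq
    rcases hq with rfl | rfl <;> simp [hx, hy]
  rw [← sum_sdiff hsub, sum_pair (by simp [hxy])] at key
  have hm : ∑ q ∈ (C ×ˢ C) \ {(x,y), (y,x)}, (l q.1 * l q.2) • bar q.1 q.2 ((p q.1 - p q.2, 0) : KK d) ∈ T := by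
    apply Submodule.sum_mem
    rintro ⟨i, j⟩ hq
    simp only [mem_sdiff, mem_product, mem_insert, mem_singleton, not_or, Prod.mk.injEq] at hq
    apply Submodule.smul_mem
    apply hT i hq.1.1 j hq.1.2
    intro h
    rw [Sym2.eq_iff] at h
    tauto
  have e1 : bar y x ((p y - p x, 0) : KK d) = Rrow p s(x,y) := by
    rw [Sym2.eq_swap]; rfl
  have e2 : bar x y ((p x - p y, 0) : KK d) = Rrow p s(x,y) := rfl
  rw [e1, e2, ← add_smul] at key
  have h3 : (l x * l y + l y * l x) • Rrow p s(x,y) ∈ T := by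
    rw [← neg_eq_of_add_eq_zero_right key]
    exact T.neg_mem hm
  have h4 : l x * l y + l y * l x ≠ 0 := by
    have : l x * l y + l y * l x = 2 * (l x * l y) := by ring
    rw [this]
    exact mul_ne_zero two_ne_zero (mul_ne_zero (hne x hx) (hne y hy))
  exact (T.smul_mem_iff h4).mp h3

lemma diff_indep {p : V → Fin d → ℝ}
    (hpos : ∀ A : Finset V, #A ≤ d + 1 → LinearIndependent ℝ (fun a : A => ((p a, 1) : KK d)))
    (v : V) (Y : Finset V) (hv : v ∉ Y) (hY : #Y ≤ d) :
    LinearIndependent ℝ (fun y : Y => p v - p y) := by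
  change LinearIndepOn ℝ (fun y : V => p v - p y) (Y : Set V)
  rw [linearIndepOn_finset_iff]
  intro l hl
  have h1 : LinearIndepOn ℝ (fun a : V => ((p a, 1) : KK d)) (insert v Y : Finset V) :=
    hpos (insert v Y) (by rw [card_insert_of_notMem hv]; omega)
  rw [linearIndepOn_finset_iff] at h1
  have hne : ∀ y ∈ Y, y ≠ v := by rintro y hy rfl; exact hv hy
  have h2 := h1 (Function.update l v (-∑ y ∈ Y, l y)) (by
    rw [sum_insert hv]
    have : ∀ y ∈ Y, Function.update l v (-∑ y ∈ Y, l y) y • ((p y, 1) : KK d)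
        = l y • ((p v, 1) : KK d) - l y • ((p v - p y, 0) : KK d) := by
      intro y hy
      rw [Function.update_of_ne (hne y hy)]
      ext <;> simp
      ring
    rw [sum_congr rfl this, Function.update_self, sum_sub_distrib, ← sum_smul]
    have h3 : ∑ y ∈ Y, l y • ((p v - p y, 0) : KK d) = 0 := by
      ext1
      · simpa [Prod.fst_sum] using hl
      · simp [Prod.snd_sum]
    rw [h3]
    simp)
  intro y hy
  have := h2 y (mem_insert_of_mem hy)
  rwa [Function.update_of_ne (hne y hy)] at this

lemma onto_of {p : V → Fin d → ℝ}
    (hpos : ∀ A : Finset V, #A ≤ d + 1 → LinearIndependent ℝ (fun a : A => ((p a, 1) : KK d)))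
    (v : V) (Y : Finset V) (hv : v ∉ Y) (hY : #Y = d) (T : Submodule ℝ (KK d))
    (h : ∀ y ∈ Y, ((p v - p y, 0) : KK d) ∈ T) (h1 : ((0, 1) : KK d) ∈ T) : T = ⊤ := by
  have hli := diff_indep hpos v Y hv hY.le
  have hsp := hli.span_eq_top_of_card_eq_finrank' (by simp [hY])
  have hle : Submodule.span ℝ (Set.range fun y : Y => p v - p y) ≤ T.comap (LinearMap.inl ℝ (Fin d → ℝ) ℝ) := by
    rw [Submodule.span_le]
    rintro _ ⟨y, rfl⟩
    exact h y y.2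
  rw [hsp] at hle
  rw [eq_top_iff]
  rintro ⟨u, r⟩ -
  have h2 : ((u, 0) : KK d) ∈ T := hle (Submodule.mem_top (x := u))
  have h3 := T.add_mem h2 (T.smul_mem r h1)
  simpa using h3

end

section
variable {V : Type*} [Fintype V] [DecidableEq V] {d : ℕ}

lemma dim_lemma (v : V) (T0 T : Submodule ℝ (V → KK d)) (hle : T0 ≤ T) (h0 : ∀ f ∈ T0, f v = 0) :
    finrank ℝ T0 + finrank ℝ (T.map (LinearMap.proj (R := ℝ) (φ := fun _ : V => KK d) v)) ≤ finrank ℝ T := by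
  set g := (LinearMap.proj (R := ℝ) (φ := fun _ : V => KK d) v).domRestrict T with hg
  have h1 := LinearMap.finrank_range_add_finrank_ker g
  have h2 : LinearMap.range g = T.map (LinearMap.proj (R := ℝ) (φ := fun _ : V => KK d) v) := by
    rw [hg, LinearMap.range_domRestrict]
  rw [h2] at h1
  have h3 : finrank ℝ T0 ≤ finrank ℝ (LinearMap.ker g) := by
    rw [← (Submodule.comapSubtypeEquivOfLe hle).finrank_eq]
    apply Submodule.finrank_mono
    intro f hf
    rw [LinearMap.mem_ker]
    exact h0 _ hf
  omega

lemma bar_apply_ne {x y v : V} (hx : v ≠ x) (hy : v ≠ y) (w : KK d) : bar x y w v = 0 := by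
  simp [bar, Pi.single_apply, hx, hy]

lemma bar_apply_left {v x : V} (hx : v ≠ x) (w : KK d) : bar v x w v = w := by
  simp [bar, Pi.single_apply, hx]

lemma row_apply_notMem (ζ : V → ℝ) (p : V → Fin d → ℝ) (s t : Sym2 V → ℝ) (e : Sym2 V) (v : V)
    (h : v ∉ e) : row ζ p s t e v = 0 := by
  induction e using Sym2.ind with
  | _ x y =>
  rw [Sym2.mem_iff, not_or] at h
  simp [row, bar_apply_ne h.1 h.2]

/-- star edges -/
def star (v : V) (X : Finset V) : Set (Sym2 V) := (fun x => s(v, x)) '' (X : Set V)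

end
end RST

namespace RST
open Module Finset
section
variable {V : Type*} [Fintype V] [DecidableEq V] {d : ℕ}

lemma row_congr (ζ : V → ℝ) {p p' : V → Fin d → ℝ} {s t s' t' : Sym2 V → ℝ} (v : V)
    (hp' : ∀ u, u ≠ v → p' u = p u) (e : Sym2 V) (hv : v ∉ e) (hs : s' e = s e) (ht : t' e = t e) :
    row ζ p' s' t' e = row ζ p s t e := by
  induction e using Sym2.ind with
  | _ x y =>
  rw [Sym2.mem_iff, not_or] at hv
  simp [row, hs, ht, hp' x (Ne.symm hv.1), hp' y (Ne.symm hv.2)]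

lemma bar_unit_mem_iff {ζ : V → ℝ} (hζ : Function.Injective ζ) {x y : V} (hxy : x ≠ y)
    (T : Submodule ℝ (V → KK d)) :
    bar x y ((0, ζ x - ζ y) : KK d) ∈ T ↔ bar x y ((0, 1) : KK d) ∈ T := by
  have h1 : ((0, ζ x - ζ y) : KK d) = (ζ x - ζ y) • (0, 1) := by ext <;> simp
  have h2 : ζ x - ζ y ≠ 0 := sub_ne_zero.mpr (fun h => hxy (hζ h))
  rw [h1, bar_smul, T.smul_mem_iff h2]

lemma ext_bound {ζ : V → ℝ} {p : V → Fin d → ℝ} {s t : Sym2 V → ℝ} (hg : Gen ζ p s t)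
    (v : V) (F : Set (Sym2 V)) (hF : ∀ e ∈ F, v ∉ e) (X J : Finset V) (hvX : v ∉ X) (hJ : J ⊆ X)
    (p' : V → Fin d → ℝ) (hp' : ∀ u, u ≠ v → p' u = p u) (m : ℕ)
    (h : ∀ T : Submodule ℝ (V → KK d), Submodule.span ℝ (row ζ p s t '' F) ≤ T →
      (∀ x ∈ X, x ∉ J → bar v x ((p' v - p x, 0) : KK d) ∈ T) →
      (∀ x ∈ X, x ∈ J → bar v x ((0, 1) : KK d) ∈ T) → m ≤ finrank ℝ T) :
    m ≤ finrank ℝ (Submodule.span ℝ (row ζ p s t '' (F ∪ star v X))) := by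
  classical
  let s' : Sym2 V → ℝ := fun e => if v ∈ e then (if ∃ x ∈ J, x ∈ e then 0 else 1) else s e
  let t' : Sym2 V → ℝ := fun e => if v ∈ e then (if ∃ x ∈ J, x ∈ e then 1 else 0) else t e
  refine le_trans ?_ (hg.gen _ p' s' t')
  have hvJ : v ∉ J := fun hh => hvX (hJ hh)
  have hne : ∀ x ∈ X, x ≠ v := by rintro x hx rfl; exact hvX hx
  apply h
  · rw [Submodule.span_le]
    rintro _ ⟨e, he, rfl⟩
    have hve := hF e he
    rw [← row_congr ζ (s' := s') (t' := t') v hp' e hve (by simp [s', hve]) (by simp [t', hve])]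
    exact Submodule.subset_span ⟨e, Or.inl he, rfl⟩
  · intro x hx hxJ
    have hno : ¬ ∃ y ∈ J, y ∈ s(v,x) := by
      rintro ⟨y, hy, hyx⟩
      rw [Sym2.mem_iff] at hyx
      rcases hyx with rfl | rfl
      · exact hvJ hy
      · exact hxJ hy
    have : row ζ p' s' t' s(v,x) = bar v x ((p' v - p x, 0) : KK d) := by
      simp only [row, Rrow_mk, Irow_mk, hp' x (hne x hx), s', t', if_neg hno, Sym2.mem_mk_left, if_true]
      simp
    rw [← this]
    exact Submodule.subset_span ⟨_, Or.inr ⟨x, hx, rfl⟩, rfl⟩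
  · intro x hx hxJ
    have hno : ∃ y ∈ J, y ∈ s(v,x) := ⟨x, hxJ, by simp⟩
    have : row ζ p' s' t' s(v,x) = bar v x ((0, ζ v - ζ x) : KK d) := by
      simp only [row, Rrow_mk, Irow_mk, s', t', if_pos hno, Sym2.mem_mk_left, if_true]
      simp
    rw [← bar_unit_mem_iff hg.inj (hne x hx).symm, ← this]
    exact Submodule.subset_span ⟨_, Or.inr ⟨x, hx, rfl⟩, rfl⟩

lemma span_vanish (ζ : V → ℝ) (p : V → Fin d → ℝ) (s t : Sym2 V → ℝ) (v : V) (F : Set (Sym2 V))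
    (hF : ∀ e ∈ F, v ∉ e) : ∀ f ∈ Submodule.span ℝ (row ζ p s t '' F), f v = 0 := by
  intro f hf
  have : Submodule.span ℝ (row ζ p s t '' F) ≤
      LinearMap.ker (LinearMap.proj (R := ℝ) (φ := fun _ : V => KK d) v) := by
    rw [Submodule.span_le]
    rintro _ ⟨e, he, rfl⟩
    exact row_apply_notMem ζ p s t e v (hF e he)
  exact this hf

lemma map_mem {v x : V} (hvx : v ≠ x) {w : KK d} {T : Submodule ℝ (V → KK d)} (h : bar v x w ∈ T) :
    w ∈ T.map (LinearMap.proj (R := ℝ) (φ := fun _ : V => KK d) v) :=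
  ⟨_, h, bar_apply_left hvx w⟩

lemma zero_ext {ζ : V → ℝ} {p : V → Fin d → ℝ} {s t : Sym2 V → ℝ} (hg : Gen ζ p s t)
    (v : V) (F : Set (Sym2 V)) (hF : ∀ e ∈ F, v ∉ e) (X : Finset V) (hvX : v ∉ X) (hX : #X ≤ d + 1) :
    finrank ℝ (Submodule.span ℝ (row ζ p s t '' F)) + #X ≤
      finrank ℝ (Submodule.span ℝ (row ζ p s t '' (F ∪ star v X))) := by
  have hne : ∀ x ∈ X, v ≠ x := by rintro x hx rfl; exact hvX hx
  rcases Nat.lt_or_ge d #X with hlt | hge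
  · have hX1 : #X = d + 1 := by omega
    obtain ⟨x0, hx0⟩ : X.Nonempty := card_pos.mp (by omega)
    apply ext_bound hg v F hF X {x0} hvX (by simpa using hx0) p (fun _ _ => rfl)
    intro T hT hR hI
    refine le_trans ?_ (dim_lemma v _ T hT (span_vanish ζ p s t v F hF))
    rw [onto_of hg.pos v (X.erase x0) (fun hh => hvX (mem_of_mem_erase hh))
      (by rw [card_erase_of_mem hx0, hX1]; rfl) (T.map _), finrank_top, finrank_KK, hX1]
    · intro y hy
      rw [mem_erase] at hy
      exact map_mem (hne y hy.2) (hR y hy.2 (by simpa using hy.1))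
    · exact map_mem (hne x0 hx0) (hI x0 hx0 (by simp))
  · apply ext_bound hg v F hF X ∅ hvX (by simp) p (fun _ _ => rfl)
    intro T hT hR _
    refine le_trans ?_ (dim_lemma v _ T hT (span_vanish ζ p s t v F hF))
    gcongr
    have hli := diff_indep hg.pos v X hvX hge
    have hli2 : LinearIndependent ℝ (fun y : X => ((p v - p y, 0) : KK d)) :=
      hli.map' (LinearMap.inl ℝ (Fin d → ℝ) ℝ) (LinearMap.ker_eq_bot.mpr LinearMap.inl_injective)
    rw [← Fintype.card_coe, ← finrank_span_eq_card hli2]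
    apply Submodule.finrank_mono
    rw [Submodule.span_le]
    rintro _ ⟨y, rfl⟩
    exact map_mem (hne y y.2) (hR y y.2 (by simp))

lemma finrank_sup_singleton (Z : Submodule ℝ (V → KK d)) (f : V → KK d) (hf : f ∉ Z) :
    finrank ℝ Z + 1 ≤ finrank ℝ (Z ⊔ Submodule.span ℝ {f} : Submodule ℝ (V → KK d)) := by
  apply Submodule.finrank_lt_finrank_of_lt
  apply lt_of_le_of_ne le_sup_left
  intro h
  apply hf
  rw [h]
  exact Submodule.mem_sup_right (Submodule.mem_span_singleton_self f)

lemma one_ext {ζ : V → ℝ} {p : V → Fin d → ℝ} {s t : Sym2 V → ℝ} (hd : 0 < d) (hg : Gen ζ p s t)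
    (v : V) (F : Set (Sym2 V)) (hF : ∀ e ∈ F, v ∉ e) (X : Finset V) (hvX : v ∉ X) (hX : #X = d + 2)
    (x y : V) (hx : x ∈ X) (hy : y ∈ X) (hxy : x ≠ y)
    (hZ : row ζ p s t s(x,y) ∉ Submodule.span ℝ (row ζ p s t '' F)) :
    finrank ℝ (Submodule.span ℝ (row ζ p s t '' F)) + 1 + (d + 1) ≤
      finrank ℝ (Submodule.span ℝ (row ζ p s t '' (F ∪ star v X))) := by
  have hne : ∀ x ∈ X, v ≠ x := by rintro x hx rfl; exact hvX hx
  set Z := Submodule.span ℝ (row ζ p s t '' F) with hZdef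
  have hcase : Rrow p s(x,y) ∉ Z ∨ Irow d ζ s(x,y) ∉ Z := by
    by_contra hcon
    push Not at hcon
    exact hZ (Z.add_mem (Z.smul_mem _ hcon.1) (Z.smul_mem _ hcon.2))
  have hvan : ∀ w : KK d, ∀ f ∈ Z ⊔ Submodule.span ℝ {bar x y w}, f v = 0 := by
    intro w f hf
    have : Z ⊔ Submodule.span ℝ {bar x y w} ≤
        LinearMap.ker (LinearMap.proj (R := ℝ) (φ := fun _ : V => KK d) v) := by
      apply sup_le
      · exact fun f hf => span_vanish ζ p s t v F hF f hf
      · rw [Submodule.span_singleton_le_iff_mem]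
        exact bar_apply_ne (hne x hx) (hne y hy) w
    exact this hf
  have hXc : #((X.erase x).erase y) = d := by
    rw [card_erase_of_mem (mem_erase.mpr ⟨hxy.symm, hy⟩), card_erase_of_mem hx, hX]; rfl
  rcases hcase with hR0 | hI0
  · -- rigidity type
    obtain ⟨x0, hx0⟩ : ((X.erase x).erase y).Nonempty := card_pos.mp (by omega)
    have hx0' := hx0
    simp only [mem_erase] at hx0
    apply ext_bound hg v F hF X {x0} hvX (by simpa using hx0.2.2)
      (Function.update p v ((1/2 : ℝ) • (p x + p y))) (fun u hu => Function.update_of_ne hu _ _)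
    intro T hT hR hI
    rw [Function.update_self] at hR
    have rx := hR x hx (by simpa using hx0.2.1.symm)
    have ry := hR y hy (by simpa using hx0.1.symm)
    have ex : (((1/2 : ℝ) • (p x + p y) - p x, 0) : KK d) = (-1/2 : ℝ) • (p x - p y, 0) := by
      ext <;> simp
      ring
    have ey : (((1/2 : ℝ) • (p x + p y) - p y, 0) : KK d) = (1/2 : ℝ) • (p x - p y, 0) := by
      ext <;> simp
      ring
    rw [ex, bar_smul, T.smul_mem_iff (by norm_num)] at rx
    rw [ey, bar_smul, T.smul_mem_iff (by norm_num)] at ry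
    have rxy : bar x y ((p x - p y, 0) : KK d) ∈ T := by
      have : bar x y ((p x - p y, 0) : KK d) = bar v y (p x - p y, 0) - bar v x (p x - p y, 0) := by
        simp only [bar]; abel
      rw [this]
      exact T.sub_mem ry rx
    have hT' : Z ⊔ Submodule.span ℝ {bar x y ((p x - p y, 0) : KK d)} ≤ T :=
      sup_le hT ((Submodule.span_singleton_le_iff_mem _ _).mpr rxy)
    refine le_trans ?_ (dim_lemma v _ T hT' (hvan _))
    have h1 := finrank_sup_singleton Z (bar x y ((p x - p y, 0) : KK d)) hR0
    refine add_le_add h1 ?_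
    have mx := map_mem (hne x hx) rx
    rw [onto_of hg.pos x ((X.erase x).erase x0) (by simp)
      (by rw [card_erase_of_mem (mem_erase.mpr ⟨hx0.2.1, hx0.2.2⟩), card_erase_of_mem hx, hX]; rfl)
      (T.map _), finrank_top, finrank_KK]
    · intro a ha
      simp only [mem_erase] at ha
      have ma := map_mem (hne a ha.2.2) (hR a ha.2.2 (by simpa using ha.1))
      have : ((p x - p a, 0) : KK d) = ((1/2 : ℝ) • (p x + p y) - p a, 0) + (1/2 : ℝ) • (p x - p y, 0) := by
        ext <;> simp
        ring
      rw [this]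
      exact Submodule.add_mem _ ma (Submodule.smul_mem _ _ mx)
    · exact map_mem (hne x0 hx0.2.2) (hI x0 hx0.2.2 (by simp))
  · apply ext_bound hg v F hF X {x, y} hvX (by intro z; simp; rintro (rfl | rfl) <;> assumption) p (fun _ _ => rfl)
    intro T hT hR hI
    have ix := hI x hx (by simp)
    have iy := hI y hy (by simp)
    have ixy : bar x y ((0, ζ x - ζ y) : KK d) ∈ T := by
      rw [bar_unit_mem_iff hg.inj hxy]
      have : bar x y ((0, 1) : KK d) = bar v y (0, 1) - bar v x (0, 1) := by
        simp only [bar]; abel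
      rw [this]
      exact T.sub_mem iy ix
    have hT' : Z ⊔ Submodule.span ℝ {bar x y ((0, ζ x - ζ y) : KK d)} ≤ T :=
      sup_le hT ((Submodule.span_singleton_le_iff_mem _ _).mpr ixy)
    refine le_trans ?_ (dim_lemma v _ T hT' (hvan _))
    have h1 := finrank_sup_singleton Z (bar x y ((0, ζ x - ζ y) : KK d)) hI0
    refine add_le_add h1 ?_
    rw [onto_of hg.pos v ((X.erase x).erase y) (fun hh => hvX (mem_of_mem_erase (mem_of_mem_erase hh))) hXc
      (T.map _), finrank_top, finrank_KK]
    · intro a ha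
      simp only [mem_erase] at ha
      exact map_mem (hne a ha.2.2) (hR a ha.2.2 (by simp [ha.1, ha.2.1]))
    · exact map_mem (hne x hx) ix

/-- all pairs inside `A` -/
def KA (A : Finset V) : Set (Sym2 V) := {e | ∀ x ∈ e, x ∈ A}

@[simp] lemma mem_KA {A : Finset V} {x y : V} : s(x,y) ∈ KA A ↔ x ∈ A ∧ y ∈ A := by
  simp [KA]

/-- span of all pure rows -/
def RI (ζ : V → ℝ) (p : V → Fin d → ℝ) (A : Finset V) : Submodule ℝ (V → KK d) :=
  Submodule.span ℝ (Rrow p '' KA A) ⊔ Submodule.span ℝ (Irow d ζ '' KA A)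

lemma row_le_RI (ζ : V → ℝ) (p : V → Fin d → ℝ) (s t : Sym2 V → ℝ) (A : Finset V) :
    Submodule.span ℝ (row ζ p s t '' KA A) ≤ RI ζ p A := by
  rw [Submodule.span_le]
  rintro _ ⟨e, he, rfl⟩
  exact Submodule.add_mem _
    (Submodule.smul_mem _ _ (Submodule.mem_sup_left (Submodule.subset_span ⟨e, he, rfl⟩)))
    (Submodule.smul_mem _ _ (Submodule.mem_sup_right (Submodule.subset_span ⟨e, he, rfl⟩)))

end
end RST

namespace RST
open Module Finset
section
variable {V : Type*} [Fintype V] [DecidableEq V] {d : ℕ}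

lemma full_RI {ζ : V → ℝ} {p : V → Fin d → ℝ} {s t : Sym2 V → ℝ} (hg : Gen ζ p s t)
    (A : Finset V) (hA : 2 * d + 2 ≤ #A) :
    Submodule.span ℝ (row ζ p s t '' KA A) = RI ζ p A := by
  classical
  obtain ⟨a, ha⟩ : A.Nonempty := card_pos.mp (by omega)
  obtain ⟨b, hb⟩ : (A.erase a).Nonempty := card_pos.mp (by rw [card_erase_of_mem ha]; omega)
  have hba : b ≠ a := (mem_erase.mp hb).1
  have hbA : b ∈ A := (mem_erase.mp hb).2
  obtain ⟨A1, hA1, hA1c⟩ := exists_subset_card_eq (s := (A.erase a).erase b) (n := d)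
    (by rw [card_erase_of_mem hb, card_erase_of_mem ha]; omega)
  set A2 := ((A.erase a).erase b) \ A1 with hA2
  have hA2c : d ≤ #A2 := by
    rw [hA2, card_sdiff_of_subset hA1, card_erase_of_mem hb, card_erase_of_mem ha]; omega
  obtain ⟨A3, hA3, hA3c⟩ := exists_subset_card_eq hA2c
  have h1 : ∀ x ∈ A1, x ∈ A ∧ x ≠ a ∧ x ≠ b ∧ x ∉ A2 := by
    intro x hx
    have := hA1 hx
    simp only [mem_erase] at this
    exact ⟨this.2.2, this.2.1, this.1, by simp [hA2, hx]⟩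
  have h2 : ∀ x ∈ A2, x ∈ A ∧ x ≠ a ∧ x ≠ b ∧ x ∉ A1 := by
    intro x hx
    simp only [hA2, mem_sdiff, mem_erase] at hx
    tauto
  have h12 : ∀ x ∈ A, x ≠ a → x ≠ b → x ∈ A1 ∨ x ∈ A2 := by
    intro x hx h h'
    simp only [hA2, mem_sdiff, mem_erase]
    tauto
  set D : Set (Sym2 V) := insert s(a,b) (star a A1 ∪ star b A2) with hD
  have memD : ∀ x y, s(x,y) ∈ D ↔ ((x = a ∧ y = b) ∨ (x = b ∧ y = a)) ∨
      ((x = a ∧ y ∈ A1) ∨ (y = a ∧ x ∈ A1)) ∨ ((x = b ∧ y ∈ A2) ∨ (y = b ∧ x ∈ A2)) := by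
    intro x y
    simp only [hD, star, Set.mem_insert_iff, Set.mem_union, Set.mem_image, Sym2.eq_iff, mem_coe]
    grind
  set s' : Sym2 V → ℝ := fun e => if e ∈ D then 0 else 1 with hs'
  set t' : Sym2 V → ℝ := fun e => if e ∈ D then 1 else 0 with ht'
  set T := Submodule.span ℝ (row ζ p s' t' '' KA A) with hT
  have hI : ∀ x ∈ A, ∀ y ∈ A, s(x,y) ∈ D → Irow d ζ s(x,y) ∈ T := by
    intro x hx y hy h
    refine Submodule.subset_span ⟨s(x,y), by simp [hx, hy], ?_⟩
    simp [row, hs', ht', h]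
  have hR : ∀ x ∈ A, ∀ y ∈ A, s(x,y) ∉ D → Rrow p s(x,y) ∈ T := by
    intro x hx y hy h
    refine Submodule.subset_span ⟨s(x,y), by simp [hx, hy], ?_⟩
    simp [row, hs', ht', h]
  have e1 : ∀ x ∈ A1, Rrow p s(a,x) ∈ T := by
    intro x hx
    refine stress hg.pos (insert a (insert x A3)) ?_ (x := a) (y := x) (by simp) (by simp) (h1 x hx).2.1.symm T ?_
    · rw [card_insert_of_notMem, card_insert_of_notMem, hA3c]
      · exact fun h => (h1 x hx).2.2.2 (hA3 h)
      · simp only [mem_insert, not_or]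
        exact ⟨(h1 x hx).2.1.symm, fun h => (h2 a (hA3 h)).2.1 rfl⟩
    · intro i hi j hj hij
      simp only [mem_insert] at hi hj
      rw [Ne, Sym2.eq_iff] at hij
      apply hR
      · rcases hi with rfl | rfl | h
        exacts [ha, (h1 _ hx).1, (h2 _ (hA3 h)).1]
      · rcases hj with rfl | rfl | h
        exacts [ha, (h1 _ hx).1, (h2 _ (hA3 h)).1]
      · rw [memD]
        have := h1 x hx
        grind
  have e2 : ∀ x ∈ A2, Rrow p s(b,x) ∈ T := by
    intro x hx
    refine stress hg.pos (insert b (insert x A1)) ?_ (x := b) (y := x) (by simp) (by simp) (h2 x hx).2.2.1.symm T ?_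
    · rw [card_insert_of_notMem, card_insert_of_notMem, hA1c]
      · exact fun h => (h2 x hx).2.2.2 h
      · simp only [mem_insert, not_or]
        exact ⟨(h2 x hx).2.2.1.symm, fun h => (h1 b h).2.2.1 rfl⟩
    · intro i hi j hj hij
      simp only [mem_insert] at hi hj
      rw [Ne, Sym2.eq_iff] at hij
      apply hR
      · rcases hi with rfl | rfl | h
        exacts [hbA, (h2 _ hx).1, (h1 _ h).1]
      · rcases hj with rfl | rfl | h
        exacts [hbA, (h2 _ hx).1, (h1 _ h).1]
      · rw [memD]
        have := h2 x hx
        grind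
  have e3 : Rrow p s(a,b) ∈ T := by
    refine stress hg.pos (insert a (insert b A3)) ?_ (x := a) (y := b) (by simp) (by simp) hba.symm T ?_
    · rw [card_insert_of_notMem, card_insert_of_notMem, hA3c]
      · exact fun h => (h2 b (hA3 h)).2.2.1 rfl
      · simp only [mem_insert, not_or]
        exact ⟨hba.symm, fun h => (h2 a (hA3 h)).2.1 rfl⟩
    · intro i hi j hj hij
      simp only [mem_insert] at hi hj
      rw [Ne, Sym2.eq_iff] at hij
      by_cases hD' : s(i,j) ∈ D
      · have hD'' := hD'
        rw [memD] at hD'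
        have hb2 : (i = b ∧ j ∈ A2) ∨ (j = b ∧ i ∈ A2) := by grind
        rcases hb2 with ⟨rfl, h⟩ | ⟨rfl, h⟩
        · exact e2 _ h
        · rw [Sym2.eq_swap]; exact e2 _ h
      · apply hR _ _ _ _ hD'
        · rcases hi with rfl | rfl | h
          exacts [ha, hbA, (h2 _ (hA3 h)).1]
        · rcases hj with rfl | rfl | h
          exacts [ha, hbA, (h2 _ (hA3 h)).1]
  have hR' : ∀ x ∈ A, ∀ y ∈ A, Rrow p s(x,y) ∈ T := by
    intro x hx y hy
    by_cases h : s(x,y) ∈ D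
    · rw [memD] at h
      rcases h with (⟨rfl, rfl⟩ | ⟨rfl, rfl⟩) | (⟨rfl, h⟩ | ⟨rfl, h⟩) | (⟨rfl, h⟩ | ⟨rfl, h⟩)
      · exact e3
      · rw [Sym2.eq_swap]; exact e3
      · exact e1 _ h
      · rw [Sym2.eq_swap]; exact e1 _ h
      · exact e2 _ h
      · rw [Sym2.eq_swap]; exact e2 _ h
    · exact hR x hx y hy h
  have hu : ∀ x ∈ A, ∀ y ∈ A, x ≠ y → s(x,y) ∈ D → bar x y ((0,1) : KK d) ∈ T := by
    intro x hx y hy hxy h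
    rw [← bar_unit_mem_iff hg.inj hxy, ← Irow_mk]
    exact hI x hx y hy h
  have hab : bar a b ((0,1) : KK d) ∈ T := hu a ha b hbA hba.symm ((memD _ _).mpr (by simp))
  have hz : ∀ z ∈ A, bar a z ((0,1) : KK d) ∈ T := by
    intro z hz
    by_cases hza : z = a
    · rw [hza, bar_self]; exact T.zero_mem
    by_cases hzb : z = b
    · rw [hzb]; exact hab
    rcases h12 z hz hza hzb with h | h
    · exact hu a ha z hz (Ne.symm hza) ((memD _ _).mpr (by simp [h]))
    · rw [bar_trans a b z]
      exact T.add_mem hab (hu b hbA z hz (Ne.symm hzb) ((memD _ _).mpr (by simp [h])))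
  have hI' : ∀ x ∈ A, ∀ y ∈ A, Irow d ζ s(x,y) ∈ T := by
    intro x hx y hy
    by_cases hxy : x = y
    · rw [hxy, Irow_mk, bar_self]; exact T.zero_mem
    rw [Irow_mk, bar_unit_mem_iff hg.inj hxy]
    have : bar x y ((0,1) : KK d) = bar a y (0,1) - bar a x (0,1) := by simp only [bar]; abel
    rw [this]
    exact T.sub_mem (hz y hy) (hz x hx)
  have hle : RI ζ p A ≤ T := by
    apply sup_le <;> rw [Submodule.span_le] <;> rintro _ ⟨e, he, rfl⟩ <;>
      induction e using Sym2.ind with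
      | _ x y => 
        rw [mem_KA] at he
        first | exact hR' x he.1 y he.2 | exact hI' x he.1 y he.2
  exact Submodule.eq_of_le_of_finrank_le (row_le_RI ζ p s t A)
    ((Submodule.finrank_mono hle).trans (hg.gen (KA A) p s' t'))

lemma glue_lin {ζ : V → ℝ} {p : V → Fin d → ℝ} {s t : Sym2 V → ℝ} (hg : Gen ζ p s t)
    (A : Finset V) (hA : 2 * d + 2 ≤ #A) (b : V) (hb : b ∉ A) (X : Finset V) (hX : X ⊆ A)
    (hXc : #X = d + 1) (y : V) (hy : y ∈ A) :
    row ζ p s t s(b,y) ∈ Submodule.span ℝ (row ζ p s t '' (KA A ∪ star b X)) := by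
  classical
  have hbX : b ∉ X := fun h => hb (hX h)
  obtain ⟨x0, hx0⟩ : X.Nonempty := card_pos.mp (by omega)
  have hbx0 : b ≠ x0 := fun h => hbX (h ▸ hx0)
  set Y := X.erase x0 with hY
  have hYc : #Y = d := by rw [hY, card_erase_of_mem hx0, hXc]; rfl
  set T := Submodule.span ℝ (row ζ p s t '' (KA A ∪ star b X)) with hT
  set Q := Submodule.span ℝ (((Y.image (fun a => Rrow p s(b,a)) ∪ {bar b x0 ((0,1) : KK d)} : Finset (V → KK d))) : Set (V → KK d)) with hQ
  set S := RI ζ p A ⊔ Q with hS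
  have hfT : finrank ℝ (RI ζ p A) + (d + 1) ≤ finrank ℝ T := by
    rw [← full_RI hg A hA, ← hXc]
    refine zero_ext hg b (KA A) ?_ X hbX hXc.le
    intro e he hbe
    exact hb (he b hbe)
  have hfS : finrank ℝ S ≤ finrank ℝ (RI ζ p A) + (d + 1) := by
    refine (Submodule.finrank_add_le_finrank_add_finrank _ _).trans ?_
    gcongr
    refine (finrank_span_finset_le_card _).trans ((card_union_le _ _).trans ?_)
    rw [card_singleton]
    have := card_image_le (s := Y) (f := fun a => Rrow p s(b,a))
    omega
  have hRA : ∀ i ∈ A, ∀ j ∈ A, Rrow p s(i,j) ∈ S := fun i hi j hj =>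
    Submodule.mem_sup_left (Submodule.mem_sup_left (Submodule.subset_span ⟨s(i,j), by simp [hi, hj], rfl⟩))
  have hIA : ∀ i ∈ A, ∀ j ∈ A, Irow d ζ s(i,j) ∈ S := fun i hi j hj =>
    Submodule.mem_sup_left (Submodule.mem_sup_right (Submodule.subset_span ⟨s(i,j), by simp [hi, hj], rfl⟩))
  have hRY : ∀ a ∈ Y, Rrow p s(b,a) ∈ S := fun a ha => 
    Submodule.mem_sup_right (Submodule.subset_span (by 
      rw [coe_union]; exact Or.inl (mem_coe.mpr (mem_image_of_mem _ ha))))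
  have hux : bar b x0 ((0,1) : KK d) ∈ S := 
    Submodule.mem_sup_right (Submodule.subset_span (by simp))
  have hRb : ∀ a ∈ A, Rrow p s(b,a) ∈ S := by
    intro a ha
    by_cases haY : a ∈ Y
    · exact hRY a haY
    have hba : b ≠ a := fun h => hb (h ▸ ha)
    refine stress hg.pos (insert b (insert a Y)) ?_ (x := b) (y := a) (by simp) (by simp) hba S ?_
    · rw [card_insert_of_notMem, card_insert_of_notMem haY, hYc]
      simp only [mem_insert, not_or]
      exact ⟨hba, fun h => hbX (mem_of_mem_erase h)⟩
    · have hm : ∀ i ∈ insert a Y, i ∈ A := by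
        intro i hi
        rcases mem_insert.mp hi with rfl | h
        exacts [ha, hX (mem_of_mem_erase h)]
      intro i hi j hj hij
      rcases mem_insert.mp hi with rfl | hi2
      · rcases mem_insert.mp hj with rfl | hj2
        · rw [Rrow_mk, bar_self]; exact S.zero_mem
        · rcases mem_insert.mp hj2 with rfl | hj3
          · exact absurd rfl hij
          · exact hRY _ hj3
      · rcases mem_insert.mp hj with rfl | hj2
        · rw [Sym2.eq_swap] at hij ⊢
          rcases mem_insert.mp hi2 with rfl | hi3
          · exact absurd rfl hij
          · exact hRY _ hi3
        · exact hRA i (hm i hi2) j (hm j hj2)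
  have hIb : ∀ a ∈ A, Irow d ζ s(b,a) ∈ S := by
    intro a ha
    have hba : b ≠ a := fun h => hb (h ▸ ha)
    rw [Irow_mk, bar_unit_mem_iff hg.inj hba, bar_trans b x0 a]
    refine S.add_mem hux ?_
    by_cases h : x0 = a
    · rw [h, bar_self]; exact S.zero_mem
    · rw [← bar_unit_mem_iff hg.inj h, ← Irow_mk]
      exact hIA _ (hX hx0) _ ha
  have hrow : ∀ a ∈ A, row ζ p s t s(b,a) ∈ S := fun a ha =>
    S.add_mem (S.smul_mem _ (hRb a ha)) (S.smul_mem _ (hIb a ha))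
  have hTS : T ≤ S := by
    rw [hT, Submodule.span_le]
    rintro _ ⟨e, he | ⟨a, ha, rfl⟩, rfl⟩
    · exact Submodule.mem_sup_left (row_le_RI ζ p s t A (Submodule.subset_span ⟨e, he, rfl⟩))
    · exact hrow a (hX ha)
  rw [Submodule.eq_of_le_of_finrank_le hTS (hfS.trans hfT)]
  exact hrow y hy

/-- edges of `H` inside `U` -/
def Ein (H : SimpleGraph V) (U : Finset V) : Set (Sym2 V) := {e | e ∈ H.edgeSet ∧ ∀ x ∈ e, x ∈ U}

/-- `H` is closed in the row matroid -/
def Closed (ζ : V → ℝ) (p : V → Fin d → ℝ) (s t : Sym2 V → ℝ) (H : SimpleGraph V) : Prop :=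
  ∀ x y, x ≠ y → row ζ p s t s(x,y) ∈ Submodule.span ℝ (row ζ p s t '' H.edgeSet) → H.Adj x y

lemma row_loop (ζ : V → ℝ) (p : V → Fin d → ℝ) (s t : Sym2 V → ℝ) (x : V) : row ζ p s t s(x,x) = 0 := by
  simp [row, bar_self]

lemma span_KA_le {ζ : V → ℝ} {p : V → Fin d → ℝ} {s t : Sym2 V → ℝ} {H : SimpleGraph V} {A : Finset V}
    (hA : H.IsClique (A : Set V)) : 
    row ζ p s t '' KA A ⊆ (Submodule.span ℝ (row ζ p s t '' H.edgeSet) : Set (V → KK d)) := by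
  rintro _ ⟨e, he, rfl⟩
  induction e using Sym2.ind with
  | _ x y =>
    by_cases hxy : x = y
    · rw [hxy, row_loop]; exact Submodule.zero_mem _
    · rw [mem_KA] at he
      exact Submodule.subset_span ⟨s(x,y), hA he.1 he.2 hxy, rfl⟩

lemma glue {ζ : V → ℝ} {p : V → Fin d → ℝ} {s t : Sym2 V → ℝ} (hg : Gen ζ p s t)
    {H : SimpleGraph V} (hH : Closed ζ p s t H) 
    (A : Finset V) (hA : 2 * d + 2 ≤ #A) (hcl : H.IsClique (A : Set V)) (b : V) (X : Finset V)
    (hX : X ⊆ A) (hXc : d + 1 ≤ #X) (hbX : ∀ x ∈ X, H.Adj b x) : H.IsClique (insert b A : Set V) := by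
  by_cases hb : b ∈ A
  · rwa [Set.insert_eq_of_mem (mem_coe.mpr hb)]
  obtain ⟨X', hX', hXc'⟩ := exists_subset_card_eq hXc
  rw [SimpleGraph.isClique_insert]
  refine ⟨hcl, fun y hy hby => hH b y hby ?_⟩
  refine Submodule.span_le.mpr ?_ (glue_lin hg A hA b hb X' (hX'.trans hX) hXc' y hy)
  rw [Set.image_union]
  refine Set.union_subset (span_KA_le hcl) ?_
  rintro _ ⟨_, ⟨x, hx, rfl⟩, rfl⟩
  exact Submodule.subset_span ⟨s(b,x), hbX x (hX' hx), rfl⟩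

end
end RST

namespace RST
open Module Finset
section
variable {V : Type*} [Fintype V] [DecidableEq V] {d : ℕ}

lemma rank_le (ζ : V → ℝ) (p : V → Fin d → ℝ) (s t : Sym2 V → ℝ) (H : SimpleGraph V) (U : Finset V) :
    finrank ℝ (Submodule.span ℝ (row ζ p s t '' Ein H U)) ≤ (d + 1) * #U := by
  have h : Submodule.span ℝ (row ζ p s t '' Ein H U) ≤
      LinearMap.range (LinearMap.pi (fun v : V => if h : v ∈ U then (LinearMap.proj (⟨v, h⟩ : U)) else 0) :
        (U → KK d) →ₗ[ℝ] (V → KK d)) := by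
    rw [Submodule.span_le]
    rintro _ ⟨e, he, rfl⟩
    refine ⟨fun u => row ζ p s t e u, ?_⟩
    ext1 v
    by_cases hv : v ∈ U
    · simp [hv]
    · simp only [LinearMap.pi_apply, hv, dite_false, LinearMap.zero_apply]
      exact (row_apply_notMem ζ p s t e v (fun h => hv (he.2 v h))).symm
  refine (Submodule.finrank_mono h).trans ((LinearMap.finrank_range_le _).trans ?_)
  rw [Module.finrank_pi_fintype]
  simp [mul_comm]

open Classical in
/-- gain function -/
noncomputable def gfun (H : SimpleGraph V) (d : ℕ) (v : V) (M : Finset V) : ℝ :=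
  ((min (d+1 : ℕ) #M : ℕ) : ℝ) + if 2*(d+1)+1 ≤ #M ∧ ¬ H.IsClique (insert v M : Set V) then 1 else 0

lemma gain {ζ : V → ℝ} {p : V → Fin d → ℝ} {s t : Sym2 V → ℝ} (hd : 0 < d) (hg : Gen ζ p s t)
    {H : SimpleGraph V} (hH : Closed ζ p s t H) (X : Finset V) (v : V) (hv : v ∉ X) (M : Finset V)
    (hM : M ⊆ X) (hadj : ∀ x ∈ M, H.Adj v x) :
    (finrank ℝ (Submodule.span ℝ (row ζ p s t '' Ein H X)) : ℝ) + gfun H d v M ≤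
      (finrank ℝ (Submodule.span ℝ (row ζ p s t '' Ein H (insert v X))) : ℝ) := by
  have hF : ∀ e ∈ Ein H X, v ∉ e := fun e he h => hv (he.2 v h)
  have key : ∀ M' ⊆ M, finrank ℝ (Submodule.span ℝ (row ζ p s t '' (Ein H X ∪ star v M'))) ≤ 
      finrank ℝ (Submodule.span ℝ (row ζ p s t '' Ein H (insert v X))) := by
    intro M' hM'
    apply Submodule.finrank_mono
    apply Submodule.span_mono
    apply Set.image_mono
    rintro e (he | ⟨x, hx, rfl⟩)
    · exact ⟨he.1, fun x hx => mem_insert_of_mem (he.2 x hx)⟩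
    · refine ⟨hadj x (hM' hx), ?_⟩
      intro y hy
      rcases Sym2.mem_iff.mp hy with rfl | rfl
      · simp
      · exact mem_insert_of_mem (hM (hM' hx))
  unfold gfun
  split_ifs with hc
  · obtain ⟨h1, h2⟩ := hc
    rw [SimpleGraph.isClique_insert, not_and] at h2
    have h3 : ¬ H.IsClique (M : Set V) := fun h => h2 h (fun b hb _ => hadj b hb)
    rw [SimpleGraph.isClique_iff, Set.Pairwise] at h3
    push Not at h3
    obtain ⟨x, hx, y, hy, hxy, hnadj⟩ := h3
    obtain ⟨M', hM1, hM2, hM3⟩ := exists_subsuperset_card_eq (s := {x, y}) (t := M) (n := d + 2)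
      (by intro z; simp; rintro (rfl | rfl) <;> assumption) (by rw [card_pair hxy]; omega) (by omega)
    have := (one_ext hd hg v (Ein H X) hF M' (fun h => hv (hM (hM2 h))) hM3 x y (hM1 (by simp))
      (hM1 (by simp)) hxy ?_).trans (key M' hM2)
    · rw [min_eq_left (by omega)]
      have : ((_ : ℕ) : ℝ) ≤ _ := Nat.cast_le.mpr this
      push_cast at this ⊢
      linarith
    · intro hmem
      refine hnadj (hH x y hxy (Submodule.span_mono (Set.image_mono ?_) hmem))
      exact fun e he => he.1
  · obtain ⟨M', hM2, hM3⟩ := exists_subset_card_eq (s := M) (n := min (d+1) #M) (min_le_right _ _)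
    have := (zero_ext hg v (Ein H X) hF M' (fun h => hv (hM (hM2 h))) (by omega)).trans (key M' hM2)
    rw [hM3] at this
    rw [add_zero]
    exact_mod_cast this

/-- cut condition -/
def Cut (H : SimpleGraph V) (c : ℕ) (U : Finset V) : Prop :=
  ∀ A ⊆ U, ∀ B ⊆ U, A.Nonempty → B.Nonempty → Disjoint A B → (∀ a ∈ A, ∀ b ∈ B, ¬ H.Adj a b) →
    c + #A + #B ≤ #U

lemma main_clique {ζ : V → ℝ} {p : V → Fin d → ℝ} {s t : Sym2 V → ℝ} (hd : 0 < d) (hg : Gen ζ p s t)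
    {H : SimpleGraph V} (hH : Closed ζ p s t H) (c : ℕ) (hc : c = (d+1)*(d+2)+3) (n : ℕ) :
    ∀ U : Finset V, #U = n → c + 1 ≤ #U → Cut H c U → H.IsClique (U : Set V) := by
  classical
  induction n with
  | zero => intro U h1 h2; omega
  | succ n ih =>
  intro U hUn hUc hcut
  have hcd : 2 * d + 5 ≤ c := by rw [hc]; nlinarith
  set N : V → Finset V := fun v => (U.erase v).filter (H.Adj v) with hN
  have hNU : ∀ v, N v ⊆ U.erase v := fun v => filter_subset _ _
  have hNadj : ∀ v, ∀ x ∈ N v, H.Adj v x := fun v x hx => (mem_filter.mp hx).2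
  have hdeg : ∀ v ∈ U, c ≤ #(N v) := by
    intro v hv
    have hce := card_erase_of_mem hv
    have hsd := card_sdiff_of_subset (hNU v)
    have hle := card_le_card (hNU v)
    rcases (U.erase v \ N v).eq_empty_or_nonempty with h | h
    · rw [h, card_empty] at hsd
      omega
    · have := hcut {v} (by simpa using hv) (U.erase v \ N v) (sdiff_subset.trans (erase_subset _ _))
        (by simp) h (by simp) (by
          intro a ha b hb
          rw [mem_singleton] at ha
          subst ha
          simp only [hN, mem_sdiff, mem_filter, not_and] at hb
          exact hb.2 hb.1)
      rw [card_singleton] at this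
      omega
  by_cases hex : ∃ v ∈ U, H.IsClique (insert v (N v) : Set V)
  · obtain ⟨v, hv, hvc⟩ := hex
    by_cases hn : #U = c + 1
    · intro x hx y hy hxy
      by_contra hnadj
      have := hcut {x} (by simpa using hx) {y} (by simpa using hy) (by simp) (by simp) (by simpa using hxy)
        (by simpa using hnadj)
      simp at this
      omega
    have hce := card_erase_of_mem hv
    have hcl := ih (U.erase v) (by omega) (by omega) (by
      intro A hA B hB hAn hBn hdis hno
      have hvA : v ∉ A := fun h => (mem_erase.mp (hA h)).1 rfl
      have hvB : v ∉ B := fun h => (mem_erase.mp (hB h)).1 rfl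
      by_cases hAv : ∃ a ∈ A, H.Adj v a
      · obtain ⟨a, ha, hadj⟩ := hAv
        have := hcut (insert v A) (insert_subset hv (hA.trans (erase_subset _ _))) B
          (hB.trans (erase_subset _ _)) (by simp) hBn (by simp [hdis, hvB]) (by
          intro x hx b hb
          rcases mem_insert.mp hx with rfl | hx
          · intro hxb
            refine hno a ha b hb (hvc ?_ ?_ ?_)
            · right; exact mem_coe.mpr (mem_filter.mpr ⟨hA ha, hadj⟩)
            · right; exact mem_coe.mpr (mem_filter.mpr ⟨hB hb, hxb⟩)
            · exact fun h => Finset.disjoint_left.mp hdis ha (h ▸ hb)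
          · exact hno x hx b hb)
        rw [card_insert_of_notMem hvA] at this
        omega
      · push Not at hAv
        have := hcut A (hA.trans (erase_subset _ _)) (insert v B) 
          (insert_subset hv (hB.trans (erase_subset _ _))) hAn (by simp) (by simp [hdis, hvA]) (by
          intro x hx b hb
          rcases mem_insert.mp hb with rfl | hb
          · exact fun h => hAv x hx h.symm
          · exact hno x hx b hb)
        rw [card_insert_of_notMem hvB] at this
        omega)
    have := glue hg hH (U.erase v) (by omega) hcl v (N v) (hNU v) (by have := hdeg v hv; omega) (hNadj v)
    rwa [← coe_insert, insert_erase hv] at this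
  · exfalso
    push Not at hex
    have h1 := avg (fun X => (finrank ℝ (Submodule.span ℝ (row ζ p s t '' Ein H X)) : ℝ))
      (fun v X => gfun H d v (X ∩ N v)) (Nat.cast_nonneg _) U (by
        intro X hX v hv hvX
        exact gain hd hg hH X v hvX (X ∩ N v) inter_subset_left
          (fun x hx => hNadj v x (mem_inter.mp hx).2))
    have h2 : ∀ v ∈ U, ((d + 1 : ℕ) : ℝ) < ∑ X ∈ (U.erase v).powerset, bw #X (#(U.erase v) - #X) * gfun H d v (X ∩ N v) := by
      intro v hv
      rw [marg (gfun H d v) (N v) (U.erase v) (hNU v)]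
      have := gain_bound (fun X : Finset V => H.IsClique (insert v X : Set V)) (d+1) (by omega) (by
        intro X x hxX hXc hC hnC Y hY hYc hCY
        apply hnC
        have hcard : #X ≤ #(insert v X) := card_le_card (subset_insert _ _)
        have := glue hg hH (insert v X) (by omega) (by simpa using hC) x Y (hY.trans (subset_insert _ _))
          (by omega) (by
            intro y hy
            apply hCY
            · simp
            · simp [hy]
            · rintro rfl; exact hxX (hY hy))
        simp only [coe_insert] at this ⊢
        rwa [Set.insert_comm]) (N v) (by have := hdeg v hv; rw [hc] at this; linarith) (hex v hv)
      simpa [gfun] using this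
    have h3 := sum_lt_sum_of_nonempty (card_pos.mp (by omega : 0 < #U)) h2
    rw [sum_const, nsmul_eq_mul] at h3
    have h4 : ((_ : ℕ) : ℝ) ≤ _ := Nat.cast_le.mpr (rank_le ζ p s t H U)
    rw [Nat.cast_mul] at h4
    have h5 := h3.trans_le (h1.trans h4)
    rw [mul_comm] at h5
    exact lt_irrefl _ h5

end
end RST

namespace RST
open Module Finset

lemma reach_closed {W : Type*} {G : SimpleGraph W} (P : W → Prop) (h : ∀ x y, G.Adj x y → P x → P y)
    {x y : W} (hr : G.Reachable x y) (hx : P x) : P y := by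
  obtain ⟨w⟩ := hr
  induction w with
  | nil => exact hx
  | cons hadj _ ih => exact ih (h _ _ hadj hx)

section
variable {V : Type*} [Fintype V] [DecidableEq V] {d : ℕ}

lemma cut_of_kconn {G : SimpleGraph V} {c : ℕ} (hG : KConnected G c) : Cut G c univ := by
  intro A _ B _ ⟨a, ha⟩ ⟨b, hb⟩ hdis hno
  by_contra hlt
  have hcard : #(A ∪ B) + #(A ∪ B)ᶜ = #(univ : Finset V) := by
    rw [card_add_card_compl, card_univ]
  rw [card_union_of_disjoint hdis] at hcard
  have hconn := hG.2 (((A ∪ B)ᶜ : Finset V) : Set V) (Finset.finite_toSet _)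
    (by rw [Set.ncard_coe_finset]; omega)
  have hS : ∀ x : (((((A ∪ B)ᶜ : Finset V) : Set V)ᶜ : Set V)), x.1 ∈ A ∨ x.1 ∈ B := by
    rintro ⟨x, hx⟩
    simpa [or_iff_not_imp_left] using hx
  have ha' : a ∈ (((((A ∪ B)ᶜ : Finset V) : Set V)ᶜ : Set V)) := by simp [ha]
  have hb' : b ∈ (((((A ∪ B)ᶜ : Finset V) : Set V)ᶜ : Set V)) := by simp [hb]
  have := reach_closed (fun x => x.1 ∈ A) (by
    intro x y hxy hx
    rcases hS y with h | h
    · exact h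
    · exact absurd hxy (hno _ hx _ h)) (hconn.preconnected ⟨a, ha'⟩ ⟨b, hb'⟩) ha
  exact Finset.disjoint_left.mp hdis this hb

/-- closure of a graph in the row matroid -/
def clos (ζ : V → ℝ) (p : V → Fin d → ℝ) (s t : Sym2 V → ℝ) (G : SimpleGraph V) : SimpleGraph V where
  Adj x y := x ≠ y ∧ row ζ p s t s(x,y) ∈ Submodule.span ℝ (row ζ p s t '' G.edgeSet)
  symm := ⟨fun x y h => ⟨h.1.symm, by rw [Sym2.eq_swap]; exact h.2⟩⟩
  loopless := ⟨fun x h => h.1 rfl⟩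

lemma le_clos (ζ : V → ℝ) (p : V → Fin d → ℝ) (s t : Sym2 V → ℝ) (G : SimpleGraph V) :
    G ≤ clos ζ p s t G := by
  intro x y h
  exact ⟨h.ne, Submodule.subset_span ⟨s(x,y), h, rfl⟩⟩

lemma clos_span (ζ : V → ℝ) (p : V → Fin d → ℝ) (s t : Sym2 V → ℝ) (G : SimpleGraph V) :
    Submodule.span ℝ (row ζ p s t '' (clos ζ p s t G).edgeSet) ≤ Submodule.span ℝ (row ζ p s t '' G.edgeSet) := by
  rw [Submodule.span_le]
  rintro _ ⟨e, he, rfl⟩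
  induction e using Sym2.ind with
  | _ x y => exact he.2

lemma clos_closed (ζ : V → ℝ) (p : V → Fin d → ℝ) (s t : Sym2 V → ℝ) (G : SimpleGraph V) :
    Closed ζ p s t (clos ζ p s t G) := fun x y hxy h => ⟨hxy, clos_span ζ p s t G h⟩

lemma span_G {ζ : V → ℝ} {p : V → Fin d → ℝ} {s t : Sym2 V → ℝ} (hd : 0 < d) (hg : Gen ζ p s t)
    {G : SimpleGraph V} (hG : KConnected G (d ^ 2 + 3 * d + 5)) :
    Submodule.span ℝ (row ζ p s t '' G.edgeSet) = RI ζ p univ := by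
  have hc : d^2+3*d+5 + 1 ≤ #(univ : Finset V) := by
    have := hG.1; rwa [Nat.card_eq_fintype_card, ← card_univ] at this
  have hcl := main_clique hd hg (clos_closed ζ p s t G) (d^2+3*d+5) (by ring) _ univ rfl hc (by
    intro A hA B hB hAn hBn hdis hno
    exact cut_of_kconn hG A hA B hB hAn hBn hdis (fun a ha b hb h => hno a ha b hb (le_clos _ _ _ _ _ h)))
  apply le_antisymm
  · refine (Submodule.span_mono (Set.image_mono ?_)).trans (row_le_RI ζ p s t univ)
    intro e _ x _
    exact mem_univ x
  · rw [← full_RI hg univ (by nlinarith), Submodule.span_le]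
    exact (span_KA_le hcl).trans (clos_span ζ p s t G)
end

section
variable {M : Type*} [AddCommGroup M] [Module ℝ M]

lemma indep_iff_at {κ : Type*} (f : κ → M) (j : κ) : LinearIndependent ℝ f ↔
    LinearIndepOn ℝ f {j}ᶜ ∧ f j ∉ Submodule.span ℝ (f '' {j}ᶜ) := by
  rw [← linearIndepOn_insert (by simp), ← linearIndepOn_univ]
  have : insert j ({j}ᶜ : Set κ) = Set.univ := by ext x; simp [em]
  rw [this]

lemma indep_congr_at {κ : Type*} (f g : κ → M) (j : κ) (h : ∀ i, i ≠ j → f i = g i)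
    (hf : LinearIndependent ℝ f) (hg : g j ∉ Submodule.span ℝ (f '' {j}ᶜ)) : LinearIndependent ℝ g := by
  rw [indep_iff_at _ j] at hf ⊢
  have he : Set.EqOn f g {j}ᶜ := fun i hi => h i hi
  rw [← he.image_eq]
  exact ⟨hf.1.congr he, hg⟩

open Classical in
lemma split_aux {κ : Type*} [Fintype κ] (a b : κ → M) (h : LinearIndependent ℝ (fun i => a i + b i))
    (J : Finset κ) : ∃ S : Set κ, LinearIndependent ℝ 
      (fun i => if i ∈ J then (if i ∈ S then a i else b i) else a i + b i) := by
  induction J using Finset.induction_on with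
  | empty => exact ⟨∅, by simpa using h⟩
  | insert j J hj ih =>
    obtain ⟨S, hS⟩ := ih
    set f := (fun i => if i ∈ J then (if i ∈ S then a i else b i) else a i + b i) with hf
    by_cases ha : a j ∈ Submodule.span ℝ (f '' {j}ᶜ)
    · by_cases hb : b j ∈ Submodule.span ℝ (f '' {j}ᶜ)
      · exfalso
        refine ((indep_iff_at f j).mp hS).2 ?_
        have : f j = a j + b j := by simp [hf, hj]
        rw [this]
        exact Submodule.add_mem _ ha hb
      · refine ⟨S \ {j}, indep_congr_at f _ j ?_ hS ?_⟩
        · intro i hi; simp [hf, hi]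
        · simpa using hb
    · refine ⟨S ∪ {j}, indep_congr_at f _ j ?_ hS ?_⟩
      · intro i hi; simp [hf, hi]
      · simpa using ha

lemma decomp_lin [FiniteDimensional ℝ M] {E : Type*} [Finite E] (u w : E → M) (s t : E → ℝ)
    (R I : Submodule ℝ M) (hdis : Disjoint R I) (hu : ∀ e, u e ∈ R) (hw : ∀ e, w e ∈ I)
    (hspan : Submodule.span ℝ (Set.range (fun e => s e • u e + t e • w e)) = R ⊔ I) :
    ∃ F1 F2 : Set E, Disjoint F1 F2 ∧ Submodule.span ℝ (u '' F1) = R ∧ Submodule.span ℝ (w '' F2) = I ∧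
      F2.ncard ≤ finrank ℝ I := by
  classical
  obtain ⟨κ, a, hinj, hsp, hli⟩ := exists_linearIndependent' ℝ (fun e => s e • u e + t e • w e)
  have : Finite κ := Finite.of_injective a hinj
  have : Fintype κ := Fintype.ofFinite κ
  obtain ⟨S, hS⟩ := split_aux (fun i => s (a i) • u (a i)) (fun i => t (a i) • w (a i)) hli univ
  simp only [mem_univ, if_true] at hS
  have hcard : Fintype.card κ = finrank ℝ R + finrank ℝ I := by
    rw [← finrank_span_eq_card hli, hsp, hspan, ← Submodule.finrank_sup_add_finrank_inf_eq, hdis.eq_bot]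
    simp
  have hSS : Fintype.card κ = Fintype.card S + Fintype.card (Sᶜ : Set κ) := by
    rw [Fintype.card_compl_set]
    have := Fintype.card_subtype_le (· ∈ S)
    have : Fintype.card S ≤ Fintype.card κ := set_fintype_card_le_univ S
    omega
  have l1 : LinearIndependent ℝ (fun i : S => s (a i) • u (a i)) := by
    have := hS.comp (fun i : S => i.1) Subtype.val_injective
    convert this using 2 with i
    simp
  have l2 : LinearIndependent ℝ (fun i : (Sᶜ : Set κ) => t (a i) • w (a i)) := by
    have := hS.comp (fun i : (Sᶜ : Set κ) => i.1) Subtype.val_injective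
    convert this using 2 with i
    have := i.2
    simp only [Function.comp, if_neg this]
  have c1 : Fintype.card S ≤ finrank ℝ (Submodule.span ℝ (u '' (a '' S))) := by
    rw [← finrank_span_eq_card l1]
    apply Submodule.finrank_mono
    rw [Submodule.span_le]
    rintro _ ⟨i, rfl⟩
    exact Submodule.smul_mem _ _ (Submodule.subset_span ⟨a i, ⟨i, i.2, rfl⟩, rfl⟩)
  have c2 : Fintype.card (Sᶜ : Set κ) ≤ finrank ℝ (Submodule.span ℝ (w '' (a '' Sᶜ))) := by
    rw [← finrank_span_eq_card l2]
    apply Submodule.finrank_mono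
    rw [Submodule.span_le]
    rintro _ ⟨i, rfl⟩
    exact Submodule.smul_mem _ _ (Submodule.subset_span ⟨a i, ⟨i, i.2, rfl⟩, rfl⟩)
  have le1 : Submodule.span ℝ (u '' (a '' S)) ≤ R := by
    rw [Submodule.span_le]; rintro _ ⟨e, _, rfl⟩; exact hu e
  have le2 : Submodule.span ℝ (w '' (a '' Sᶜ)) ≤ I := by
    rw [Submodule.span_le]; rintro _ ⟨e, _, rfl⟩; exact hw e
  have f1 := Submodule.finrank_mono le1
  have f2 := Submodule.finrank_mono le2
  refine ⟨a '' S, a '' Sᶜ, ?_, Submodule.eq_of_le_of_finrank_le le1 (by omega),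
    Submodule.eq_of_le_of_finrank_le le2 (by omega), ?_⟩
  · exact (Set.disjoint_image_iff hinj).mpr disjoint_compl_right
  · rw [Set.ncard_image_of_injective _ hinj, Set.ncard_eq_toFinset_card', Set.toFinset_card]
    omega
end
end RST

namespace RST
open Module Finset
section
variable {V : Type*} [Fintype V] [DecidableEq V] {d : ℕ}

/-- functional -/
noncomputable def phi (L : V → KK d →ₗ[ℝ] ℝ) : (V → KK d) →ₗ[ℝ] ℝ := ∑ i, L i ∘ₗ LinearMap.proj i

lemma phi_bar (L : V → KK d →ₗ[ℝ] ℝ) (x y : V) (w : KK d) : phi L (bar x y w) = L x w - L y w := by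
  have h : ∀ z : V, phi L (Pi.single z w) = L z w := by
    intro z
    simp only [phi, LinearMap.sum_apply, LinearMap.comp_apply, LinearMap.proj_apply]
    rw [Finset.sum_eq_single z]
    · simp
    · intro b _ hb; simp [hb]
    · simp
  rw [bar, map_sub, h, h]

lemma tree_conn {ζ : V → ℝ} (hζ : Function.Injective ζ) (F : Set (Sym2 V)) (hF : ∀ e ∈ F, ¬ e.IsDiag)
    (h : Submodule.span ℝ (Irow d ζ '' F) = Submodule.span ℝ (Irow d ζ '' KA univ)) [Nonempty V] :
    (SimpleGraph.fromEdgeSet F).Connected := by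
  classical
  refine ⟨fun a b => ?_⟩
  by_contra hab
  set T := SimpleGraph.fromEdgeSet F
  set L : V → KK d →ₗ[ℝ] ℝ := fun i => if T.Reachable a i then LinearMap.snd ℝ _ _ else 0 with hL
  have h0 : Submodule.span ℝ (Irow d ζ '' F) ≤ LinearMap.ker (phi L) := by
    rw [Submodule.span_le]
    rintro _ ⟨e, he, rfl⟩
    induction e using Sym2.ind with
    | _ x y =>
      have hadj : T.Adj x y := by
        rw [SimpleGraph.fromEdgeSet_adj]
        exact ⟨he, by simpa using hF _ he⟩
      have : T.Reachable a x ↔ T.Reachable a y :=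
        ⟨fun h => h.trans hadj.reachable, fun h => h.trans hadj.reachable.symm⟩
      simp only [Irow_mk, SetLike.mem_coe, LinearMap.mem_ker, phi_bar, hL, this, sub_self]
  rw [h] at h0
  have h1 : Irow d ζ s(a,b) ∈ LinearMap.ker (phi L) := h0 (Submodule.subset_span ⟨s(a,b), by simp, rfl⟩)
  rw [LinearMap.mem_ker, Irow_mk, phi_bar] at h1
  simp only [hL, if_neg hab, SimpleGraph.Reachable.refl, if_true, LinearMap.zero_apply, sub_zero,
    LinearMap.snd_apply] at h1
  exact hab (hζ (sub_eq_zero.mp h1) ▸ SimpleGraph.Reachable.refl _)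

lemma finrank_I_le (ζ : V → ℝ) (x0 : V) :
    finrank ℝ (Submodule.span ℝ (Irow d ζ '' KA univ)) + 1 ≤ Fintype.card V := by
  have h : Submodule.span ℝ (Irow d ζ '' KA univ) ≤
      Submodule.span ℝ (((univ.erase x0).image (fun y => bar x0 y ((0,1) : KK d)) : Finset (V → KK d)) : Set (V → KK d)) := by
    set Q := Submodule.span ℝ (((univ.erase x0).image (fun y => bar x0 y ((0,1) : KK d)) : Finset (V → KK d)) : Set (V → KK d))
    have hQ : ∀ y, bar x0 y ((0,1) : KK d) ∈ Q := by
      intro y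
      by_cases hy : y = x0
      · rw [hy, bar_self]; exact Q.zero_mem
      · exact Submodule.subset_span (mem_coe.mpr (mem_image_of_mem _ (by simp [hy])))
    rw [Submodule.span_le]
    rintro _ ⟨e, he, rfl⟩
    induction e using Sym2.ind with
    | _ x y =>
      have h1 : ((0, ζ x - ζ y) : KK d) = (ζ x - ζ y) • (0, 1) := by ext <;> simp
      have h2 : bar x y ((0,1) : KK d) = bar x0 y (0,1) - bar x0 x (0,1) := by simp only [bar]; abel
      rw [Irow_mk, h1, bar_smul, h2]
      exact Q.smul_mem _ (Q.sub_mem (hQ y) (hQ x))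
  have h1 := (Submodule.finrank_mono h).trans (finrank_span_finset_le_card _)
  have h2 := card_image_le (s := univ.erase x0) (f := fun y => bar x0 y ((0,1) : KK d))
  rw [card_erase_of_mem (mem_univ _), card_univ] at h2
  have : 0 < Fintype.card V := Fintype.card_pos_iff.mpr ⟨x0⟩
  omega

lemma exists_dual {p : V → Fin d → ℝ} (A : Finset V) 
    (h : LinearIndependent ℝ (fun a : A => ((p a, 1) : KK d))) (a : V) (ha : a ∈ A) :
    ∃ α : KK d →ₗ[ℝ] ℝ, α (p a, 1) = 1 ∧ ∀ b ∈ A, b ≠ a → α (p b, 1) = 0 := by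
  obtain ⟨g, hg⟩ := LinearMap.exists_extend ((Finsupp.lapply (⟨a, ha⟩ : A)) ∘ₗ (h.repr : _ →ₗ[ℝ] (A →₀ ℝ)))
  have key : ∀ b : A, g (p b, 1) = Finsupp.single b (1:ℝ) ⟨a, ha⟩ := by
    intro b
    have hm : ((p b, 1) : KK d) ∈ Submodule.span ℝ (Set.range (fun a : A => ((p a, 1) : KK d))) :=
      Submodule.subset_span ⟨b, rfl⟩
    have := LinearMap.congr_fun hg ⟨_, hm⟩
    have h2 := h.repr_eq_single b ⟨_, hm⟩ rfl
    simp only [LinearMap.comp_apply, Submodule.subtype_apply] at this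
    rw [this]
    simp only [LinearEquiv.coe_coe, LinearMap.coe_coe, Finsupp.lapply_apply]
    exact DFunLike.congr_fun h2 _
  refine ⟨g, ?_, ?_⟩
  · rw [key ⟨a, ha⟩]; simp
  · intro b hb hba
    rw [key ⟨b, hb⟩]
    simp [hba]

lemma dconn {p : V → Fin d → ℝ}
    (hpos : ∀ A : Finset V, #A ≤ d + 1 → LinearIndependent ℝ (fun a : A => ((p a, 1) : KK d)))
    (G : SimpleGraph V) (F : Set (Sym2 V)) (hF : F ⊆ G.edgeSet) (hcard : d + 1 ≤ Nat.card V)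
    (h : Submodule.span ℝ (Rrow p '' F) = Submodule.span ℝ (Rrow p '' KA univ)) : KConnected G d := by
  classical
  refine ⟨hcard, fun S hS hSc => ?_⟩
  have hne : Nonempty (Sᶜ : Set V) := by
    by_contra hcon
    have hS' : S = Set.univ := by
      ext x
      simp only [Set.mem_univ, iff_true]
      by_contra hx
      exact hcon ⟨⟨x, hx⟩⟩
    rw [hS', Set.ncard_univ] at hSc
    omega
  refine ⟨fun a b => ?_⟩
  by_contra hab
  have haS : a.1 ∉ S := a.2
  have hbS : b.1 ∉ S := b.2
  have hab' : a.1 ≠ b.1 := fun h => hab (Subtype.ext h ▸ SimpleGraph.Reachable.refl _)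
  set A : Set V := {v | ∃ hv : v ∈ Sᶜ, (G.induce Sᶜ).Reachable a ⟨v, hv⟩} with hA
  have haA : a.1 ∈ A := ⟨a.2, SimpleGraph.Reachable.refl _⟩
  have hbA : b.1 ∉ A := fun ⟨_, h⟩ => hab h
  have hstep : ∀ x y, G.Adj x y → x ∈ A → y ∈ A ∨ y ∈ S := by
    rintro x y hxy ⟨hx, hr⟩
    by_cases hy : y ∈ S
    · exact Or.inr hy
    · refine Or.inl ⟨hy, hr.trans (SimpleGraph.Adj.reachable ?_)⟩
      exact hxy
  set B : Finset V := insert a.1 (insert b.1 hS.toFinset) with hB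
  have hBc : #B ≤ d + 1 := by
    have h1 := card_insert_le a.1 (insert b.1 hS.toFinset)
    have h2 := card_insert_le b.1 hS.toFinset
    rw [Set.ncard_eq_toFinset_card S hS] at hSc
    rw [← hB] at h1
    omega
  obtain ⟨α, ha1, ha0⟩ := exists_dual B (hpos B hBc) a.1 (by simp [hB])
  obtain ⟨β, hb1, hb0⟩ := exists_dual B (hpos B hBc) b.1 (by simp [hB])
  have hSB : ∀ x ∈ S, x ∈ B := fun x hx => by simp [hB, hx]
  have haS0 : ∀ x ∈ S, α (p x, 1) = 0 := fun x hx => ha0 x (hSB x hx) (fun h => haS (h ▸ hx))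
  have hbS0 : ∀ x ∈ S, β (p x, 1) = 0 := fun x hx => hb0 x (hSB x hx) (fun h => hbS (h ▸ hx))
  set L : V → KK d →ₗ[ℝ] ℝ := fun i => if i ∈ A then α (p i, 1) • β - β (p i, 1) • α else 0 with hL
  have hval : ∀ x y, phi L (Rrow p s(x,y)) = 
      (if x ∈ A then β (p x, 1) * α (p y, 1) - α (p x, 1) * β (p y, 1) else 0) +
      (if y ∈ A then β (p y, 1) * α (p x, 1) - α (p y, 1) * β (p x, 1) else 0) := by
    intro x y
    rw [Rrow_mk, phi_bar, hom_sub]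
    simp only [hL]
    split_ifs <;> simp only [LinearMap.sub_apply, LinearMap.smul_apply, LinearMap.zero_apply, map_sub, smul_eq_mul] <;> ring
  have h0 : Submodule.span ℝ (Rrow p '' F) ≤ LinearMap.ker (phi L) := by
    rw [Submodule.span_le]
    rintro _ ⟨e, he, rfl⟩
    induction e using Sym2.ind with
    | _ x y =>
      have hadj : G.Adj x y := hF he
      rw [SetLike.mem_coe, LinearMap.mem_ker, hval]
      by_cases hx : x ∈ A <;> by_cases hy : y ∈ A
      · simp only [hx, hy, if_true]; ring
      · have := (hstep x y hadj hx).resolve_left hy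
        simp [hx, hy, haS0 y this, hbS0 y this]
      · have := (hstep y x hadj.symm hy).resolve_left hx
        simp [hx, hy, haS0 x this, hbS0 x this]
      · simp [hx, hy]
  rw [h] at h0
  have h1 : Rrow p s(a.1,b.1) ∈ LinearMap.ker (phi L) := h0 (Submodule.subset_span ⟨s(a.1,b.1), by simp, rfl⟩)
  rw [LinearMap.mem_ker, hval, if_pos haA, if_neg hbA, ha1, hb1,
    ha0 b.1 (by simp [hB]) hab'.symm, hb0 a.1 (by simp [hB]) hab'] at h1
  norm_num at h1

lemma RI_disjoint (ζ : V → ℝ) (p : V → Fin d → ℝ) :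
    Disjoint (Submodule.span ℝ (Rrow p '' KA univ)) (Submodule.span ℝ (Irow d ζ '' KA univ)) := by
  have h1 : ∀ f ∈ Submodule.span ℝ (Rrow p '' KA univ), ∀ v, (f v).2 = 0 := by
    intro f hf
    induction hf using Submodule.span_induction with
    | mem x h =>
      obtain ⟨e, _, rfl⟩ := h
      induction e using Sym2.ind with
      | _ x y => intro v; simp only [Rrow_mk, bar, Pi.sub_apply, Pi.single_apply]; split_ifs <;> simp
    | zero => simp
    | add x y _ _ hx hy => intro v; simp [hx, hy]
    | smul c x _ hx => intro v; simp [hx]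
  have h2 : ∀ f ∈ Submodule.span ℝ (Irow d ζ '' KA univ), ∀ v, (f v).1 = 0 := by
    intro f hf
    induction hf using Submodule.span_induction with
    | mem x h =>
      obtain ⟨e, _, rfl⟩ := h
      induction e using Sym2.ind with
      | _ x y => intro v; simp only [Irow_mk, bar, Pi.sub_apply, Pi.single_apply]; split_ifs <;> simp
    | zero => simp
    | add x y _ _ hx hy => intro v; simp [hx, hy]
    | smul c x _ hx => intro v; simp [hx]
  rw [Submodule.disjoint_def]
  intro f hf1 hf2
  funext v
  exact Prod.ext (h2 f hf2 v) (h1 f hf1 v)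

end
end RST

theorem removable_spanning_tree {V : Type*} [Fintype V] (d : ℕ) (hd : 0 < d)
    (G : SimpleGraph V) (hG : KConnected G (d ^ 2 + 3 * d + 5)) :
    ∃ T : SimpleGraph V, T ≤ G ∧ T.IsTree ∧ KConnected (G \ T) d := by
  classical
  obtain ⟨ζ, p, s, t, hg⟩ := RST.exists_gen V d
  have hsp := RST.span_G hd hg hG
  have hcard := hG.1
  have hne : Nonempty V := by
    have : 0 < Nat.card V := by omega
    exact (Nat.card_pos_iff.mp this).1
  obtain ⟨F1, F2, hdis, hR, hI, hc⟩ := RST.decomp_lin (E := G.edgeSet) (fun e => RST.Rrow p e.1)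
    (fun e => RST.Irow d ζ e.1) (fun e => s e.1) (fun e => t e.1) _ _ (RST.RI_disjoint ζ p)
    (fun e => Submodule.subset_span ⟨e.1, fun x _ => Finset.mem_univ x, rfl⟩)
    (fun e => Submodule.subset_span ⟨e.1, fun x _ => Finset.mem_univ x, rfl⟩) (by
      rw [Set.image_eq_range] at hsp
      exact hsp)
  have hF : ∀ F : Set G.edgeSet, ∀ e ∈ (Subtype.val '' F : Set (Sym2 V)), e ∈ G.edgeSet := by
    rintro F _ ⟨e, _, rfl⟩; exact e.2
  have hnd : ∀ e ∈ (Subtype.val '' F2 : Set (Sym2 V)), ¬ e.IsDiag := fun e he =>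
    G.not_isDiag_of_mem_edgeSet (hF F2 e he)
  have hTe : (SimpleGraph.fromEdgeSet (Subtype.val '' F2 : Set (Sym2 V))).edgeSet = Subtype.val '' F2 := by
    rw [SimpleGraph.edgeSet_fromEdgeSet]
    ext e
    simp only [Set.mem_diff]
    exact ⟨fun h => h.1, fun h => ⟨h, hnd e h⟩⟩
  have hconn := RST.tree_conn (d := d) hg.inj (Subtype.val '' F2 : Set (Sym2 V)) hnd (by
    rw [Set.image_image]; exact hI)
  refine ⟨SimpleGraph.fromEdgeSet (Subtype.val '' F2), ?_, ?_, ?_⟩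
  · rw [← SimpleGraph.edgeSet_subset_edgeSet, hTe]
    exact hF F2
  · rw [SimpleGraph.isTree_iff_connected_and_card]
    refine ⟨hconn, le_antisymm ?_ hconn.card_vert_le_card_edgeSet_add_one⟩
    rw [Nat.card_coe_set_eq, hTe, Set.ncard_image_of_injective _ Subtype.val_injective]
    have := RST.finrank_I_le (d := d) ζ hne.some
    rw [Nat.card_eq_fintype_card]
    omega
  · refine RST.dconn hg.pos _ (Subtype.val '' F1) ?_ (by nlinarith) (by
      rw [Set.image_image]; exact hR)
    rw [SimpleGraph.edgeSet_sdiff, hTe]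
    intro e he
    refine ⟨hF F1 e he, ?_⟩
    obtain ⟨e1, h1, rfl⟩ := he
    rintro ⟨e2, h2, h⟩
    rw [Subtype.val_injective h] at h2
    exact Set.disjoint_left.mp hdis h1 h2
end

section
/- For every positive integer d, every (20·d(d+1))-connected finite simple graph G contains a spanning tree T such that the graph obtained from G by deleting the edges of T is d-connected. -/
section genericity

lemma line_indep_finite {ι W : Type*} [Fintype ι] [AddCommGroup W] [Module ℝ W]
    (a b : ι → W) (h : LinearIndependent ℝ a) :
    {s : ℝ | ¬ LinearIndependent ℝ (fun i => a i + s • b i)}.Finite := by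
  classical
  obtain ⟨φ, hφ⟩ := LinearMap.exists_leftInverse_of_injective (Fintype.linearCombination ℝ a)
    (LinearMap.ker_eq_bot.2 (LinearIndependent.fintypeLinearCombination_injective h))
  have hφa : ∀ i, φ (a i) = Pi.single i 1 := by
    intro i
    have := congrArg (fun f => f (Pi.single i 1)) hφ
    simpa [Fintype.linearCombination_apply_single] using this
  let M : Matrix ι ι (Polynomial ℝ) := fun i j =>
    Polynomial.C (φ (a i) j) + Polynomial.X * Polynomial.C (φ (b i) j)
  have hM : ∀ s : ℝ, M.det.eval s = Matrix.det (fun i j => φ (a i + s • b i) j) := by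
    intro s
    have := RingHom.map_det (Polynomial.evalRingHom s) M
    rw [Polynomial.coe_evalRingHom] at this
    rw [this]
    congr 1
    ext i j
    change Polynomial.eval s (M i j) = _
    simp [M]
    ring
  have h0 : M.det ≠ 0 := by
    intro h0
    have h1 := hM 0
    rw [h0] at h1
    have : (fun i j => φ (a i + (0:ℝ) • b i) j) = (1 : Matrix ι ι ℝ) := by
      ext i j
      simp [hφa, Matrix.one_apply, Pi.single_apply, eq_comm]
    rw [this] at h1
    simp at h1
  refine (Polynomial.finite_setOfPred_isRoot h0).subset ?_
  intro s hs
  simp only [Set.mem_ofPred_eq] at hs ⊢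
  by_contra hne
  apply hs
  have hne' : Matrix.det (fun i j => φ (a i + s • b i) j) ≠ 0 := by
    rw [← hM]; exact hne
  have := Matrix.linearIndependent_rows_of_det_ne_zero hne'
  exact LinearIndependent.of_comp φ this

lemma exists_generic {Q K : Type*} [AddCommGroup Q] [Module ℝ Q] [Finite K]
    (P : K → Q → Prop)
    (hP : ∀ k q q', P k q → {s : ℝ | ¬ P k (q + s • (q' - q))}.Finite) :
    ∃ q, ∀ k q', P k q' → P k q := by
  classical
  have := Fintype.ofFinite K
  -- maximize the number of satisfied predicates
  let c : Q → ℕ := fun q => (Finset.univ.filter (fun k => P k q)).card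
  have hb : ∃ q, ∀ q', c q' ≤ c q := by
    have hbd : BddAbove (Set.range c) := ⟨Fintype.card K, by
      rintro _ ⟨q, rfl⟩
      exact Finset.card_le_univ _⟩
    obtain ⟨q, hq⟩ := Nat.sSup_mem (Set.range_nonempty c) hbd
    exact ⟨q, fun q' => by rw [hq]; exact le_csSup hbd ⟨q', rfl⟩⟩
  obtain ⟨q, hq⟩ := hb
  refine ⟨q, fun k q' hk => ?_⟩
  by_contra hkq
  -- a point on the line satisfying more
  have hfin : (⋃ j : K, {s : ℝ | (P j q ∧ ¬ P j (q + s • (q' - q))) ∨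
      (j = k ∧ ¬ P j (q + s • (q' - q)))}).Finite := by
    apply Set.finite_iUnion
    intro j
    rw [Set.ofPred_or]
    apply Set.Finite.union
    · by_cases hj : P j q
      · exact (hP j q q' hj).subset fun s hs => hs.2
      · convert Set.finite_empty (α := ℝ)
        ext s; simp [hj]
    · by_cases hj : j = k
      · subst hj
        have := (hP j q' q hk).preimage (f := fun s : ℝ => 1 - s)
          (fun x _ y _ hxy => by simpa using hxy)
        refine this.subset ?_
        rintro s ⟨-, hs⟩
        simp only [Set.mem_preimage, Set.mem_ofPred_eq]
        convert hs using 2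
        module
      · convert Set.finite_empty (α := ℝ)
        ext s; simp [hj]
  obtain ⟨s, hs⟩ := hfin.infinite_compl.nonempty
  simp only [Set.mem_compl_iff, Set.mem_iUnion, not_exists, Set.mem_ofPred_eq, not_or,
    not_and, not_not] at hs
  have hlt : c q < c (q + s • (q' - q)) := by
    apply Finset.card_lt_card
    rw [Finset.ssubset_iff_of_subset]
    · exact ⟨k, by simpa using (hs k).2 rfl, by simpa using hkq⟩
    · intro j hj
      simp only [Finset.mem_filter, Finset.mem_univ, true_and] at hj ⊢
      exact (hs j).1 hj
  exact absurd (hq (q + s • (q' - q))) (by omega)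

lemma indep_line {Q ι W : Type*} [AddCommGroup Q] [Module ℝ Q] [Finite ι]
    [AddCommGroup W] [Module ℝ W] (f : ι → Q → W)
    (hf : ∀ i q q' (s : ℝ), f i (q + s • (q' - q)) = f i q + s • (f i q' - f i q))
    (q q' : Q) (h : LinearIndependent ℝ (fun i => f i q)) :
    {s : ℝ | ¬ LinearIndependent ℝ (fun i => f i (q + s • (q' - q)))}.Finite := by
  have := Fintype.ofFinite ι
  simp only [hf]
  exact line_indep_finite _ (fun i => f i q' - f i q) h

end genericity

abbrev UU (d : ℕ) := (Fin d → ℝ) × ℝ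
abbrev Cfg (V : Type*) (d : ℕ) := (V → Fin d → ℝ) × (V → V → ℝ)

set_option linter.unusedSectionVars false

section defs
variable {V : Type*} [DecidableEq V] {d : ℕ}

def wv (q : Cfg V d) (x y : V) : UU d := (q.1 x - q.1 y, q.2 x y - q.2 y x)

def ev (d : ℕ) (x y : V) : UU d →ₗ[ℝ] (V → UU d) :=
  LinearMap.single ℝ (fun _ => UU d) x - LinearMap.single ℝ (fun _ => UU d) y

def nu (q : Cfg V d) (e : V × V) : V → UU d := ev d e.1 e.2 (wv q e.1 e.2)

lemma ev_swap (x y : V) (u : UU d) : ev d x y u = - ev d y x u := by simp [ev]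

lemma wv_swap (q : Cfg V d) (x y : V) : wv q x y = - wv q y x := by simp [wv]

lemma nu_swap (q : Cfg V d) (x y : V) : nu q (x, y) = nu q (y, x) := by
  simp only [nu]; rw [ev_swap, wv_swap]; simp

structure Gen (q : Cfg V d) : Prop where
  rank : ∀ (F : Set (V × V)) (q' : Cfg V d),
    Module.finrank ℝ (Submodule.span ℝ (nu q' '' F)) ≤
      Module.finrank ℝ (Submodule.span ℝ (nu q '' F))
  aff : ∀ N : Finset V, N.card ≤ d + 1 →
    LinearIndependent ℝ (fun z : N => ((q.1 z, 1) : UU d))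
  star : ∀ (v : V) (N : Finset V), v ∉ N → N.card ≤ d + 1 →
    LinearIndependent ℝ (fun z : N => wv q v z)

lemma exists_simplex (N : Finset V) (hN : N.card ≤ d + 1) :
    ∃ f : V → UU d, LinearIndependent ℝ (fun z : N => f z) := by
  have h : Module.finrank ℝ (UU d) = d + 1 := by simp
  let b := Module.finBasisOfFinrankEq ℝ (UU d) h
  have e : N ↪ Fin (d + 1) := by
    have : Nonempty (N ↪ Fin (d+1)) := by
      rw [Function.Embedding.nonempty_iff_card_le]; simpa using hN
    exact this.some
  refine ⟨fun z => if hz : z ∈ N then b (e ⟨z, hz⟩) else 0, ?_⟩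
  have := b.linearIndependent.comp e e.injective
  convert this using 2 with z
  simp

lemma exists_gen [Fintype V] (d : ℕ) : ∃ q : Cfg V d, Gen q := by
  classical
  let P : (Finset (V × V) ⊕ Finset V ⊕ (V × Finset V)) → Cfg V d → Prop := fun k q =>
    match k with
    | .inl F => LinearIndependent ℝ (fun e : F => nu q e)
    | .inr (.inl N) => LinearIndependent ℝ (fun z : N => ((q.1 z, 1) : UU d))
    | .inr (.inr (v, N)) => LinearIndependent ℝ (fun z : N => wv q v z)
  have hP : ∀ k q q', P k q → {s : ℝ | ¬ P k (q + s • (q' - q))}.Finite := by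
    have hw : ∀ (x y : V) (q q' : Cfg V d) (s : ℝ), wv (q + s • (q' - q)) x y =
        wv q x y + s • (wv q' x y - wv q x y) := by
      intro x y q q' s
      simp only [wv, Prod.fst_add, Prod.snd_add, Prod.smul_fst, Prod.smul_snd, Prod.fst_sub,
        Prod.snd_sub, Pi.add_apply, Pi.smul_apply, Pi.sub_apply]
      ext
      · simp; ring
      · simp; ring
    rintro (F | N | ⟨v, N⟩) q q' h
    · refine indep_line (fun (e : F) (q : Cfg V d) => nu q e) ?_ q q' h
      intro e q q' s
      simp only [nu, hw, map_add, map_smul, map_sub]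
    · refine indep_line (fun (z : N) (q : Cfg V d) => ((q.1 z, 1) : UU d)) ?_ q q' h
      intro e q q' s
      ext <;> simp
    · refine indep_line (fun (z : N) (q : Cfg V d) => wv q v z) ?_ q q' h
      intro e q q' s
      simp only [hw]
  obtain ⟨q, hq⟩ := exists_generic P hP
  refine ⟨q, ?_, ?_, ?_⟩
  · intro F q'
    rcases F.eq_empty_or_nonempty with rfl | ⟨e0, -⟩
    · rw [Set.image_empty, Set.image_empty]
    have : Nonempty (V × V) := ⟨e0⟩
    obtain ⟨S, hSF, hspan, hS⟩ := exists_linearIndependent ℝ (nu q' '' F)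
    have hSF' : ∀ s, s ∈ S → ∃ e, e ∈ F ∧ nu q' e = s := fun s hs => hSF hs
    choose! g hg using hSF'
    let T : Finset (V × V) := (Set.toFinite (g '' S)).toFinset
    have hT : P (.inl T) q' := by
      change LinearIndependent ℝ (fun e : T => nu q' e)
      have hm : ∀ e : T, nu q' e ∈ S := by
        rintro ⟨e, he⟩
        obtain ⟨s, hs, rfl⟩ := (Set.Finite.mem_toFinset _).1 he
        simpa [(hg s hs).2] using hs
      refine hS.comp (fun e : T => (⟨nu q' e, hm e⟩ : S)) ?_
      rintro ⟨e, he⟩ ⟨e', he'⟩ hee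
      obtain ⟨s, hs, rfl⟩ := (Set.Finite.mem_toFinset _).1 he
      obtain ⟨s', hs', rfl⟩ := (Set.Finite.mem_toFinset _).1 he'
      have : s = s' := by simpa [(hg s hs).2, (hg s' hs').2] using hee
      subst this; rfl
    have hTq : LinearIndependent ℝ (fun e : T => nu q e) := hq (.inl T) q' hT
    have hT' : LinearIndependent ℝ (fun e : T => nu q' e) := hT
    have h1 : Submodule.span ℝ (nu q' '' F) ≤
        Submodule.span ℝ (Set.range (fun e : T => nu q' e)) := by
      rw [← hspan]
      apply Submodule.span_mono
      intro s hs
      exact ⟨⟨g s, (Set.Finite.mem_toFinset _).2 ⟨s, hs, rfl⟩⟩, (hg s hs).2⟩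
    have h2 : Submodule.span ℝ (Set.range (fun e : T => nu q e)) ≤
        Submodule.span ℝ (nu q '' F) := by
      apply Submodule.span_mono
      rintro _ ⟨⟨e, he⟩, rfl⟩
      obtain ⟨s, hs, rfl⟩ := (Set.Finite.mem_toFinset _).1 he
      exact ⟨g s, (hg s hs).1, rfl⟩
    have h3 := Submodule.finrank_mono h1
    have h4 := Submodule.finrank_mono h2
    rw [finrank_span_eq_card hT'] at h3
    rw [finrank_span_eq_card hTq] at h4
    exact h3.trans h4
  · intro N hN
    rcases N.eq_empty_or_nonempty with rfl | hne
    · exact linearIndependent_empty_type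
    -- simplex points
    have e : N ↪ Option (Fin d) := by
      have : Nonempty (N ↪ Option (Fin d)) := by
        rw [Function.Embedding.nonempty_iff_card_le]; simpa using hN
      exact this.some
    let p : Option (Fin d) → Fin d → ℝ := fun o => o.elim 0 (fun i => Pi.single i 1)
    have hp : LinearIndependent ℝ (fun o => ((p o, 1) : UU d)) := by
      rw [Fintype.linearIndependent_iff]
      intro g hg
      rw [Fintype.sum_option, Prod.ext_iff] at hg
      simp only [Prod.fst_add, Prod.fst_sum, Prod.snd_add, Prod.snd_sum, Prod.smul_fst,
        Prod.smul_snd, p, Option.elim, Prod.fst_zero, Prod.snd_zero, smul_zero, zero_add] at hg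
      have h1 : ∀ i, g (some i) = 0 := by
        intro i
        have := congrFun hg.1 i
        simpa [Finset.sum_apply, Pi.single_apply] using this
      rintro (_ | i)
      · simpa [h1] using hg.2
      · exact h1 i
    refine hq (.inr (.inl N)) (fun z => if hz : z ∈ N then p (e ⟨z, hz⟩) else 0, 0) ?_
    change LinearIndependent ℝ (fun z : N => _)
    have := hp.comp e e.injective
    convert this using 2 with z
    simp
  · intro v N hv hN
    obtain ⟨f, hf⟩ := exists_simplex N hN
    refine hq (.inr (.inr (v, N)))
      (fun z => if z = v then 0 else - (f z).1, fun x y => if x = v then (f y).2 else 0) ?_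
    change LinearIndependent ℝ (fun z : N => _)
    convert hf using 2 with z
    have : (z : V) ≠ v := fun h => hv (h ▸ z.2)
    simp [wv, this]

end defs


section glue

lemma skew_zero {V E : Type*} [AddCommGroup E] [Module ℝ E] (C : Finset V) (p : V → E)
    (m : V → E →ₗ[ℝ] ℝ) (hC : ∀ x ∈ C, ∀ y ∈ C, (m x - m y) (p x - p y) = 0)
    (γ : V → ℝ) (hγ : ∑ c ∈ C, γ c = 0) :
    (∑ c ∈ C, γ c • m c) (∑ c ∈ C, γ c • p c) = 0 := by
  have h1 : ∑ i ∈ C, ∑ k ∈ C, γ i * γ k * ((m i - m k) (p i - p k)) = 0 := by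
    apply Finset.sum_eq_zero
    intro i hi
    apply Finset.sum_eq_zero
    intro k hk
    rw [hC i hi k hk, mul_zero]
  have h2 : (∑ c ∈ C, γ c • m c) (∑ c ∈ C, γ c • p c) =
      ∑ i ∈ C, ∑ k ∈ C, γ i * γ k * m i (p k) := by
    simp only [LinearMap.sum_apply, LinearMap.smul_apply, map_sum, map_smul, smul_eq_mul,
      Finset.mul_sum, mul_assoc]
    try (rw [Finset.sum_comm])
    try (congr! 2; ring)
  have h3 : ∑ i ∈ C, ∑ k ∈ C, γ i * γ k * ((m i - m k) (p i - p k)) =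
      ∑ i ∈ C, ∑ k ∈ C, γ i * γ k * m i (p i) + ∑ i ∈ C, ∑ k ∈ C, γ i * γ k * m k (p k)
      - ∑ i ∈ C, ∑ k ∈ C, γ i * γ k * m i (p k) - ∑ i ∈ C, ∑ k ∈ C, γ i * γ k * m k (p i) := by
    simp only [← Finset.sum_add_distrib, ← Finset.sum_sub_distrib]
    refine Finset.sum_congr rfl fun i _ => Finset.sum_congr rfl fun k _ => ?_
    simp only [LinearMap.sub_apply, map_sub]; ring
  have h4 : ∑ i ∈ C, ∑ k ∈ C, γ i * γ k * m i (p i) = 0 := by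
    apply Finset.sum_eq_zero
    intro i hi
    have : ∀ k, γ i * γ k * m i (p i) = γ k * (γ i * m i (p i)) := fun k => by ring
    simp only [this, ← Finset.sum_mul, hγ, zero_mul]
  have h5 : ∑ i ∈ C, ∑ k ∈ C, γ i * γ k * m k (p k) = 0 := by
    rw [Finset.sum_comm, ← h4]
    refine Finset.sum_congr rfl fun i _ => Finset.sum_congr rfl fun k _ => by ring
  have h6 : ∑ i ∈ C, ∑ k ∈ C, γ i * γ k * m k (p i) =
      ∑ i ∈ C, ∑ k ∈ C, γ i * γ k * m i (p k) := by
    rw [Finset.sum_comm]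
    refine Finset.sum_congr rfl fun i _ => Finset.sum_congr rfl fun k _ => by ring
  rw [h2]; linarith

/-- the interpolated value is compatible with each point of `C` -/
lemma interp_iso {V E : Type*} [DecidableEq V] [AddCommGroup E] [Module ℝ E] (C : Finset V)
    (p : V → E)
    (m : V → E →ₗ[ℝ] ℝ) (hC : ∀ x ∈ C, ∀ y ∈ C, (m x - m y) (p x - p y) = 0)
    (α : V → ℝ) (hα : ∑ c ∈ C, α c = 1) (c : V) (hc : c ∈ C) :
    (∑ c ∈ C, α c • m c - m c) (∑ c ∈ C, α c • p c - p c) = 0 := by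
  have := skew_zero C p m hC (fun x => α x - if x = c then 1 else 0)
    (by simp [Finset.sum_sub_distrib, hα, hc])
  have e1 : ∑ x ∈ C, (α x - if x = c then 1 else 0) • m x = ∑ x ∈ C, α x • m x - m c := by
    have : ∀ x, (α x - if x = c then (1:ℝ) else 0) • m x
        = α x • m x - if x = c then m x else 0 := by
      intro x; split_ifs <;> module
    simp [this, Finset.sum_sub_distrib, hc]
  have e2 : ∑ x ∈ C, (α x - if x = c then 1 else 0) • p x = ∑ x ∈ C, α x • p x - p c := by
    have : ∀ x, (α x - if x = c then (1:ℝ) else 0) • p x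
        = α x • p x - if x = c then p x else 0 := by
      intro x; split_ifs <;> module
    simp [this, Finset.sum_sub_distrib, hc]
  rwa [e1, e2] at this

lemma exists_comb {V : Type*} {d : ℕ} (C : Finset V) (hC : C.card = d + 1) (f : V → UU d)
    (hf : LinearIndependent ℝ (fun z : C => f z)) (u : UU d) :
    ∃ γ : V → ℝ, ∑ c ∈ C, γ c • f c = u := by
  classical
  have h := hf.span_eq_top_of_card_eq_finrank' (by simp [hC])
  have hu : u ∈ Submodule.span ℝ (Set.range fun z : C => f z) := by rw [h]; trivial
  obtain ⟨g, hg⟩ := (Submodule.mem_span_range_iff_exists_fun ℝ).1 hu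
  refine ⟨fun c => if hc : c ∈ C then g ⟨c, hc⟩ else 0, ?_⟩
  rw [← hg, ← Finset.sum_coe_sort C]
  simp

lemma mem_iff_dual {W : Type*} [AddCommGroup W] [Module ℝ W] (S : Submodule ℝ W) (x : W) :
    x ∈ S ↔ ∀ φ : W →ₗ[ℝ] ℝ, (∀ s ∈ S, φ s = 0) → φ x = 0 := by
  constructor
  · intro hx φ h; exact h x hx
  · intro h
    by_contra hx
    obtain ⟨φ, h1, h2⟩ := Submodule.exists_le_ker_of_notMem hx
    exact h1 (h φ h2)

variable {V : Type*} [DecidableEq V] {d : ℕ}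

def Lnk (q : Cfg V d) (S : Submodule ℝ (V → UU d)) (x y : V) : Prop :=
  ev d x y (q.1 x - q.1 y, 0) ∈ S ∧ ev d x y (0, 1) ∈ S

lemma Lnk.refl (q : Cfg V d) (S : Submodule ℝ (V → UU d)) (x : V) : Lnk q S x x := by
  simp [Lnk, ev]

lemma Lnk.symm {q : Cfg V d} {S : Submodule ℝ (V → UU d)} {x y : V} (h : Lnk q S x y) :
    Lnk q S y x := by
  obtain ⟨h1, h2⟩ := h
  constructor
  · rw [ev_swap, ← map_neg]; simpa using h1
  · rw [ev_swap]; exact S.neg_mem h2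

lemma Lnk.nu_mem {q : Cfg V d} {S : Submodule ℝ (V → UU d)} {x y : V} (h : Lnk q S x y) :
    nu q (x, y) ∈ S := by
  have := S.add_mem h.1 (S.smul_mem (q.2 x y - q.2 y x) h.2)
  rw [← map_smul, ← map_add] at this
  simpa [nu, wv] using this

def mm (φ : (V → UU d) →ₗ[ℝ] ℝ) (x : V) : (Fin d → ℝ) →ₗ[ℝ] ℝ :=
  φ ∘ₗ LinearMap.single ℝ (fun _ => UU d) x ∘ₗ LinearMap.inl ℝ (Fin d → ℝ) ℝ

def hh (φ : (V → UU d) →ₗ[ℝ] ℝ) (x : V) : ℝ := φ (Pi.single x ((0, 1) : UU d))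

lemma phi_single (φ : (V → UU d) →ₗ[ℝ] ℝ) (x : V) (e : Fin d → ℝ) (t : ℝ) :
    φ (Pi.single x ((e, t) : UU d)) = mm φ x e + t * hh φ x := by
  have : (Pi.single x ((e, t) : UU d) : V → UU d) =
      (Pi.single x ((e, 0) : UU d) : V → UU d) + t • (Pi.single x ((0, 1) : UU d) : V → UU d) := by
    rw [← Pi.single_smul, ← Pi.single_add]; simp
  rw [this, map_add, map_smul]
  simp [mm, hh]

lemma phi_ev (φ : (V → UU d) →ₗ[ℝ] ℝ) (x y : V) (e : Fin d → ℝ) (t : ℝ) :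
    φ (ev d x y (e, t)) = (mm φ x - mm φ y) e + t * (hh φ x - hh φ y) := by
  simp only [ev, LinearMap.sub_apply, LinearMap.single_apply, map_sub, phi_single]
  ring

lemma lnk_iff (q : Cfg V d) (S : Submodule ℝ (V → UU d)) (x y : V) :
    Lnk q S x y ↔ ∀ φ : (V → UU d) →ₗ[ℝ] ℝ, (∀ s ∈ S, φ s = 0) →
      (mm φ x - mm φ y) (q.1 x - q.1 y) = 0 ∧ hh φ x = hh φ y := by
  rw [Lnk, mem_iff_dual S, mem_iff_dual S, ← forall_and]
  apply forall_congr'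
  intro φ
  rw [← imp_and, phi_ev, phi_ev]
  simp [sub_eq_zero]

/-- key: difference between `m a` and the interpolated value -/
lemma interp_diff {q : Cfg V d} (hq : Gen q) (C : Finset V) (hC : C.card = d + 1)
    (m : V → (Fin d → ℝ) →ₗ[ℝ] ℝ)
    (hm : ∀ x ∈ C, ∀ y ∈ C, (m x - m y) (q.1 x - q.1 y) = 0) (a : V) :
    ∃ α : V → ℝ, ∑ c ∈ C, α c = 1 ∧ ∑ c ∈ C, α c • q.1 c = q.1 a ∧
      (∀ c ∈ C, (m a - ∑ c ∈ C, α c • m c) (q.1 a - q.1 c) = (m a - m c) (q.1 a - q.1 c)) := by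
  obtain ⟨α, hα⟩ := exists_comb C hC (fun z => (q.1 z, 1)) (hq.aff C hC.le) (q.1 a, 1)
  rw [Prod.ext_iff] at hα
  simp only [Prod.fst_sum, Prod.snd_sum, Prod.smul_mk, smul_eq_mul, mul_one] at hα
  refine ⟨α, hα.2, hα.1, ?_⟩
  intro c hc
  have := interp_iso C q.1 m hm α hα.2 c hc
  rw [hα.1] at this
  simp only [LinearMap.sub_apply] at this ⊢
  linarith

lemma eq_zero_of_aff {q : Cfg V d} (hq : Gen q) (C : Finset V) (hC : C.card = d + 1)
    (δ : (Fin d → ℝ) →ₗ[ℝ] ℝ) (a : Fin d → ℝ) (h : ∀ c ∈ C, δ (a - q.1 c) = 0) : δ = 0 := by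
  ext1 i
  generalize LinearMap.single ℝ (fun _ : Fin d => ℝ) i = g
  ext
  simp only [LinearMap.comp_apply]
  generalize g 1 = e
  obtain ⟨γ, hγ⟩ := exists_comb C hC (fun z => (q.1 z, 1)) (hq.aff C hC.le) (e, 0)
  rw [Prod.ext_iff] at hγ
  simp only [Prod.fst_sum, Prod.snd_sum, Prod.smul_mk, smul_eq_mul, mul_one] at hγ
  have : e = - ∑ c ∈ C, γ c • (a - q.1 c) := by
    simp only [smul_sub, Finset.sum_sub_distrib, ← Finset.sum_smul, hγ.2, hγ.1]
    simp
  rw [this, map_neg, map_sum]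
  simp only [map_smul, LinearMap.zero_apply, neg_eq_zero]
  exact Finset.sum_eq_zero fun c hc => by rw [h c hc, smul_zero]

lemma glue {q : Cfg V d} (hq : Gen q) {S : Submodule ℝ (V → UU d)} (C : Finset V)
    (hC : C.card = d + 1) (hCC : ∀ x ∈ C, ∀ y ∈ C, Lnk q S x y) (a b : V)
    (ha : ∀ c ∈ C, Lnk q S a c) (hb : ∀ c ∈ C, Lnk q S b c) : Lnk q S a b := by
  rw [lnk_iff]
  intro φ hφ
  have hm : ∀ x ∈ C, ∀ y ∈ C, (mm φ x - mm φ y) (q.1 x - q.1 y) = 0 :=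
    fun x hx y hy => ((lnk_iff q S x y).1 (hCC x hx y hy) φ hφ).1
  have hma : ∀ c ∈ C, (mm φ a - mm φ c) (q.1 a - q.1 c) = 0 :=
    fun c hc => ((lnk_iff q S a c).1 (ha c hc) φ hφ).1
  have hmb : ∀ c ∈ C, (mm φ b - mm φ c) (q.1 b - q.1 c) = 0 :=
    fun c hc => ((lnk_iff q S b c).1 (hb c hc) φ hφ).1
  obtain ⟨α, hα1, hα2, hα3⟩ := interp_diff hq C hC (mm φ) hm a
  obtain ⟨β, hβ1, hβ2, hβ3⟩ := interp_diff hq C hC (mm φ) hm b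
  have ea := eq_zero_of_aff hq C hC _ (q.1 a) (fun c hc => (hα3 c hc).trans (hma c hc))
  have eb := eq_zero_of_aff hq C hC _ (q.1 b) (fun c hc => (hβ3 c hc).trans (hmb c hc))
  rw [sub_eq_zero] at ea eb
  constructor
  · have := skew_zero C q.1 (mm φ) hm (fun c => α c - β c)
      (by simp [Finset.sum_sub_distrib, hα1, hβ1])
    have e1 : ∑ c ∈ C, (α c - β c) • mm φ c = mm φ a - mm φ b := by
      rw [ea, eb, ← Finset.sum_sub_distrib]
      exact Finset.sum_congr rfl fun c _ => by module
    have e2 : ∑ c ∈ C, (α c - β c) • q.1 c = q.1 a - q.1 b := by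
      rw [← hα2, ← hβ2, ← Finset.sum_sub_distrib]
      exact Finset.sum_congr rfl fun c _ => by module
    rwa [e1, e2] at this
  · obtain ⟨c, hc⟩ : C.Nonempty := by rw [← Finset.card_pos]; omega
    exact ((lnk_iff q S a c).1 (ha c hc) φ hφ).2.trans
      ((lnk_iff q S b c).1 (hb c hc) φ hφ).2.symm

lemma attach {q : Cfg V d} (hq : Gen q) {S : Submodule ℝ (V → UU d)} (C : Finset V)
    (hC : C.card = d + 1) (hCC : ∀ x ∈ C, ∀ y ∈ C, Lnk q S x y) (v : V) (hv : v ∉ C)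
    (ha : ∀ c ∈ C, nu q (v, c) ∈ S) : ∀ c ∈ C, Lnk q S v c := by
  intro c0 hc0
  rw [lnk_iff]
  intro φ hφ
  have hm : ∀ x ∈ C, ∀ y ∈ C, (mm φ x - mm φ y) (q.1 x - q.1 y) = 0 :=
    fun x hx y hy => ((lnk_iff q S x y).1 (hCC x hx y hy) φ hφ).1
  have hhc : ∀ c ∈ C, hh φ c = hh φ c0 :=
    fun c hc => ((lnk_iff q S c c0).1 (hCC c hc c0 hc0) φ hφ).2
  obtain ⟨α, hα1, hα2, hα3⟩ := interp_diff hq C hC (mm φ) hm v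
  set δ := mm φ v - ∑ c ∈ C, α c • mm φ c with hδ
  let ψ : UU d →ₗ[ℝ] ℝ := LinearMap.coprod δ ((hh φ v - hh φ c0) • LinearMap.id)
  have hψ : ∀ c ∈ C, ψ (wv q v c) = 0 := by
    intro c hc
    have h1 := hφ _ (ha c hc)
    simp only [nu, wv, phi_ev] at h1
    simp only [ψ, wv, LinearMap.coprod_apply, hα3 c hc, LinearMap.smul_apply, LinearMap.id_apply,
      smul_eq_mul]
    rw [hhc c hc] at h1
    linarith
  have hψ0 : ∀ u, ψ u = 0 := by
    intro u
    obtain ⟨γ, hγ⟩ := exists_comb C hC (fun z => wv q v z) (hq.star v C hv hC.le) u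
    rw [← hγ, map_sum]
    exact Finset.sum_eq_zero fun c hc => by rw [map_smul, hψ c hc, smul_zero]
  constructor
  · rw [← hα3 c0 hc0]
    simpa [ψ] using hψ0 (q.1 v - q.1 c0, 0)
  · have := hψ0 (0, 1)
    simp [ψ] at this
    linarith

end glue


set_option linter.unusedSectionVars false

section steps

lemma finrank_split {W U : Type*} [AddCommGroup W] [Module ℝ W] [FiniteDimensional ℝ W]
    [AddCommGroup U] [Module ℝ U] [FiniteDimensional ℝ U] (π : W →ₗ[ℝ] U)
    (A T : Submodule ℝ W) (M : Submodule ℝ U) (hAT : A ≤ T) (hA : A ≤ LinearMap.ker π)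
    (hM : M ≤ T.map π) :
    Module.finrank ℝ A + Module.finrank ℝ M ≤ Module.finrank ℝ T := by
  have h := LinearMap.finrank_range_add_finrank_ker (π.domRestrict T)
  have h1 : LinearMap.range (π.domRestrict T) = T.map π := LinearMap.range_domRestrict T π
  have h2 : Module.finrank ℝ M ≤ Module.finrank ℝ (LinearMap.range (π.domRestrict T)) := by
    rw [h1]; exact Submodule.finrank_mono hM
  have h3 : Module.finrank ℝ A ≤ Module.finrank ℝ (LinearMap.ker (π.domRestrict T)) := by
    rw [← (Submodule.comapSubtypeEquivOfLe hAT).finrank_eq]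
    apply Submodule.finrank_mono
    intro x hx
    have := hA hx
    simpa using this
  omega

lemma finrank_sup_notMem {W : Type*} [AddCommGroup W] [Module ℝ W] [FiniteDimensional ℝ W]
    (A : Submodule ℝ W) (ξ : W) (h : ξ ∉ A) :
    Module.finrank ℝ A + 1 ≤ Module.finrank ℝ (A ⊔ Submodule.span ℝ {ξ} : Submodule ℝ W) := by
  apply Nat.succ_le_of_lt
  apply Submodule.finrank_lt_finrank_of_lt
  refine lt_of_le_of_ne le_sup_left ?_
  intro he
  apply h
  rw [he]
  exact Submodule.mem_sup_right (Submodule.mem_span_singleton_self ξ)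

variable {V : Type*} [DecidableEq V] [Fintype V] {d : ℕ}

def Fset (q : Cfg V d) (S : Submodule ℝ (V → UU d)) (B : Finset V) : Set (V × V) :=
  {e | e.1 ∈ B ∧ e.2 ∈ B ∧ nu q e ∈ S}

noncomputable def rk (q : Cfg V d) (S : Submodule ℝ (V → UU d)) (B : Finset V) : ℕ :=
  Module.finrank ℝ (Submodule.span ℝ (nu q '' Fset q S B))

lemma span_le_S (q : Cfg V d) (S : Submodule ℝ (V → UU d)) (B : Finset V) :
    Submodule.span ℝ (nu q '' Fset q S B) ≤ S := by
  rw [Submodule.span_le]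
  rintro _ ⟨e, he, rfl⟩
  exact he.2.2

lemma proj_ev (v x y : V) (hx : x ≠ v) (hy : y ≠ v) (u : UU d) : ev d x y u v = 0 := by
  simp [ev, hx.symm, hy.symm]

lemma proj_ev_self (v z : V) (hz : z ≠ v) (u : UU d) : ev d v z u v = u := by
  simp [ev, hz.symm]

lemma step0 {q : Cfg V d} (hq : Gen q) (S : Submodule ℝ (V → UU d)) (B : Finset V) (v : V)
    (hv : v ∉ B) (N : Finset V) (hN : N ⊆ B) (hc : N.card ≤ d + 1)
    (hS : ∀ z ∈ N, nu q (v, z) ∈ S) :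
    rk q S B + N.card ≤ rk q S (insert v B) := by
  have hvN : v ∉ N := fun h => hv (hN h)
  have hli := hq.star v N hvN hc
  have := finrank_split (LinearMap.proj v : (V → UU d) →ₗ[ℝ] UU d)
    (Submodule.span ℝ (nu q '' Fset q S B)) (Submodule.span ℝ (nu q '' Fset q S (insert v B)))
    (Submodule.span ℝ (Set.range fun z : N => wv q v z)) ?_ ?_ ?_
  · rw [finrank_span_eq_card hli] at this
    simpa [rk] using this
  · apply Submodule.span_mono
    apply Set.image_mono
    rintro e ⟨h1, h2, h3⟩
    exact ⟨Finset.mem_insert_of_mem h1, Finset.mem_insert_of_mem h2, h3⟩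
  · rw [Submodule.span_le]
    rintro _ ⟨e, ⟨h1, h2, h3⟩, rfl⟩
    have e1 : e.1 ≠ v := fun h => hv (h ▸ h1)
    have e2 : e.2 ≠ v := fun h => hv (h ▸ h2)
    simpa [nu] using proj_ev v e.1 e.2 e1 e2 _
  · rw [Submodule.span_le]
    rintro _ ⟨z, rfl⟩
    have hz : (z : V) ≠ v := fun h => hvN (h ▸ z.2)
    refine ⟨nu q (v, z), Submodule.subset_span ⟨(v, z), ⟨?_, ?_, hS z z.2⟩, rfl⟩, ?_⟩
    · simp
    · exact Finset.mem_insert_of_mem (hN z.2)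
    · simpa [nu] using proj_ev_self v (z : V) hz _

lemma step1 {q : Cfg V d} (hd : 0 < d) (hq : Gen q) (S : Submodule ℝ (V → UU d)) (B : Finset V)
    (v : V) (hv : v ∉ B) (N : Finset V) (hN : N ⊆ B) (hc : d + 2 ≤ N.card)
    (hS : ∀ z ∈ N, nu q (v, z) ∈ S) (x y : V) (hx : x ∈ N) (hy : y ∈ N)
    (hxy : ¬ Lnk q S x y) :
    rk q S B + (d + 2) ≤ rk q S (insert v B) := by
  have hvN : v ∉ N := fun h => hv (hN h)
  have hxy' : x ≠ y := by rintro rfl; exact hxy (Lnk.refl q S x)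
  have hxv : x ≠ v := fun h => hvN (h ▸ hx)
  have hyv : y ≠ v := fun h => hvN (h ▸ hy)
  -- choose `f`
  obtain ⟨f, hf⟩ : ∃ f : (Fin d → ℝ) →ₗ[ℝ] ℝ,
      ev d x y (q.1 x - q.1 y, f (q.1 x - q.1 y)) ∉ S := by
    by_cases h1 : ev d x y (q.1 x - q.1 y, 0) ∈ S
    · have h2 : ev d x y (0, 1) ∉ S := fun h2 => hxy ⟨h1, h2⟩
      have hu : q.1 x - q.1 y ≠ 0 := by
        intro h0
        have hli := hq.aff {x, y} (by rw [Finset.card_pair hxy']; omega)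
        have hinj := hli.injective
        have := @hinj ⟨x, by simp⟩ ⟨y, by simp⟩ (by simpa [sub_eq_zero] using h0)
        exact hxy' (by simpa using this)
      obtain ⟨f, hf, -⟩ := Submodule.exists_le_ker_of_notMem
        (p := (⊥ : Submodule ℝ (Fin d → ℝ))) (v := q.1 x - q.1 y) (by simpa using hu)
      refine ⟨f, fun h3 => h2 ?_⟩
      have h4 := S.smul_mem (f (q.1 x - q.1 y))⁻¹ (S.sub_mem h3 h1)
      rw [← map_sub, ← map_smul] at h4
      have e5 : (f (q.1 x - q.1 y))⁻¹ • (((q.1 x - q.1 y, f (q.1 x - q.1 y)) : UU d)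
          - (q.1 x - q.1 y, 0)) = (0, 1) := by
        rw [Prod.mk_sub_mk, sub_self, sub_zero, Prod.smul_mk, smul_zero, smul_eq_mul,
          inv_mul_cancel₀ hf]
      rwa [e5] at h4
    · exact ⟨0, by simpa using h1⟩
  obtain ⟨zd, hzdN, hzdx, hzdy⟩ : ∃ zd ∈ N, zd ≠ x ∧ zd ≠ y := by
    have : ((N.erase x).erase y).Nonempty := by
      rw [← Finset.card_pos, Finset.card_erase_of_mem, Finset.card_erase_of_mem hx]
      · omega
      · simp [hy, hxy'.symm]
    obtain ⟨z, hz⟩ := this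
    simp only [Finset.mem_erase] at hz
    exact ⟨z, hz.2.2, hz.2.1, hz.1⟩
  obtain ⟨C, hCN, hC⟩ : ∃ C ⊆ N.erase zd, C.card = d + 1 :=
    Finset.exists_subset_card_eq (by rw [Finset.card_erase_of_mem hzdN]; omega)
  set mid : Fin d → ℝ := (1/2 : ℝ) • (q.1 x + q.1 y) with hmid
  let τ : V → ℝ := fun z => f (mid - q.1 z) + if z = zd then 1 else 0
  let q' : Cfg V d := (Function.update q.1 v mid,
    fun a b => if a = v then τ b else if b = v then 0 else q.2 a b)
  have hq'B : ∀ a b, a ≠ v → b ≠ v → nu q' (a, b) = nu q (a, b) := by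
    intro a b ha hb
    simp [nu, wv, q', ha, hb]
  have hq'v : ∀ z, z ≠ v → wv q' v z = (mid - q.1 z, τ z) := by
    intro z hz
    simp [wv, q', hz]
  refine le_trans ?_ (hq.rank (Fset q S (insert v B)) q')
  set T := Submodule.span ℝ (nu q' '' Fset q S (insert v B)) with hT
  have hTv : ∀ z ∈ N, nu q' (v, z) ∈ T := by
    intro z hz
    refine Submodule.subset_span ⟨(v, z), ⟨by simp, Finset.mem_insert_of_mem (hN hz), hS z hz⟩, rfl⟩
  set ξ := ev d x y (q.1 x - q.1 y, f (q.1 x - q.1 y)) with hξ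
  have hξT : ξ ∈ T := by
    have h1 := T.add_mem (hTv x hx) (hTv y hy)
    have h2 := T.smul_mem 2 h1
    convert h2 using 1
    simp only [nu, hq'v x hxv, hq'v y hyv, τ, hzdx.symm, hzdy.symm, if_false, add_zero]
    have e1 : mid - q.1 x = -((1/2 : ℝ) • (q.1 x - q.1 y)) := by rw [hmid]; module
    have e2 : mid - q.1 y = (1/2 : ℝ) • (q.1 x - q.1 y) := by rw [hmid]; module
    rw [e1, e2, map_neg, map_smul, hξ]
    generalize q.1 x - q.1 y = u
    have e3 : ((-((1/2 : ℝ) • u), -((1/2 : ℝ) • f u)) : UU d) = -((1/2 : ℝ) • (u, f u)) := rfl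
    have e4 : (((1/2 : ℝ) • u, (1/2 : ℝ) • f u) : UU d) = (1/2 : ℝ) • (u, f u) := rfl
    rw [e3, e4, map_neg, map_smul, map_smul]
    simp only [ev, LinearMap.sub_apply]
    module
  have hξA : ξ ∉ Submodule.span ℝ (nu q '' Fset q S B) := fun h => hf (span_le_S q S B h)
  have hA := finrank_sup_notMem _ ξ hξA
  have := finrank_split (LinearMap.proj v : (V → UU d) →ₗ[ℝ] UU d)
    (Submodule.span ℝ (nu q '' Fset q S B) ⊔ Submodule.span ℝ {ξ}) T ⊤ ?_ ?_ ?_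
  · rw [finrank_top] at this
    have h5 : Module.finrank ℝ (UU d) = d + 1 := by simp
    rw [h5] at this
    unfold rk
    omega
  · refine sup_le ?_ ?_
    · rw [Submodule.span_le]
      rintro _ ⟨e, ⟨h1, h2, h3⟩, rfl⟩
      have e1 : e.1 ≠ v := fun h => hv (h ▸ h1)
      have e2 : e.2 ≠ v := fun h => hv (h ▸ h2)
      have := hq'B e.1 e.2 e1 e2
      rw [Prod.mk.eta] at this
      rw [← this]
      exact Submodule.subset_span
        ⟨e, ⟨Finset.mem_insert_of_mem h1, Finset.mem_insert_of_mem h2, h3⟩, rfl⟩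
    · rw [Submodule.span_singleton_le_iff_mem]; exact hξT
  · refine sup_le ?_ ?_
    · rw [Submodule.span_le]
      rintro _ ⟨e, ⟨h1, h2, h3⟩, rfl⟩
      have e1 : e.1 ≠ v := fun h => hv (h ▸ h1)
      have e2 : e.2 ≠ v := fun h => hv (h ▸ h2)
      simpa [nu] using proj_ev v e.1 e.2 e1 e2 _
    · rw [Submodule.span_singleton_le_iff_mem]
      simpa using proj_ev v x y hxv hyv _
  · by_contra hne
    have hlt : Submodule.map (LinearMap.proj v : (V → UU d) →ₗ[ℝ] UU d) T < ⊤ :=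
      lt_top_iff_ne_top.2 fun h => hne h.ge
    obtain ⟨ψ, hψ0, hψ⟩ := Submodule.exists_le_ker_of_lt_top _ hlt
    have hψz : ∀ z ∈ N, ψ (mid - q.1 z, τ z) = 0 := by
      intro z hz
      have hzv : z ≠ v := fun h => hvN (h ▸ hz)
      have := hψ ⟨nu q' (v, z), hTv z hz, rfl⟩
      simp only [nu, LinearMap.proj_apply, proj_ev_self v z hzv, hq'v z hzv] at this
      exact this
    set k := ψ (0, 1) with hk
    let δ : (Fin d → ℝ) →ₗ[ℝ] ℝ := ψ ∘ₗ LinearMap.inl ℝ (Fin d → ℝ) ℝ + k • f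
    have hsplit : ∀ e t, ψ (e, t) = ψ (e, 0) + t * k := by
      intro e t
      have : ((e, t) : UU d) = (e, 0) + t • (0, 1) := by simp
      rw [this, map_add, map_smul, smul_eq_mul]
    have hδz : ∀ z ∈ N, δ (mid - q.1 z) + (if z = zd then k else 0) = 0 := by
      intro z hz
      have := hψz z hz
      rw [hsplit] at this
      simp only [δ, LinearMap.add_apply, LinearMap.comp_apply, LinearMap.inl_apply,
        LinearMap.smul_apply, smul_eq_mul]
      simp only [τ] at this
      split_ifs at this ⊢ <;> linarith
    have hδ0 : δ = 0 := by
      refine eq_zero_of_aff hq C hC δ mid ?_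
      intro c hc
      have hc' := Finset.mem_erase.1 (hCN hc)
      simpa [hc'.1] using hδz c hc'.2
    have hk0 : k = 0 := by
      have := hδz zd hzdN
      simpa [hδ0] using this
    apply hψ0
    apply LinearMap.ext
    rintro ⟨e, t⟩
    rw [hsplit, hk0]
    have := congrArg (fun g => g e) hδ0
    simpa [δ, hk0] using this

end steps


set_option linter.unusedSectionVars false

section ordering
open Finset

variable {V : Type*} [DecidableEq V] [Fintype V]

def posn (o : V → ℕ) (K : Finset V) (u : V) : ℕ := (K.filter (fun w => o w < o u)).card

lemma posn_swap (o : V → ℕ) (K : Finset V) (u v : V) (hu : u ∈ K) (hv : v ∈ K) :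
    posn (fun w => o (Equiv.swap u v w)) K u = posn o K v := by
  unfold posn
  have hK : ∀ w ∈ K, Equiv.swap u v w ∈ K := by
    intro w hw
    rw [Equiv.swap_apply_def]
    split_ifs <;> assumption
  refine Finset.card_bij (fun w _ => Equiv.swap u v w) ?_ ?_ ?_
  · intro w hw
    simp only [mem_filter, Equiv.swap_apply_left] at hw ⊢
    exact ⟨hK w hw.1, hw.2⟩
  · intro a _ b _ h
    exact (Equiv.swap u v).injective h
  · intro w hw
    simp only [mem_filter] at hw
    refine ⟨Equiv.swap u v w, ?_, by simp⟩
    simp only [mem_filter, Equiv.swap_apply_left, Equiv.swap_apply_self]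
    exact ⟨hK w hw.1, hw.2⟩

lemma sum_posn_le (o : V → ℕ) (ho : Function.Injective o) (K : Finset V) (i : ℕ) :
    ∑ u ∈ K, (if posn o K u ≤ i then 1 else 0) ≤ i + 1 := by
  rw [← Finset.card_filter]
  have : ((K.filter (fun u => posn o K u ≤ i))).card ≤ (Finset.range (i + 1)).card := by
    refine Finset.card_le_card_of_injOn (fun u => posn o K u) ?_ ?_
    · intro u hu
      have := (mem_filter.1 (Finset.mem_coe.1 hu)).2
      simp only [coe_range, Set.mem_Iio]; omega
    · have key : ∀ a ∈ K, ∀ b, o a < o b → posn o K a < posn o K b := by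
        intro a ha b hab
        apply Finset.card_lt_card
        rw [Finset.ssubset_iff_of_subset]
        · exact ⟨a, by simp [ha, hab], by simp⟩
        · intro w hw
          simp only [mem_filter] at hw ⊢
          exact ⟨hw.1, hw.2.trans hab⟩
      intro a ha b hb hab
      have ha' := (mem_filter.1 (Finset.mem_coe.1 ha)).1
      have hb' := (mem_filter.1 (Finset.mem_coe.1 hb)).1
      rcases lt_trichotomy (o a) (o b) with h | h | h
      · have := key a ha' b h
        simp only at hab; omega
      · exact ho h
      · have := key b hb' a h
        simp only at hab; omega
  simpa using this

lemma sum_perm_posn (e : V → ℕ) (he : Function.Injective e) (K : Finset V) (v : V) (hv : v ∈ K)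
    (i : ℕ) :
    K.card * ∑ π : Equiv.Perm V, (if posn (fun w => e (π w)) K v ≤ i then 1 else 0) ≤
      Fintype.card (Equiv.Perm V) * (i + 1) := by
  have h1 : ∀ u ∈ K, ∑ π : Equiv.Perm V, (if posn (fun w => e (π w)) K u ≤ i then 1 else 0) =
      ∑ π : Equiv.Perm V, (if posn (fun w => e (π w)) K v ≤ i then 1 else 0) := by
    intro u hu
    rw [← Equiv.sum_comp (Equiv.mulRight (Equiv.swap u v))]
    refine Finset.sum_congr rfl fun π _ => ?_
    have : posn (fun w => e ((Equiv.mulRight (Equiv.swap u v) π) w)) K u =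
      posn (fun w => e (π w)) K v := posn_swap (fun w => e (π w)) K u v hu hv
    simp only [this]
  rw [← smul_eq_mul, ← Finset.sum_const, ← Finset.sum_congr rfl h1, Finset.sum_comm,
    ← smul_eq_mul (Fintype.card _), ← Finset.card_univ, ← Finset.sum_const]
  refine Finset.sum_le_sum fun π _ => ?_
  exact sum_posn_le _ (he.comp π.injective) K i

lemma sum_perm_max (e : V → ℕ) (he : Function.Injective e) (v x y : V) (hvx : v ≠ x)
    (hvy : v ≠ y) (hxy : x ≠ y) :
    Fintype.card (Equiv.Perm V) ≤
      3 * ∑ π : Equiv.Perm V, (if e (π x) < e (π v) ∧ e (π y) < e (π v) then 1 else 0) := by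
  have h1 : ∑ π : Equiv.Perm V, (if e (π v) < e (π x) ∧ e (π y) < e (π x) then 1 else 0) =
      ∑ π : Equiv.Perm V, (if e (π x) < e (π v) ∧ e (π y) < e (π v) then 1 else 0) := by
    rw [← Equiv.sum_comp (Equiv.mulRight (Equiv.swap v x))]
    refine Finset.sum_congr rfl fun π _ => ?_
    simp [Equiv.Perm.mul_apply, Equiv.swap_apply_of_ne_of_ne hvy.symm hxy.symm]
  have h2 : ∑ π : Equiv.Perm V, (if e (π x) < e (π y) ∧ e (π v) < e (π y) then 1 else 0) =
      ∑ π : Equiv.Perm V, (if e (π x) < e (π v) ∧ e (π y) < e (π v) then 1 else 0) := by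
    rw [← Equiv.sum_comp (Equiv.mulRight (Equiv.swap v y))]
    refine Finset.sum_congr rfl fun π _ => ?_
    simp [Equiv.Perm.mul_apply, Equiv.swap_apply_of_ne_of_ne hvx.symm hxy]
  have h3 : Fintype.card (Equiv.Perm V) ≤ ∑ π : Equiv.Perm V,
      ((if e (π x) < e (π v) ∧ e (π y) < e (π v) then 1 else 0) +
      (if e (π v) < e (π x) ∧ e (π y) < e (π x) then 1 else 0) +
      (if e (π x) < e (π y) ∧ e (π v) < e (π y) then 1 else 0)) := by
    rw [← Finset.card_univ, Finset.card_eq_sum_ones]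
    refine Finset.sum_le_sum fun π _ => ?_
    have a1 : e (π v) ≠ e (π x) := fun h => hvx (π.injective (he h))
    have a2 : e (π v) ≠ e (π y) := fun h => hvy (π.injective (he h))
    have a3 : e (π x) ≠ e (π y) := fun h => hxy (π.injective (he h))
    split_ifs <;> omega
  rw [Finset.sum_add_distrib, Finset.sum_add_distrib, h1, h2] at h3
  omega

lemma exists_order (D : ℕ) (R : Finset V) (N : V → Finset V) (x y : V → V)
    (hvN : ∀ v ∈ R, v ∉ N v) (hx : ∀ v ∈ R, x v ∈ N v) (hy : ∀ v ∈ R, y v ∈ N v)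
    (hxy : ∀ v ∈ R, x v ≠ y v)
    (hN : ∀ v ∈ R, 3 * ((D + 1) * (D + 2)) ≤ 2 * ((N v).card + 1)) :
    ∃ o : V → ℕ, Function.Injective o ∧
      ∑ v ∈ R, ∑ i ∈ range (D + 1), (if posn o (N v) v ≤ i then 1 else 0) ≤
      ∑ v ∈ R, (if o (x v) < o v ∧ o (y v) < o v then 1 else 0) := by
  let e : V → ℕ := fun v => (Fintype.equivFin V v : ℕ)
  have he : Function.Injective e := fun a b h =>
    (Fintype.equivFin V).injective (Fin.ext h)
  suffices h : ∑ π : Equiv.Perm V, ∑ v ∈ R, ∑ i ∈ range (D + 1),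
        (if posn (fun w => e (π w)) (N v) v ≤ i then 1 else 0) ≤
      ∑ π : Equiv.Perm V, ∑ v ∈ R,
        (if e (π (x v)) < e (π v) ∧ e (π (y v)) < e (π v) then 1 else 0) by
    obtain ⟨π, -, hπ⟩ := Finset.exists_le_of_sum_le (s := Finset.univ) ⟨1, Finset.mem_univ _⟩ h
    exact ⟨fun w => e (π w), he.comp π.injective, hπ⟩
  rw [Finset.sum_comm, Finset.sum_comm (s := Finset.univ) (t := R)]
  refine Finset.sum_le_sum fun v hv => ?_
  rw [Finset.sum_comm]
  have hvx : v ≠ x v := fun h => hvN v hv (by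
    have := hx v hv; rwa [← h] at this)
  have hvy : v ≠ y v := fun h => hvN v hv (by
    have := hy v hv; rwa [← h] at this)
  have hA := sum_perm_max e he v (x v) (y v) hvx hvy (hxy v hv)
  set A := ∑ π : Equiv.Perm V, (if e (π (x v)) < e (π v) ∧ e (π (y v)) < e (π v) then 1 else 0)
  set T := Fintype.card (Equiv.Perm V)
  have hK : (insert v (N v)).card = (N v).card + 1 := Finset.card_insert_of_notMem (hvN v hv)
  have hpos : ∀ o : V → ℕ, posn o (insert v (N v)) v = posn o (N v) v := by
    intro o
    unfold posn
    rw [Finset.filter_insert]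
    simp
  have hC : ∀ i, ((N v).card + 1) *
      ∑ π : Equiv.Perm V, (if posn (fun w => e (π w)) (N v) v ≤ i then 1 else 0) ≤ T * (i + 1) := by
    intro i
    have := sum_perm_posn e he (insert v (N v)) v (Finset.mem_insert_self _ _) i
    rw [hK] at this
    simpa only [hpos] using this
  have hsum := Finset.sum_le_sum (s := range (D + 1)) fun i _ => hC i
  rw [← Finset.mul_sum, ← Finset.mul_sum] at hsum
  set C := ∑ i ∈ range (D + 1), ∑ π : Equiv.Perm V,
    (if posn (fun w => e (π w)) (N v) v ≤ i then 1 else 0)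
  have hg : 2 * ∑ i ∈ range (D + 1), (i + 1) = (D + 1) * (D + 2) := by
    clear * -
    induction D with
    | zero => simp
    | succ n ih => rw [Finset.sum_range_succ, mul_add, ih]; ring
  have hm := hN v hv
  set m := (N v).card + 1
  set g := ∑ i ∈ range (D + 1), (i + 1)
  rw [← hg] at hm
  have h1 : 3 * (m * C) ≤ 3 * (T * g) := Nat.mul_le_mul_left 3 hsum
  have h2 : T * (3 * g) ≤ T * m := Nat.mul_le_mul_left T (by omega)
  have h3 : T * m ≤ 3 * A * m := Nat.mul_le_mul_right m hA
  have hmpos : 0 < m := by omega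
  have h4 : m * C ≤ m * A := by nlinarith
  exact Nat.le_of_mul_le_mul_left h4 hmpos

end ordering


set_option linter.unusedSectionVars false

section main1
open Finset

variable {V : Type*} [DecidableEq V] [Fintype V] {d : ℕ}

lemma count_le (c n : ℕ) : n ≤ c + ∑ i ∈ range n, (if c ≤ i then 1 else 0) := by
  induction n with
  | zero => simp
  | succ n ih =>
    rw [Finset.sum_range_succ]
    split_ifs with h <;> omega

lemma rk_lower {q : Cfg V d} (hd : 0 < d) (hq : Gen q) (S : Submodule ℝ (V → UU d))
    (o : V → ℕ) (ho : Function.Injective o) (N : V → Finset V) (x y : V → V) (R : Finset V)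
    (hR : ∀ v ∈ R, ∀ z ∈ N v, nu q (v, z) ∈ S ∧ (o z < o v → z ∈ R))
    (hxy : ∀ v ∈ R, x v ∈ N v ∧ y v ∈ N v ∧ ¬ Lnk q S (x v) (y v)) :
    ∑ v ∈ R, (d + 1) + ∑ v ∈ R, (if o (x v) < o v ∧ o (y v) < o v then 1 else 0) ≤
      rk q S R + ∑ v ∈ R, ∑ i ∈ range (d + 2), (if posn o (N v) v ≤ i then 1 else 0) := by
  revert hR hxy
  refine Finset.induction_on_max_value o R ?_ ?_
  · simp
  · intro a s has hmax ih hR hxy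
    have hlt : ∀ z ∈ s, o z < o a := fun z hz =>
      lt_of_le_of_ne (hmax z hz) fun h => has (ho h ▸ hz)
    have ih' := ih (fun v hv z hz => ⟨(hR v (mem_insert_of_mem hv) z hz).1, fun h => by
      rcases mem_insert.1 ((hR v (mem_insert_of_mem hv) z hz).2 h) with rfl | h'
      · exact absurd (hlt v hv) (by omega)
      · exact h'⟩) (fun v hv => hxy v (mem_insert_of_mem hv))
    rw [sum_insert has, sum_insert has, sum_insert has]
    set N' := (N a).filter (fun w => o w < o a) with hN'
    have hposn : posn o (N a) a = N'.card := rfl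
    have hN's : N' ⊆ s := by
      intro z hz
      rw [hN', mem_filter] at hz
      rcases mem_insert.1 ((hR a (mem_insert_self _ _) z hz.1).2 hz.2) with rfl | h'
      · omega
      · exact h'
    have hN'S : ∀ z ∈ N', nu q (a, z) ∈ S := fun z hz =>
      (hR a (mem_insert_self _ _) z (mem_filter.1 hz).1).1
    have hcount := count_le (posn o (N a) a) (d + 2)
    obtain ⟨hxa, hya, hnl⟩ := hxy a (mem_insert_self _ _)
    rcases Nat.lt_or_ge N'.card (d + 2) with hc | hc
    · have := step0 hq S s a has N' hN's (by omega) hN'S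
      rw [hposn] at hcount ⊢
      split_ifs <;> omega
    · by_cases hb : o (x a) < o a ∧ o (y a) < o a
      · have := step1 hd hq S s a has N' hN's hc hN'S (x a) (y a)
          (mem_filter.2 ⟨hxa, hb.1⟩) (mem_filter.2 ⟨hya, hb.2⟩) hnl
        rw [if_pos hb]
        omega
      · obtain ⟨N'', hN'', hcard⟩ : ∃ C ⊆ N', C.card = d + 1 :=
          Finset.exists_subset_card_eq (by omega)
        have := step0 hq S s a has N'' (hN''.trans hN's) hcard.le
          (fun z hz => hN'S z (hN'' hz))
        rw [if_neg hb]
        omega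

lemma sep {G : SimpleGraph V} {k : ℕ} (hG : KConnected G k) (X P : Set V)
    (hP : ∀ a ∈ P, a ∉ X → ∀ b, G.Adj a b → b ∈ P ∨ b ∈ X) (p w : V) (hp : p ∈ P) (hpX : p ∉ X)
    (hw : w ∉ P) (hwX : w ∉ X) : k ≤ X.ncard := by
  by_contra hlt
  have hc := hG.2 X (Set.toFinite X) (by omega)
  obtain ⟨W⟩ := hc.preconnected ⟨p, hpX⟩ ⟨w, hwX⟩
  have key : ∀ (a b : (Xᶜ : Set V)) (W : (G.induce (Xᶜ : Set V)).Walk a b), a.1 ∈ P → b.1 ∈ P := by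
    intro a b W
    induction W with
    | nil => exact id
    | @cons u v w h _ ih =>
      intro ha
      apply ih
      have h' : G.Adj u.1 v.1 := h
      rcases hP _ ha u.2 _ h' with h1 | h1
      · exact h1
      · exact absurd h1 v.2
  exact hw (key _ _ W hp)

lemma deg_ge {G : SimpleGraph V} {k : ℕ} (hG : KConnected G k) (v : V) :
    k ≤ {z | G.Adj v z}.ncard := by
  by_contra hlt
  have hex : ∃ w, w ∉ ({v} : Set V) ∪ {z | G.Adj v z} := by
    by_contra hall
    push Not at hall
    have h1 : ({v} : Set V) ∪ {z | G.Adj v z} = Set.univ := Set.eq_univ_of_forall hall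
    have h2 := Set.ncard_union_le ({v} : Set V) {z | G.Adj v z}
    rw [h1, Set.ncard_univ, Set.ncard_singleton] at h2
    have := hG.1
    omega
  obtain ⟨w, hw⟩ := hex
  rw [Set.mem_union, not_or] at hw
  refine hlt (sep hG {z | G.Adj v z} {v} ?_ v w rfl ?_ hw.1 hw.2)
  · rintro a rfl _ b hb; exact Or.inr hb
  · exact G.loopless.irrefl v

lemma exists_sub_of_ncard (X : Set V) (n : ℕ) (h : n ≤ X.ncard) :
    ∃ C : Finset V, C.card = n ∧ ∀ c ∈ C, c ∈ X := by
  classical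
  rw [Set.ncard_eq_toFinset_card X (Set.toFinite X)] at h
  obtain ⟨C, hC, hc⟩ := Finset.exists_subset_card_eq h
  exact ⟨C, hc, fun c hcC => by simpa using hC hcC⟩

lemma all_linked (hd : 0 < d) {q : Cfg V d} (hq : Gen q) (G : SimpleGraph V)
    (hG : KConnected G (20 * (d * (d + 1)))) (S : Submodule ℝ (V → UU d))
    (hS : S = Submodule.span ℝ (nu q '' {e | G.Adj e.1 e.2})) (x₀ y₀ : V) : Lnk q S x₀ y₀ := by
  classical
  by_contra hcon
  set k := 20 * (d * (d + 1)) with hk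
  have hk1 : d + 3 ≤ k := by rw [hk]; nlinarith
  have hk2 : 3 * ((d + 1 + 1) * (d + 1 + 2)) ≤ 2 * k := by rw [hk]; nlinarith
  let A : V → V → Prop := fun x y => x ≠ y ∧ nu q (x, y) ∈ S
  have hAsymm : ∀ x y, A x y → A y x := fun x y h => ⟨h.1.symm, by rw [nu_swap]; exact h.2⟩
  have hGA : ∀ x y, G.Adj x y → A x y := fun x y h =>
    ⟨h.ne, by rw [hS]; exact Submodule.subset_span ⟨(x, y), h, rfl⟩⟩
  have hLA : ∀ x y, x ≠ y → Lnk q S x y → A x y := fun x y h1 h2 => ⟨h1, h2.nu_mem⟩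
  let Simp : V → Prop := fun v => ∀ a b, A v a → A v b → Lnk q S a b
  -- simplicial vertices are linked to their neighbours
  have hsl : ∀ s, Simp s → ∀ a, A s a → Lnk q S s a := by
    intro s hs a ha
    obtain ⟨C, hC, hCG⟩ := exists_sub_of_ncard {z | G.Adj s z} (d + 1)
      (le_trans (by omega) (deg_ge hG s))
    have hCA : ∀ c ∈ C, A s c := fun c hc => hGA _ _ (hCG c hc)
    have hCC : ∀ x ∈ C, ∀ y ∈ C, Lnk q S x y := fun x hx y hy => hs x y (hCA x hx) (hCA y hy)
    have hat := attach hq C hC hCC s (fun h => (hCA s h).1 rfl) (fun c hc => (hCA c hc).2)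
    exact glue hq C hC hCC s a hat (fun c hc => hs a c ha (hCA c hc))
  have hcl : ∀ s, Simp s → ∀ a b, (A s a ∨ a = s) → (A s b ∨ b = s) → Lnk q S a b := by
    rintro s hs a b (ha | rfl) (hb | rfl)
    · exact hs a b ha hb
    · exact (hsl _ hs a ha).symm
    · exact hsl _ hs b hb
    · exact Lnk.refl q S _
  have hsb : ∀ s, Simp s → k ≤ {r | A s r ∧ ¬ Simp r}.ncard := by
    intro s hs
    obtain ⟨w, hw⟩ : ∃ w, ¬ (A s w ∨ w = s) := by
      by_contra hall
      push Not at hall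
      exact hcon (hcl s hs x₀ y₀ (by have := hall x₀; tauto) (by have := hall y₀; tauto))
    refine sep hG {r | A s r ∧ ¬ Simp r} {b | (A s b ∨ b = s) ∧ Simp b} ?_ s w
      ⟨Or.inr rfl, hs⟩ (fun h => h.2 hs) (fun h => hw h.1) (fun h => hw (Or.inl h.1))
    rintro a ⟨ha, hsa⟩ - b hab
    have hab' := hGA a b hab
    have hb : A s b ∨ b = s := by
      rcases ha with ha | rfl
      · by_cases hbs : b = s
        · exact Or.inr hbs
        · exact Or.inl (hLA s b (Ne.symm hbs) (hsa s b (hAsymm _ _ ha) hab'))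
      · exact Or.inl hab'
    by_cases hsb : Simp b
    · exact Or.inl ⟨hb, hsb⟩
    · rcases hb with hb | rfl
      · exact Or.inr ⟨hb, hsb⟩
      · exact absurd hs hsb
  let N : V → Finset V := fun v => univ.filter (fun z => A v z ∧ ¬ Simp z)
  have hNmem : ∀ v z, z ∈ N v ↔ A v z ∧ ¬ Simp z := fun v z => by simp [N]
  have hNcard : ∀ v, (N v).card = {z | A v z ∧ ¬ Simp z}.ncard := by
    intro v
    rw [← Set.ncard_coe_finset]
    congr 1
    ext z
    simp [N]
  have hvs : ∀ v s, Simp s → A v s → ∀ r, A s r → r ≠ v → A v r := by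
    intro v s hs hvs r hr hrv
    exact hLA v r hrv.symm (hs v r (hAsymm _ _ hvs) hr)
  have hdeg : ∀ v, ¬ Simp v → k ≤ (N v).card + 1 := by
    intro v hv
    by_cases hex : ∃ s, Simp s ∧ A v s
    · obtain ⟨s, hs, hvs'⟩ := hex
      have h1 := hsb s hs
      rw [← hNcard] at h1
      have h2 : (N s).erase v ⊆ N v := by
        intro r hr
        rw [mem_erase, hNmem] at hr
        rw [hNmem]
        exact ⟨hvs v s hs hvs' r hr.2.1 hr.1, hr.2.2⟩
      have h3 := Finset.card_le_card h2
      have h4 := Finset.pred_card_le_card_erase (s := N s) (a := v)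
      omega
    · push Not at hex
      have h1 := deg_ge hG v
      have h2 : {z | G.Adj v z}.ncard ≤ (N v).card := by
        rw [hNcard]
        refine Set.ncard_le_ncard ?_ (Set.toFinite _)
        intro z hz
        exact ⟨hGA v z hz, fun hs => hex z hs (hGA v z hz)⟩
      omega
  have hxy : ∀ v, ¬ Simp v → ∃ x y, x ∈ N v ∧ y ∈ N v ∧ ¬ Lnk q S x y := by
    intro v hv
    by_contra hall
    push Not at hall
    apply hv
    have hvd := hdeg v hv
    obtain ⟨C, hCN, hC⟩ : ∃ C ⊆ N v, C.card = d + 1 := Finset.exists_subset_card_eq (by omega)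
    have hCC : ∀ x ∈ C, ∀ y ∈ C, Lnk q S x y := fun x hx y hy => hall x y (hCN hx) (hCN hy)
    have claim : ∀ a, A v a → ∀ c ∈ C, Lnk q S a c := by
      intro a ha c hc
      by_cases hsa : Simp a
      · have h1 := hsb a hsa
        rw [← hNcard] at h1
        have h4 := Finset.pred_card_le_card_erase (s := N a) (a := v)
        obtain ⟨C', hCN', hC'⟩ : ∃ C' ⊆ (N a).erase v, C'.card = d + 1 :=
          Finset.exists_subset_card_eq (by omega)
        have hC'a : ∀ c' ∈ C', A a c' ∧ c' ∈ N v := by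
          intro c' hc'
          have := hCN' hc'
          rw [mem_erase, hNmem] at this
          refine ⟨this.2.1, ?_⟩
          rw [hNmem]
          exact ⟨hvs v a hsa ha c' this.2.1 this.1, this.2.2⟩
        refine glue hq C' hC' ?_ a c ?_ ?_
        · exact fun x hx y hy => hall x y (hC'a x hx).2 (hC'a y hy).2
        · exact fun x hx => hsl a hsa x (hC'a x hx).1
        · exact fun x hx => hall c x (hCN hc) (hC'a x hx).2
      · exact hall a c ((hNmem _ _).2 ⟨ha, hsa⟩) (hCN hc)
    intro a b ha hb
    exact glue hq C hC hCC a b (claim a ha) (claim b hb)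
  choose! x y hx hy hnl using hxy
  let R : Finset V := univ.filter (fun v => ¬ Simp v)
  have hRmem : ∀ v, v ∈ R ↔ ¬ Simp v := fun v => by simp [R]
  obtain ⟨o, ho, hsum⟩ := exists_order (d + 1) R N x y
    (fun v _ h => ((hNmem v v).1 h).1.1 rfl)
    (fun v hv => hx v ((hRmem v).1 hv)) (fun v hv => hy v ((hRmem v).1 hv))
    (fun v hv h => hnl v ((hRmem v).1 hv) (by rw [h]; exact Lnk.refl q S _))
    (fun v hv => by have := hdeg v ((hRmem v).1 hv); omega)
  have hlow := rk_lower hd hq S o ho N x y R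
    (fun v hv z hz => ⟨((hNmem v z).1 hz).1.2, fun _ => (hRmem z).2 ((hNmem v z).1 hz).2⟩)
    (fun v hv => ⟨hx v ((hRmem v).1 hv), hy v ((hRmem v).1 hv), hnl v ((hRmem v).1 hv)⟩)
  have hR0 : R.card * (d + 1) ≤ rk q S R := by
    rw [sum_const, smul_eq_mul] at hlow
    simp only [Nat.add_assoc, Nat.reduceAdd] at hsum hlow ⊢
    omega
  have hT : ∀ T : Finset V, (∀ s ∈ T, Simp s) → (R.card + T.card) * (d + 1) ≤ rk q S (T ∪ R) := by
    intro T
    induction T using Finset.induction_on with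
    | empty => intro _; simpa using hR0
    | insert s T hsT ih =>
      intro hs
      have ih' := ih fun t ht => hs t (mem_insert_of_mem ht)
      have hss := hs s (mem_insert_self _ _)
      have h1 := hsb s hss
      rw [← hNcard] at h1
      obtain ⟨C, hCN, hC⟩ : ∃ C ⊆ N s, C.card = d + 1 := Finset.exists_subset_card_eq (by omega)
      have := step0 hq S (T ∪ R) s (by
          rw [mem_union, hRmem]; tauto) C
        (fun z hz => mem_union_right _ ((hRmem z).2 ((hNmem s z).1 (hCN hz)).2)) hC.le
        (fun z hz => ((hNmem s z).1 (hCN hz)).1.2)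
      rw [insert_union, card_insert_of_notMem hsT]
      rw [hC] at this
      linarith
  have hfin := hT (univ.filter Simp) (by simp)
  have hcard : R.card + (univ.filter Simp).card = Fintype.card V := by
    rw [add_comm]
    simpa [R] using Finset.card_filter_add_card_filter_not (s := (univ : Finset V)) Simp
  rw [hcard] at hfin
  have hle : rk q S (univ.filter Simp ∪ R) ≤ Module.finrank ℝ S :=
    Submodule.finrank_mono (span_le_S q S _)
  have hW : Module.finrank ℝ (V → UU d) = Fintype.card V * (d + 1) := by
    rw [Module.finrank_pi_fintype]; simp
  have htop : S = ⊤ := Submodule.eq_top_of_finrank_eq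
    (le_antisymm (Submodule.finrank_le S) (by rw [hW]; omega))
  let ψ : (V → UU d) →ₗ[ℝ] ℝ := ∑ v : V, LinearMap.snd ℝ (Fin d → ℝ) ℝ ∘ₗ LinearMap.proj v
  have hψ : S ≤ LinearMap.ker ψ := by
    rw [hS, Submodule.span_le]
    rintro _ ⟨e, he, rfl⟩
    simp [ψ, nu, ev, LinearMap.sum_apply, Pi.single_apply, apply_ite Prod.snd]
  have h1 : (Pi.single x₀ ((0, 1) : UU d) : V → UU d) ∈ S := by rw [htop]; trivial
  have h2 := hψ h1
  simp [ψ, LinearMap.sum_apply, Pi.single_apply, apply_ite Prod.snd] at h2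

end main1

section extraction
open Finset

lemma finrank_swap {W : Type*} [AddCommGroup W] [Module ℝ W] [FiniteDimensional ℝ W]
    (X : Submodule ℝ W) (a b : W) :
    Module.finrank ℝ ↥(X ⊔ Submodule.span ℝ {a + b}) ≤ Module.finrank ℝ ↥(X ⊔ Submodule.span ℝ {a}) ∨
    Module.finrank ℝ ↥(X ⊔ Submodule.span ℝ {a + b}) ≤ Module.finrank ℝ ↥(X ⊔ Submodule.span ℝ {b}) := by
  by_cases ha : a ∈ X
  · right
    apply Submodule.finrank_mono
    refine sup_le le_sup_left ?_
    rw [Submodule.span_singleton_le_iff_mem]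
    exact Submodule.add_mem _ (Submodule.mem_sup_left ha)
      (Submodule.mem_sup_right (Submodule.mem_span_singleton_self b))
  · left
    rw [Submodule.finrank_sup_span_singleton ha]
    by_cases h : a + b ∈ X
    · rw [sup_eq_left.2 ((Submodule.span_singleton_le_iff_mem _ _).2 h)]
      omega
    · rw [Submodule.finrank_sup_span_singleton h]

lemma extract {ι W : Type*} [DecidableEq ι] [AddCommGroup W] [Module ℝ W] [FiniteDimensional ℝ W]
    (a b : ι → W) (F : Finset ι) : ∀ W0 : Submodule ℝ W, ∃ c : ι → W, (∀ i, c i = a i ∨ c i = b i) ∧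
      Module.finrank ℝ ↥(W0 ⊔ Submodule.span ℝ ((fun i => a i + b i) '' (F : Set ι))) ≤
      Module.finrank ℝ ↥(W0 ⊔ Submodule.span ℝ (c '' (F : Set ι))) := by
  induction F using Finset.induction_on with
  | empty => exact fun W0 => ⟨a, fun i => Or.inl rfl, by rw [coe_empty, Set.image_empty, Set.image_empty]⟩
  | insert e F he ih =>
    intro W0
    have key : ∃ u, (u = a e ∨ u = b e) ∧
        Module.finrank ℝ ↥((W0 ⊔ Submodule.span ℝ ((fun i => a i + b i) '' (F : Set ι))) ⊔
          Submodule.span ℝ {a e + b e}) ≤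
        Module.finrank ℝ ↥((W0 ⊔ Submodule.span ℝ ((fun i => a i + b i) '' (F : Set ι))) ⊔
          Submodule.span ℝ {u}) := by
      rcases finrank_swap (W0 ⊔ Submodule.span ℝ ((fun i => a i + b i) '' (F : Set ι)))
        (a e) (b e) with h | h
      · exact ⟨_, Or.inl rfl, h⟩
      · exact ⟨_, Or.inr rfl, h⟩
    obtain ⟨u, hu, hle⟩ := key
    obtain ⟨c, hc, hcl⟩ := ih (W0 ⊔ Submodule.span ℝ {u})
    refine ⟨Function.update c e u, ?_, ?_⟩
    · intro i
      by_cases h : i = e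
      · subst h; simpa using hu
      · simpa [h] using hc i
    · have himg : Function.update c e u '' (F : Set ι) = c '' (F : Set ι) := by
        apply Set.image_congr
        intro i hi
        rw [Function.update_of_ne]
        rintro rfl
        exact he hi
      rw [coe_insert, Set.image_insert_eq, Set.image_insert_eq, himg, Submodule.span_insert,
        Submodule.span_insert, Function.update_self]
      calc _ = _ := by rw [sup_comm (Submodule.span ℝ {a e + b e}), ← sup_assoc]
        _ ≤ _ := hle
        _ = _ := by rw [sup_assoc, sup_comm _ (Submodule.span ℝ {u}), ← sup_assoc]
        _ ≤ _ := hcl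
        _ = _ := by rw [sup_assoc]

section fin
variable {V : Type*} [Fintype V] [DecidableEq V] {d : ℕ}

lemma exists_phi (m : V → (Fin d → ℝ) →ₗ[ℝ] ℝ) (h : V → ℝ) :
    ∃ φ : (V → UU d) →ₗ[ℝ] ℝ, mm φ = m ∧ hh φ = h := by
  refine ⟨∑ v, (LinearMap.coprod (m v) (LinearMap.toSpanSingleton ℝ ℝ (h v))) ∘ₗ
    LinearMap.proj v, ?_, ?_⟩
  · funext x
    apply LinearMap.ext
    intro e
    simp only [mm, LinearMap.comp_apply, LinearMap.sum_apply, LinearMap.proj_apply,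
      LinearMap.single_apply, LinearMap.inl_apply]
    rw [Finset.sum_eq_single x]
    · simp
    · intro b _ hb
      rw [Pi.single_eq_of_ne hb]; simp
    · simp
  · funext x
    simp only [hh, LinearMap.comp_apply, LinearMap.sum_apply, LinearMap.proj_apply]
    rw [Finset.sum_eq_single x]
    · simp
    · intro b _ hb
      rw [Pi.single_eq_of_ne hb]; simp
    · simp

lemma colour {q : Cfg V d} {G : SimpleGraph V} {S : Submodule ℝ (V → UU d)}
    (hS : S = Submodule.span ℝ (nu q '' {e | G.Adj e.1 e.2})) (hL : ∀ x y, Lnk q S x y) :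
    ∃ H1 H2 : SimpleGraph V, H1 ≤ G ∧ H2 ≤ G ∧ (∀ x y, H1.Adj x y → ¬ H2.Adj x y) ∧
      ∀ (m : V → (Fin d → ℝ) →ₗ[ℝ] ℝ) (h : V → ℝ),
        (∀ x y, H1.Adj x y → (m x - m y) (q.1 x - q.1 y) = 0) →
        (∀ x y, H2.Adj x y → h x = h y) →
        ∀ x y, (m x - m y) (q.1 x - q.1 y) = 0 ∧ h x = h y := by
  classical
  let a : Sym2 V → (V → UU d) := fun e => ev d e.out.1 e.out.2 (q.1 e.out.1 - q.1 e.out.2, 0)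
  let b : Sym2 V → (V → UU d) := fun e =>
    ev d e.out.1 e.out.2 (0, q.2 e.out.1 e.out.2 - q.2 e.out.2 e.out.1)
  have hout : ∀ e : Sym2 V, s(e.out.1, e.out.2) = e := fun e => Quot.out_eq e
  have hab : ∀ e, a e + b e = nu q (e.out.1, e.out.2) := by
    intro e
    simp only [a, b, nu, wv, ← map_add, Prod.mk_add_mk, add_zero, zero_add]
  let F : Finset (Sym2 V) := univ.filter (fun e => e ∈ G.edgeSet)
  have hF : ∀ e, e ∈ F ↔ G.Adj e.out.1 e.out.2 := by
    intro e
    rw [← SimpleGraph.mem_edgeSet, hout]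
    simp [F]
  obtain ⟨c, hc, hle⟩ := extract a b F ⊥
  rw [bot_sup_eq, bot_sup_eq] at hle
  have hSF : Submodule.span ℝ ((fun i => a i + b i) '' (F : Set (Sym2 V))) = S := by
    rw [hS]
    congr 1
    ext w
    constructor
    · rintro ⟨e, he, rfl⟩
      exact ⟨(e.out.1, e.out.2), (hF e).1 he, (hab e).symm⟩
    · rintro ⟨⟨x, y⟩, hxy, rfl⟩
      refine ⟨s(x, y), by simpa [F] using hxy, ?_⟩
      show a _ + b _ = _
      rw [hab]
      rcases Sym2.eq_iff.1 (hout s(x, y)) with h | h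
      · rw [h.1, h.2]
      · rw [h.1, h.2, nu_swap]
  rw [hSF] at hle
  have haS : ∀ e, a e ∈ S := fun e => (hL _ _).1
  have hbS : ∀ e, b e ∈ S := by
    intro e
    have := S.smul_mem (q.2 e.out.1 e.out.2 - q.2 e.out.2 e.out.1) (hL e.out.1 e.out.2).2
    rw [← map_smul] at this
    simpa [b] using this
  have hCS : Submodule.span ℝ (c '' (F : Set (Sym2 V))) ≤ S := by
    rw [Submodule.span_le]
    rintro _ ⟨e, _, rfl⟩
    rcases hc e with h | h
    · rw [h]; exact haS e
    · rw [h]; exact hbS e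
  have hEq := Submodule.eq_of_le_of_finrank_le hCS hle
  refine ⟨SimpleGraph.fromEdgeSet {e | e ∈ G.edgeSet ∧ c e = a e},
    SimpleGraph.fromEdgeSet {e | e ∈ G.edgeSet ∧ c e ≠ a e}, ?_, ?_, ?_, ?_⟩
  · intro x y h
    exact ((SimpleGraph.fromEdgeSet_adj _).1 h).1.1
  · intro x y h
    exact ((SimpleGraph.fromEdgeSet_adj _).1 h).1.1
  · intro x y h h'
    exact ((SimpleGraph.fromEdgeSet_adj _).1 h').1.2 ((SimpleGraph.fromEdgeSet_adj _).1 h).1.2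
  · intro m h hm hh' x y
    obtain ⟨φ, rfl, rfl⟩ := exists_phi m h
    refine (lnk_iff q S x y).1 (hL x y) φ ?_
    rw [← hEq]
    intro s hs
    have : Submodule.span ℝ (c '' (F : Set (Sym2 V))) ≤ LinearMap.ker φ := by
      rw [Submodule.span_le]
      rintro _ ⟨e, he, rfl⟩
      have hadj := (hF e).1 he
      have heG : e ∈ G.edgeSet := by simpa [F] using he
      show φ (c e) = 0
      by_cases hce : c e = a e
      · have := hm e.out.1 e.out.2 ((SimpleGraph.fromEdgeSet_adj _).2
          ⟨by rw [hout]; exact ⟨heG, hce⟩, hadj.ne⟩)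
        rw [hce]
        simp only [a, phi_ev, this]
        simp
      · have := hh' e.out.1 e.out.2 ((SimpleGraph.fromEdgeSet_adj _).2
          ⟨by rw [hout]; exact ⟨heG, hce⟩, hadj.ne⟩)
        rw [(hc e).resolve_left hce]
        simp only [b, phi_ev, this]
        simp
    exact this hs

lemma conn2 (H : SimpleGraph V) [Nonempty V]
    (hH : ∀ h : V → ℝ, (∀ x y, H.Adj x y → h x = h y) → ∀ x y, h x = h y) : H.Connected := by
  classical
  refine ⟨fun x y => ?_⟩
  have := hH (fun z => if H.Reachable x z then 1 else 0) ?_ x y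
  · by_contra hn
    simp [hn] at this
  · intro u v huv
    have : H.Reachable x u ↔ H.Reachable x v :=
      ⟨fun h => h.trans huv.reachable, fun h => h.trans huv.symm.reachable⟩
    simp [this]

lemma conn1 {q : Cfg V d} (hq : Gen q) (H : SimpleGraph V) (hcard : d + 1 ≤ Nat.card V)
    (hH : ∀ m : V → (Fin d → ℝ) →ₗ[ℝ] ℝ, (∀ x y, H.Adj x y → (m x - m y) (q.1 x - q.1 y) = 0) →
      ∀ x y, (m x - m y) (q.1 x - q.1 y) = 0) : KConnected H d := by
  classical
  refine ⟨hcard, fun X _ hX => ?_⟩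
  have hne : Nonempty (Xᶜ : Set V) := by
    by_contra hn
    rw [Set.nonempty_coe_sort, Set.not_nonempty_iff_eq_empty, Set.compl_empty_iff] at hn
    rw [hn, Set.ncard_univ] at hX
    omega
  refine ⟨fun x y => ?_⟩
  by_contra hn
  have hxy : x ≠ y := fun h => hn (h ▸ SimpleGraph.Reachable.refl x)
  let P : V → Prop := fun z => ∃ hz : z ∈ Xᶜ, (H.induce (Xᶜ : Set V)).Reachable x ⟨z, hz⟩
  have hPx : P x := ⟨x.2, SimpleGraph.Reachable.refl x⟩
  have hPy : ¬ P y := fun ⟨_, h⟩ => hn h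
  have hP : ∀ u v, H.Adj u v → P u → ¬ P v → v ∈ X := by
    rintro u v huv ⟨hu, hr⟩ hv
    by_contra hvX
    refine hv ⟨hvX, hr.trans (SimpleGraph.Adj.reachable ?_)⟩
    exact huv
  let N : Finset V := insert x.1 (insert y.1 X.toFinset)
  have hN : N.card ≤ d + 1 := by
    have h1 := card_insert_le x.1 (insert y.1 X.toFinset)
    have h2 := card_insert_le y.1 X.toFinset
    rw [Set.ncard_eq_toFinset_card'] at hX
    simp only [N]
    omega
  have hli := hq.aff N hN
  have hfun : ∀ g : V → ℝ, ∃ α : UU d →ₗ[ℝ] ℝ, ∀ z ∈ N, α (q.1 z, 1) = g z := by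
    intro g
    obtain ⟨L, hLc⟩ := LinearMap.exists_leftInverse_of_injective
      (Fintype.linearCombination ℝ (fun z : N => ((q.1 z, 1) : UU d)))
      (LinearMap.ker_eq_bot.2 (LinearIndependent.fintypeLinearCombination_injective hli))
    refine ⟨(Fintype.linearCombination ℝ (fun z : N => g z)) ∘ₗ L, fun z hz => ?_⟩
    have h1 : L (q.1 z, 1) = Pi.single (⟨z, hz⟩ : N) 1 := by
      have := LinearMap.congr_fun hLc (Pi.single (⟨z, hz⟩ : N) 1)
      simpa [Fintype.linearCombination_apply_single] using this
    simp [h1, Fintype.linearCombination_apply_single]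
  obtain ⟨α, hα⟩ := hfun (fun z => if z = x then 1 else 0)
  obtain ⟨β, hβ⟩ := hfun (fun z => if z = y then 1 else 0)
  have hxN : x.1 ∈ N := by simp [N]
  have hyN : y.1 ∈ N := by simp [N]
  have hxy' : x.1 ≠ y.1 := fun h => hxy (Subtype.ext h)
  let α0 : (Fin d → ℝ) →ₗ[ℝ] ℝ := α ∘ₗ LinearMap.inl ℝ _ _
  let β0 : (Fin d → ℝ) →ₗ[ℝ] ℝ := β ∘ₗ LinearMap.inl ℝ _ _
  have hα0 : ∀ u v, α0 (q.1 u - q.1 v) = α (q.1 u, 1) - α (q.1 v, 1) := by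
    intro u v
    rw [← map_sub]; simp [α0]
  have hβ0 : ∀ u v, β0 (q.1 u - q.1 v) = β (q.1 u, 1) - β (q.1 v, 1) := by
    intro u v
    rw [← map_sub]; simp [β0]
  let m : V → (Fin d → ℝ) →ₗ[ℝ] ℝ := fun z =>
    if P z then β (q.1 z, 1) • α0 - α (q.1 z, 1) • β0 else 0
  have hXz : ∀ v ∈ X, α (q.1 v, 1) = 0 ∧ β (q.1 v, 1) = 0 := by
    intro v hv
    have hvN : v ∈ N := by simp [N, hv]
    rw [hα v hvN, hβ v hvN]
    have hvx : v ≠ x.1 := fun h => x.2 (by rw [← h]; exact hv)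
    have hvy : v ≠ y.1 := fun h => y.2 (by rw [← h]; exact hv)
    exact ⟨if_neg hvx, if_neg hvy⟩
  have := hH m ?_ x y
  · simp only [m, if_pos hPx, if_neg hPy, sub_zero, LinearMap.sub_apply, LinearMap.smul_apply,
      smul_eq_mul, hα0, hβ0, hα x hxN, hα y hyN, hβ x hxN, hβ y hyN] at this
    simp [hxy', hxy'.symm] at this
  · intro u v huv
    by_cases hu : P u <;> by_cases hv : P v
    · simp only [m, if_pos hu, if_pos hv, LinearMap.sub_apply, LinearMap.smul_apply,
        smul_eq_mul, hα0, hβ0]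
      ring
    · have := hXz v (hP u v huv hu hv)
      simp only [m, if_pos hu, if_neg hv, LinearMap.sub_apply, LinearMap.smul_apply,
        smul_eq_mul, hα0, hβ0, this.1, this.2, LinearMap.zero_apply]
      ring
    · have := hXz u (hP v u huv.symm hv hu)
      simp only [m, if_pos hv, if_neg hu, LinearMap.sub_apply, LinearMap.smul_apply,
        smul_eq_mul, hα0, hβ0, this.1, this.2, LinearMap.zero_apply]
      ring
    · simp [m, hu, hv]

end fin

end extraction

lemma KConnected.mono' {W : Type*} {G H : SimpleGraph W} {k : ℕ} (h : G ≤ H)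
    (hG : KConnected G k) : KConnected H k :=
  ⟨hG.1, fun S hS hc => (hG.2 S hS hc).mono (SimpleGraph.comap_monotone _ h)⟩

/-- Every `(20·d(d+1))`-connected finite simple graph `G` contains a spanning tree `T`
such that `G - E(T)` is `d`-connected. -/
theorem removable_spanning_tree_weaker_bound {V : Type*} [Fintype V] (d : ℕ) (hd : 0 < d)
    (G : SimpleGraph V) (hG : KConnected G (20 * (d * (d + 1)))) :
    ∃ T : SimpleGraph V, T ≤ G ∧ T.IsTree ∧ KConnected (G \ T) d := by
  classical
  obtain ⟨q, hq⟩ := exists_gen (V := V) d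
  have hcard : d + 1 ≤ Nat.card V := by
    have := hG.1
    nlinarith
  have hne : Nonempty V := (Nat.card_pos_iff.1 (by omega)).1
  obtain ⟨H1, H2, h1, h2, hdis, hmot⟩ := colour (q := q) (G := G) rfl
    (fun x y => all_linked hd hq G hG _ rfl x y)
  have hc2 : H2.Connected := conn2 H2 fun h hh' x y =>
    (hmot 0 h (by simp) hh' x y).2
  have hc1 : KConnected H1 d := conn1 hq H1 hcard fun m hm x y =>
    (hmot m 0 hm (by simp) x y).1
  obtain ⟨T, hT, hTt⟩ := hc2.exists_isTree_le
  refine ⟨T, hT.trans h2, hTt, hc1.mono' ?_⟩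
  intro x y hxy
  rw [SimpleGraph.sdiff_adj]
  exact ⟨h1 hxy, fun h => hdis x y hxy (hT h)⟩
end

section
/- For all positive integers d and t, if n ≥ 2td, then the complete graph K_n on n vertices contains t pairwise edge-disjoint spanning subgraphs, each of which is d-connected. -/
/-- index of the subgraph owning the edge `uv` -/
def ownerIdx (d t u v : ℕ) : ℕ :=
  if t ≤ max (u / d / 2) (v / d / 2) ∨ (u / d) % 2 = (v / d) % 2 then
    min (u / d / 2) (v / d / 2) else max (u / d / 2) (v / d / 2)

theorem ownerIdx_comm (d t u v : ℕ) : ownerIdx d t u v = ownerIdx d t v u := by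
  unfold ownerIdx
  rw [max_comm, min_comm]
  simp only [eq_comm (a := (u / d) % 2)]

/-- the i-th packed graph -/
def packGraph (d t n i : ℕ) : SimpleGraph (Fin n) where
  Adj u v := u ≠ v ∧ ownerIdx d t u v = i
  symm := ⟨fun u v h => ⟨h.1.symm, by rw [ownerIdx_comm]; exact h.2⟩⟩
  loopless := ⟨fun u h => h.1 rfl⟩

theorem exists_avoid (d n q : ℕ) (hd : 0 < d) (hq : (q + 1) * d ≤ n) (S : Set (Fin n))
    (hS : S.ncard < d) : ∃ u : Fin n, u ∉ S ∧ (u : ℕ) / d = q := by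
  by_contra hcon
  push Not at hcon
  have hlt : ∀ r : Fin d, q * d + r < n := fun r => by
    have := r.2
    rw [add_mul] at hq
    omega
  let f : Fin d → Fin n := fun r => ⟨q * d + r, hlt r⟩
  have hf : Function.Injective f := by
    intro a b h
    have h1 := congrArg Fin.val h
    simp only [f] at h1
    exact Fin.ext (by omega)
  have hsub : Set.range f ⊆ S := by
    rintro _ ⟨r, rfl⟩
    by_contra hr
    refine hcon _ hr ?_
    simp only [f]
    rw [mul_comm, Nat.mul_add_div hd, Nat.div_eq_of_lt r.2, add_zero]
  have h1 := Set.ncard_le_ncard hsub S.toFinite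
  rw [Set.ncard_range_of_injective hf] at h1
  simp at h1
  omega

theorem packGraph_conn (d t n i : ℕ) (hd : 0 < d) (hi : i < t) (hn : 2 * t * d ≤ n) :
    KConnected (packGraph d t n i) d := by
  have hb : ∀ e, e < 2 → (2 * i + e + 1) * d ≤ n := fun e he =>
    le_trans (Nat.mul_le_mul_right d (by omega)) hn
  constructor
  · have h2 : 2 * d ≤ 2 * t * d := Nat.mul_le_mul_right d (by omega)
    simp only [Nat.card_eq_fintype_card, Fintype.card_fin]
    omega
  · intro S _ hS
    obtain ⟨w, hw, hwd⟩ := exists_avoid d n _ hd (hb 0 (by omega)) S hS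
    have key : ∀ v : (Sᶜ : Set (Fin n)), (v.1 : ℕ) / d / 2 = i →
        ((packGraph d t n i).induce (Sᶜ : Set (Fin n))).Reachable v ⟨w, hw⟩ := by
      intro v hv
      by_cases hvw : v = ⟨w, hw⟩
      · rw [hvw]
      · refine SimpleGraph.Adj.reachable ?_
        refine ⟨fun h => hvw (Subtype.ext h), ?_⟩
        change ownerIdx d t (v.1 : ℕ) (w : ℕ) = i
        simp only [ownerIdx]
        split_ifs <;> omega
    have key2 : ∀ v : (Sᶜ : Set (Fin n)),
        ((packGraph d t n i).induce (Sᶜ : Set (Fin n))).Reachable v ⟨w, hw⟩ := by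
      intro v
      by_cases hv : (v.1 : ℕ) / d / 2 = i
      · exact key v hv
      have : ∃ e, e < 2 ∧ ∀ u : ℕ, u / d = 2 * i + e → ownerIdx d t v.1 u = i := by
        rcases Nat.lt_or_gt_of_ne hv with h | h
        · refine ⟨1 - (v.1 : ℕ) / d % 2, by omega, fun u hu => ?_⟩
          simp only [ownerIdx]
          split_ifs <;> omega
        · refine ⟨(v.1 : ℕ) / d % 2, by omega, fun u hu => ?_⟩
          simp only [ownerIdx]
          split_ifs <;> omega
      obtain ⟨e, he, hu⟩ := this
      obtain ⟨u, huS, hud⟩ := exists_avoid d n _ hd (hb e he) S hS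
      refine SimpleGraph.Reachable.trans (SimpleGraph.Adj.reachable (v := ⟨u, huS⟩) ?_)
        (key ⟨u, huS⟩ (by simp only; omega))
      refine ⟨fun h => ?_, hu u hud⟩
      apply hv
      have h' : (v.1 : ℕ) = u := congrArg Fin.val h
      rw [h']
      omega
    haveI : Nonempty (Sᶜ : Set (Fin n)) := ⟨⟨w, hw⟩⟩
    exact ⟨fun a b => (key2 a).trans (key2 b).symm⟩

/-- For positive integers `d` and `t`, if `n ≥ 2td` then the complete graph `K_n` contains
`t` pairwise edge-disjoint spanning subgraphs, each of which is `d`-connected. -/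
theorem complete_graph_packing (d t n : ℕ) (hd : 0 < d) (ht : 0 < t)
    (hn : 2 * t * d ≤ n) :
    ∃ H : Fin t → SimpleGraph (Fin n),
      (∀ i, H i ≤ (⊤ : SimpleGraph (Fin n))) ∧
      (∀ i j, i ≠ j → Disjoint (H i).edgeSet (H j).edgeSet) ∧
      (∀ i, KConnected (H i) d) := by
  refine ⟨fun i => packGraph d t n i, fun i => le_top, fun i j hij => ?_,
    fun i => packGraph_conn d t n i hd i.2 hn⟩
  rw [Set.disjoint_left]
  intro e
  induction e using Sym2.ind with
  | _ u v =>
    intro h1 h2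
    rw [SimpleGraph.mem_edgeSet] at h1 h2
    exact hij (Fin.ext (h1.2.symm.trans h2.2))
end

section
/- Let d be a positive integer and let G = (V, E) be a finite simple graph with |V| ≥ C(d+1, 2), with |E| = d|V| − C(d+1, 2), and such that i_G(X) ≤ d|X| − C(d+1, 2) for every X ⊆ V with |X| ≥ d. Then for every set R ⊆ V with |R| = C(d+1, 2), the graph G admits an orientation in which every vertex of V ∖ R has in-degree exactly d and every vertex of R has in-degree exactly d − 1. -/
/-- `inducedEdgeCount G X` is `i_G(X)`, the number of edges of `G` with both endpoints
in `X`. -/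
noncomputable def inducedEdgeCount {W : Type*} (G : SimpleGraph W) (X : Set W) : ℕ :=
  {e ∈ G.edgeSet | ∀ x ∈ e, x ∈ X}.ncard

/-- `D` is an orientation of the simple graph `G`: every arc of `D` comes from an edge of `G`,
and for each edge `{u, v}` of `G` exactly one of the arcs `(u, v)`, `(v, u)` belongs to `D`. -/
def IsOrientation {W : Type*} (G : SimpleGraph W) (D : W → W → Prop) : Prop :=
  (∀ u v, D u v → G.Adj u v) ∧ ∀ u v, G.Adj u v → (D u v ↔ ¬ D v u)

/-- Let `G` be a finite simple graph with `|V| ≥ C(d+1,2)`, with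
`|E| = d|V| − C(d+1,2)`, and with `i_G(X) ≤ d|X| − C(d+1,2)` for every `X ⊆ V` with
`|X| ≥ d`. Then for every `R ⊆ V` with `|R| = C(d+1,2)`, `G` has an orientation in which
every vertex outside `R` has in-degree exactly `d` and every vertex of `R` has in-degree
exactly `d − 1`. -/
theorem dR_orientation_exists {V : Type*} [Fintype V] (d : ℕ) (hd : 0 < d)
    (G : SimpleGraph V)
    (hV : (d + 1).choose 2 ≤ Fintype.card V)
    (hE : G.edgeSet.ncard + (d + 1).choose 2 = d * Fintype.card V)
    (hsparse : ∀ X : Set V, d ≤ X.ncard →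
      inducedEdgeCount G X + (d + 1).choose 2 ≤ d * X.ncard)
    (R : Set V) (hR : R.ncard = (d + 1).choose 2) :
    ∃ D : V → V → Prop, IsOrientation G D ∧
      (∀ v : V, v ∉ R → {u | D u v}.ncard = d) ∧
      (∀ v : V, v ∈ R → {u | D u v}.ncard = d - 1) := by
  classical
  have hsmall : ∀ X : Finset V, X.card < d →
      (X.offDiag.image Sym2.mk.uncurry).card ≤ (d - 1) * X.card := by
    intro X hX
    have h1 : (X.offDiag.image Sym2.mk.uncurry).card = X.card.choose 2 := Sym2.card_image_offDiag X
    rw [h1, Nat.choose_two_right]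
    calc X.card * (X.card - 1) / 2 ≤ X.card * (X.card - 1) := Nat.div_le_self _ _
      _ ≤ X.card * (d - 1) := Nat.mul_le_mul_left _ (by omega)
      _ = _ := Nat.mul_comm _ _
  let f : V → ℕ := fun v => if v ∈ R then d - 1 else d
  have hf : ∀ X : Finset V, ∑ v ∈ X, f v + (X.filter (· ∈ R)).card = d * X.card := by
    intro X
    rw [Finset.card_filter, ← Finset.sum_add_distrib]
    rw [Finset.sum_congr rfl (g := fun _ => d)]
    · simp [mul_comm]
    · intro v _
      simp only [f]
      split_ifs <;> omega
  have hfR : ∀ X : Finset V, (X.filter (· ∈ R)).card ≤ (d + 1).choose 2 := by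
    intro X
    rw [← hR, ← Set.ncard_coe_finset]
    apply Set.ncard_le_ncard _ (Set.toFinite _)
    intro x hx
    simp at hx
    exact hx.2
  have hf' : ∀ X : Finset V, (d - 1) * X.card ≤ ∑ v ∈ X, f v := by
    intro X
    rw [mul_comm, ← smul_eq_mul]
    apply Finset.card_nsmul_le_sum
    intro v _
    simp only [f]
    split_ifs <;> omega
  have hall : ∃ g : G.edgeSet → (Σ v : V, Fin (f v)), Function.Injective g ∧
      ∀ e, g e ∈ (Finset.univ.filter (fun p : (Σ v : V, Fin (f v)) => p.1 ∈ e.1)) := by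
    rw [← Finset.all_card_le_biUnion_card_iff_exists_injective]
    intro A
    let X : Finset V := Finset.univ.filter (fun v => ∃ e ∈ A, v ∈ e.1)
    have h1 : (A.biUnion fun e => Finset.univ.filter
        (fun p : (Σ v : V, Fin (f v)) => p.1 ∈ e.1)) = X.sigma (fun v => Finset.univ) := by
      ext p
      simp [X]
    have h2 : (X.sigma (fun v => (Finset.univ : Finset (Fin (f v))))).card = ∑ v ∈ X, f v := by
      simp [Finset.card_sigma]
    rw [h1, h2]
    have h3 : A.card = (A.image Subtype.val).card :=
      (Finset.card_image_of_injective _ Subtype.val_injective).symm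
    by_cases hX : X.card < d
    · refine le_trans ?_ ((hsmall X hX).trans (hf' X))
      rw [h3]
      apply Finset.card_le_card
      intro e he
      obtain ⟨e', he', rfl⟩ := Finset.mem_image.1 he
      obtain ⟨e, hee⟩ := e'
      induction e using Sym2.ind with
      | _ a b =>
        refine Finset.mem_image.2 ⟨(a, b), ?_, rfl⟩
        have hab : G.Adj a b := hee
        simp only [Finset.mem_offDiag]
        refine ⟨?_, ?_, hab.ne⟩
        · exact Finset.mem_filter.2 ⟨Finset.mem_univ _, _, he', Sym2.mem_mk_left a b⟩
        · exact Finset.mem_filter.2 ⟨Finset.mem_univ _, _, he', Sym2.mem_mk_right a b⟩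
    · have h4 := hsparse (X : Set V) (by rw [Set.ncard_coe_finset]; omega)
      rw [Set.ncard_coe_finset] at h4
      have h5 : A.card ≤ inducedEdgeCount G (X : Set V) := by
        rw [h3, ← Set.ncard_coe_finset]
        apply Set.ncard_le_ncard _ (Set.toFinite _)
        intro e he
        obtain ⟨e', he', rfl⟩ := Finset.mem_image.1 (Finset.mem_coe.1 he)
        refine ⟨e'.2, fun x hx => ?_⟩
        exact Finset.mem_coe.2 (Finset.mem_filter.2 ⟨Finset.mem_univ _, _, he', hx⟩)
      have h6 := hf X
      have h7 := hfR X
      omega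
  obtain ⟨g, ginj, hg⟩ := hall
  have hg : ∀ e, (g e).1 ∈ e.1 := fun e => by simpa using hg e
  have gbij : Function.Bijective g := by
    rw [Fintype.bijective_iff_injective_and_card]
    refine ⟨ginj, ?_⟩
    have h1 := hf Finset.univ
    have h2 : (Finset.univ.filter (· ∈ R)).card = (d + 1).choose 2 := by
      rw [← hR, ← Set.ncard_coe_finset]
      simp
    have h3 : Fintype.card G.edgeSet = G.edgeSet.ncard := by
      rw [← Nat.card_eq_fintype_card]; rfl
    rw [h3, Fintype.card_sigma]
    simp only [Fintype.card_fin]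
    rw [Finset.card_univ] at h1
    omega
  have key : ∀ v : V, {u | ∃ h : G.Adj u v, (g ⟨s(u, v), h⟩).1 = v}.ncard = f v := by
    intro v
    have h1 : {p : (Σ v : V, Fin (f v)) | p.1 = v}.ncard = f v := by
      have : {p : (Σ v : V, Fin (f v)) | p.1 = v} = Set.range (Sigma.mk v) := by
        ext ⟨a, b⟩
        constructor
        · rintro rfl
          exact ⟨b, rfl⟩
        · rintro ⟨c, hc⟩
          rw [← hc]
          rfl
      rw [this, ← Set.image_univ, Set.ncard_image_of_injective _ sigma_mk_injective]
      simp
    rw [← h1]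
    refine Set.ncard_congr (fun u hu => g ⟨s(u, v), hu.1⟩) ?_ ?_ ?_
    · rintro u ⟨h, hu⟩
      exact hu
    · intro a b ha hb hab
      have := congrArg Subtype.val (ginj hab)
      have h2 : a = b ∨ a = v ∧ v = b := by simpa using this
      exact h2.elim id fun h => h.1.trans h.2
    · intro p hp
      obtain ⟨⟨e, he⟩, rfl⟩ := gbij.2 p
      have hp : (g ⟨e, he⟩).1 = v := hp
      have hm : v ∈ e := by
        have := hg ⟨e, he⟩
        rwa [hp] at this
      obtain ⟨u, rfl⟩ := Sym2.mem_iff_exists.1 hm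
      have hvu : G.Adj v u := he
      have heq : (⟨s(v, u), he⟩ : G.edgeSet) = ⟨s(u, v), hvu.symm⟩ :=
        Subtype.ext Sym2.eq_swap
      exact ⟨u, ⟨hvu.symm, by rw [← heq]; exact hp⟩, by rw [← heq]⟩
  refine ⟨fun u v => ∃ h : G.Adj u v, (g ⟨s(u, v), h⟩).1 = v, ⟨fun u v h => h.1, ?_⟩, ?_, ?_⟩
  · intro u v huv
    have heq : (⟨s(v, u), huv.symm⟩ : G.edgeSet) = ⟨s(u, v), huv⟩ :=
      Subtype.ext Sym2.eq_swap
    have hm := Sym2.mem_iff.1 (hg ⟨s(u, v), huv⟩)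
    constructor
    · rintro ⟨_, h⟩ ⟨_, h'⟩
      rw [heq, h] at h'
      exact huv.ne h'.symm
    · intro h
      refine ⟨huv, hm.resolve_left fun h' => h ⟨huv.symm, ?_⟩⟩
      rw [heq]
      exact h'
  · intro v hv
    rw [key v]
    simp [f, hv]
  · intro v hv
    rw [key v]
    simp [f, hv]
end

section
/- Let d and k be integers with k ≥ 2 and d ≥ 4k − 4. Let G = (V, E) be a finite simple graph with |V| ≥ C(d+1, 2) such that i_G(X) ≤ d|X| − C(d+1, 2) for every X ⊆ V with |X| ≥ d. Let R ⊆ V with |R| = C(d+1, 2), and let D be an orientation of G in which every vertex of V ∖ R has in-degree exactly d and every vertex of R has in-degree exactly d − 1. Then every nonempty set X ⊆ V with 2·|X ∩ R| ≤ C(d+1, 2) has at least k in-neighbors in D. -/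
/-- Let `k ≥ 2` and `d ≥ 4k − 4`. Let `G` be a finite simple graph with `|V| ≥ C(d+1,2)`
satisfying `i_G(X) ≤ d|X| − C(d+1,2)` for every `X ⊆ V` with `|X| ≥ d`, let `R ⊆ V` with
`|R| = C(d+1,2)`, and let `D` be an orientation of `G` in which every vertex outside `R`
has in-degree exactly `d` and every vertex of `R` has in-degree exactly `d − 1`. Then every
nonempty `X ⊆ V` with `2|X ∩ R| ≤ C(d+1,2)` has at least `k` in-neighbors in `D`. -/
theorem inneighbors_of_dR_orientation {V : Type*} [Fintype V] (d k : ℕ)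
    (hk : 2 ≤ k) (hdk : 4 * k ≤ d + 4)
    (G : SimpleGraph V)
    (hV : (d + 1).choose 2 ≤ Fintype.card V)
    (hsparse : ∀ X : Set V, d ≤ X.ncard →
      inducedEdgeCount G X + (d + 1).choose 2 ≤ d * X.ncard)
    (R : Set V) (hR : R.ncard = (d + 1).choose 2)
    (D : V → V → Prop) (hor : IsOrientation G D)
    (hdeg : ∀ v : V, v ∉ R → {u | D u v}.ncard = d)
    (hdegR : ∀ v : V, v ∈ R → {u | D u v}.ncard = d - 1) :
    ∀ X : Set V, X.Nonempty → 2 * (X ∩ R).ncard ≤ (d + 1).choose 2 →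
      k ≤ {w | w ∉ X ∧ ∃ x ∈ X, D w x}.ncard := by
  classical
  intro X hX hXR
  by_contra hlt
  push Not at hlt
  set N : Set V := {w | w ∉ X ∧ ∃ x ∈ X, D w x} with hN
  have hdisj : Disjoint X N := by
    rw [Set.disjoint_left]
    intro a ha hb
    exact hb.1 ha
  have hYc : (X ∪ N).ncard = X.ncard + N.ncard := Set.ncard_union_eq hdisj
  have hin : ∀ u v, v ∈ X → D u v → u ∈ X ∪ N := by
    intro u v hv huv
    by_cases hu : u ∈ X
    · exact Or.inl hu
    · exact Or.inr ⟨hu, v, hv, huv⟩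
  have hirr : ∀ v, ¬ D v v := fun v h => G.loopless.irrefl v (hor.1 v v h)
  by_cases hY : d ≤ (X ∪ N).ncard
  · have h1 := hsparse _ hY
    have hsum : ∑ v ∈ X.toFinset, ({u | D u v}.ncard + if v ∈ R then 1 else 0)
        = ∑ v ∈ X.toFinset, d := by
      apply Finset.sum_congr rfl
      intro v _
      by_cases hv : v ∈ R
      · rw [hdegR v hv, if_pos hv]; omega
      · rw [hdeg v hv, if_neg hv]; omega
    have hXc : X.toFinset.card = X.ncard := (Set.ncard_eq_toFinset_card' X).symm
    have hXRc : (X.toFinset.filter (fun v => v ∈ R)).card = (X ∩ R).ncard := by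
      rw [Set.ncard_eq_toFinset_card']
      congr 1
      ext v
      simp
    rw [Finset.sum_add_distrib, Finset.sum_const, smul_eq_mul, ← Finset.card_filter, hXRc,
      hXc] at hsum
    have hcount : ∑ v ∈ X.toFinset, {u | D u v}.ncard ≤ inducedEdgeCount G (X ∪ N) := by
      have e : ∑ v ∈ X.toFinset, {u | D u v}.ncard
          = (X.toFinset.sigma (fun v => {u | D u v}.toFinset)).card := by
        rw [Finset.card_sigma]
        exact Finset.sum_congr rfl (fun v _ => Set.ncard_eq_toFinset_card' _)
      rw [e, inducedEdgeCount, Set.ncard_eq_toFinset_card']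
      apply Finset.card_le_card_of_injOn (fun p => s(p.2, p.1))
      · rintro ⟨v, u⟩ hp
        simp only [Finset.coe_sigma, Set.mem_sigma_iff, Finset.mem_coe, Set.mem_toFinset,
          Set.mem_ofPred_eq] at hp
        simp only [Finset.mem_coe, Set.mem_toFinset, Set.mem_ofPred_eq,
          SimpleGraph.mem_edgeSet]
        refine ⟨hor.1 _ _ hp.2, ?_⟩
        intro x hx
        rcases Sym2.mem_iff.1 hx with rfl | rfl
        · exact hin _ _ hp.1 hp.2
        · exact Or.inl hp.1
      · rintro ⟨v, u⟩ hp ⟨v', u'⟩ hq h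
        simp only [Finset.coe_sigma, Set.mem_sigma_iff, Finset.mem_coe, Set.mem_toFinset,
          Set.mem_ofPred_eq] at hp hq
        rcases Sym2.eq_iff.1 h with ⟨h1, h2⟩ | ⟨h1, h2⟩
        · simp only at h1 h2
          subst h1 h2
          rfl
        · simp only at h1 h2
          subst h1 h2
          exact absurd hq.2 ((hor.2 _ _ (hor.1 _ _ hp.2)).1 hp.2)
    have hC : (d + 1).choose 2 * 2 = (d + 1) * d := by
      rw [Nat.choose_two_right, Nat.add_sub_cancel]
      exact Nat.div_mul_cancel (by simpa [mul_comm] using (Nat.even_mul_succ_self d).two_dvd)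
    have h4 : 4 * N.ncard ≤ d := by omega
    rw [hYc] at h1
    nlinarith
  · obtain ⟨x, hx⟩ := hX
    have hge : d - 1 ≤ {u | D u x}.ncard := by
      by_cases hv : x ∈ R
      · rw [hdegR x hv]
      · rw [hdeg x hv]; omega
    have hle : {u | D u x}.ncard < (X ∪ N).ncard := by
      refine Set.ncard_lt_ncard ?_ (Set.toFinite _)
      refine ⟨fun u hu => hin u x hx hu, fun h => hirr x (h (Or.inl hx))⟩
    omega
end
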